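/- For any link L ⊂ S³, any unknot γ contained in the interior of a smooth page of a minimal simple boundary-regular Morse map S³∖L → S¹, and every n ∈ ℤ, MN(L[γ,n]) ≤ MN(L) + 2. -/

import Mathlib

/-!  Morse maps for knots and links in `S³` and the Morse–Novikov number:
common framework.

We work in the smooth category.  `S³` is the unit sphere of `ℝ⁴ ≅ ℂ²`.
A link is presented by disjoint smoothly embedded oriented parametrized
circles.  A *simple boundary-regular map* for a link `L` is a smooth map
`f : S³ ∖ L → S¹` which near `L` is the
standard fibration `(x, z) ↦ z/|z|` in a positively oriented tubular
neighborhood trivialization of `L` (this makes the homotopy class of `f`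
the canonical class `ξ_L` dual to a Seifert surface, i.e. `f` is simple).
Such a map is *Morse* if all its critical points are nondegenerate; the
Morse–Novikov number `MN L` is the least number of critical points of a
simple boundary-regular Morse map for `L`. -/

noncomputable section
open scoped Manifold Real
open Metric Set

namespace MorseNovikov

/-- Ambient Euclidean 4-space, identified with `ℂ²` via the complex
coordinates `Z`, `W`. -/
abbrev E := EuclideanSpace ℝ (Fin 4)
abbrev E3 := EuclideanSpace ℝ (Fin 3)
abbrev E2 := EuclideanSpace ℝ (Fin 2)

instance : Fact (Module.finrank ℝ E = 3 + 1) := ⟨by simp⟩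

/-- The 3-sphere `S³`, the unit sphere of `ℝ⁴ ≅ ℂ²`. -/
abbrev Sph : Type := sphere (0 : E) 1

/-- First complex coordinate on `ℝ⁴ = ℂ²`. -/
def Z (p : E) : ℂ := (p 0 : ℂ) + (p 1 : ℂ) * Complex.I
/-- Second complex coordinate on `ℝ⁴ = ℂ²`. -/
def W (p : E) : ℂ := (p 2 : ℂ) + (p 3 : ℂ) * Complex.I

lemma continuous_Z : Continuous Z := by unfold Z; fun_prop
lemma continuous_W : Continuous W := by unfold W; fun_prop

/-- The point of `ℝ⁴ = ℂ²` with complex coordinates `(z, w)`. -/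
def mk4 (z w : ℂ) : E := (EuclideanSpace.equiv (Fin 4) ℝ).symm ![z.re, z.im, w.re, w.im]

/-- `z/|z| ∈ S¹` (with junk value `1` at `z = 0`). -/
def toCircle (z : ℂ) : Circle := Circle.exp (Complex.arg z)

/-- The set underlying the standard (horizontal) unknot `O = {w = 0} ⊂ S³`. -/
def Ocar : Set Sph := {p : Sph | W (p : E) = 0}

/-- The set underlying the standard split 2-component unlink
(the link of indeterminacy at infinity of `(2z-1)/z`). -/
def Ucar : Set Sph := {p : Sph | Z (p : E) = 0 ∨ Z (p : E) = 1/2}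

/-- A link: a nonempty closed oriented 1-dimensional smooth submanifold of
`S³`, presented by disjoint smoothly embedded circles; each component is a
`2π`-periodic injective smooth immersion of `ℝ` (recording its orientation). -/
structure Link where
  n : ℕ
  npos : 0 < n
  emb : Fin n → ℝ → Sph
  smooth : ∀ i, ContMDiff 𝓘(ℝ, ℝ) (𝓡 3) (⊤ : ℕ∞) (emb i)
  periodic : ∀ i t, emb i (t + 2*π) = emb i t
  immersed : ∀ i t, mfderiv 𝓘(ℝ, ℝ) (𝓡 3) (emb i) t ≠ 0
  inj : ∀ i j s t, s ∈ Ico 0 (2*π) → t ∈ Ico 0 (2*π) →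
    emb i s = emb j t → i = j ∧ s = t

/-- The underlying subset of `S³`. -/
def Link.carrier (L : Link) : Set Sph := ⋃ i, L.emb i '' (Icc 0 (2*π))

lemma Link.isClosed_carrier (L : Link) : IsClosed L.carrier := by
  refine isClosed_iUnion_of_finite fun i => ?_
  exact (isCompact_Icc.image (L.smooth i).continuous).isClosed

/-- The complement `S³ ∖ L`, an open submanifold of `S³`. -/
def Link.compl (L : Link) : TopologicalSpace.Opens Sph :=
  ⟨{x | x ∉ L.carrier}, L.isClosed_carrier.isOpen_compl⟩

/-- A knot is a one-component link. -/
def Link.IsKnot (L : Link) : Prop := L.n = 1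

section Generic
variable {M : Type*} [TopologicalSpace M] [ChartedSpace E3 M]

/-- `x` is a critical point of the circle-valued function `f`:
the differential of `f` at `x` fails to be surjective. -/
def IsCrit (f : M → Circle) (x : M) : Prop :=
  ¬ Function.Surjective (mfderiv (𝓡 3) (𝓡 1) f x)

/-- The set of critical points of `f`. -/
def critSet (f : M → Circle) : Set M := {x | IsCrit f x}

/-- A local real lift of `f` near `x`, read in the preferred chart at `x`. -/
def liftChart (f : M → Circle) (x : M) (u : E3) : ℝ :=
  Complex.arg ((f ((extChartAt (𝓡 3) x).symm u) : ℂ) / (f x : ℂ))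

/-- The Hessian bilinear form of `f` at `x` (meaningful at critical points,
where it is independent of the choice of chart and lift). -/
def hessAt (f : M → Circle) (x : M) (v w : E3) : ℝ :=
  fderiv ℝ (fun u => fderiv ℝ (liftChart f x) u v) (extChartAt (𝓡 3) x x) w

/-- Nondegeneracy of a critical point. -/
def Nondeg (f : M → Circle) (x : M) : Prop :=
  ∀ v : E3, v ≠ 0 → ∃ w : E3, hessAt f x v w ≠ 0

/-- `f` is a Morse function: it has no degenerate critical points. -/
def MorseFun (f : M → Circle) : Prop := ∀ x, IsCrit f x → Nondeg f x

/-- `x` is a nondegenerate critical point of `f` of Morse index `i`. -/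
def HasIndex (f : M → Circle) (x : M) (i : ℕ) : Prop :=
  IsCrit f x ∧ i ≤ 3 ∧
  ∃ V W : Submodule ℝ E3, Module.finrank ℝ V = i ∧ Module.finrank ℝ W = 3 - i ∧
    (∀ v ∈ V, v ≠ 0 → hessAt f x v v < 0) ∧ (∀ w ∈ W, w ≠ 0 → 0 < hessAt f x w w)

end Generic

/-- The determinant of four ambient vectors; expresses the standard
orientation of `S³ ⊂ ℝ⁴`. -/
def det4 (a b c d : E) : ℝ :=
  Matrix.det (Matrix.of ![(fun i => a i), (fun i => b i), (fun i => c i), (fun i => d i)])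

/-- The ambient (`ℝ⁴`-valued) differential of a map `g : ℝ × ℂ → S³`. -/
def tangAmb (g : ℝ × ℂ → Sph) (q : ℝ × ℂ) (v : ℝ × ℂ) : E :=
  mfderiv (𝓡 3) 𝓘(ℝ, E) (fun p : Sph => (p : E)) (g q)
    (mfderiv 𝓘(ℝ, ℝ × ℂ) (𝓡 3) g q v)

/-- A **simple boundary-regular smooth map** for the link `L`: a smooth map
`f : S³ ∖ L → S¹` together with an adapted trivialization `τ : L × D² → N(L)`
of a tubular neighborhood of `L`, with `τ(x, 0) = x`, on which `f` is the
standard fibration `(x, z) ↦ z/|z|`.  The trivialization is positively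
oriented with respect to the orientations of `L` and `S³`; consequently the
homotopy class of `f` is the canonical class `ξ_L ∈ H¹(S³ ∖ L; ℤ)` dual to a
Seifert surface, i.e. `f` is simple. -/
structure BRMap (L : Link) where
  f : L.compl → Circle
  smooth : ContMDiff (𝓡 3) (𝓡 1) (⊤ : ℕ∞) f
  tub : Fin L.n → ℝ × ℂ → Sph
  tub_smooth : ∀ i, ContMDiffOn 𝓘(ℝ, ℝ × ℂ) (𝓡 3) (⊤ : ℕ∞) (tub i) (univ ×ˢ ball (0:ℂ) 1)
  tub_per : ∀ i t z, tub i (t + 2*π, z) = tub i (t, z)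
  tub_core : ∀ i t, tub i (t, 0) = L.emb i t
  tub_inj : ∀ i j t s z w, t ∈ Ico 0 (2*π) → s ∈ Ico 0 (2*π) →
    z ∈ ball (0:ℂ) 1 → w ∈ ball (0:ℂ) 1 → tub i (t, z) = tub j (s, w) →
    i = j ∧ t = s ∧ z = w
  tub_nbhd : ∀ x ∈ L.carrier, (⋃ i, tub i '' (univ ×ˢ ball (0:ℂ) 1)) ∈ nhds x
  tub_off : ∀ i t z, z ∈ ball (0:ℂ) 1 → z ≠ 0 → tub i (t, z) ∉ L.carrier
  adapted : ∀ i t z, z ∈ ball (0:ℂ) 1 → z ≠ 0 →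
    ∀ x : L.compl, (x : Sph) = tub i (t, z) → f x = toCircle z
  positive : ∀ i t z, z ∈ ball (0:ℂ) 1 →
    0 < det4 ((tub i (t, z) : E)) (tangAmb (tub i) (t, z) (1, 0))
        (tangAmb (tub i) (t, z) (0, 1)) (tangAmb (tub i) (t, z) (0, Complex.I))

variable {L : Link}

/-- The page `F_θ := L ∪ f⁻¹(θ)` of `f`, as a subset of `S³`. -/
def pageSet (F : BRMap L) (θ : Circle) : Set Sph :=
  L.carrier ∪ {x : Sph | ∃ h : x ∈ L.compl, F.f ⟨x, h⟩ = θ}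

/-- `θ` is a regular value of `F.f` (the corresponding page is smooth). -/
def IsRegularValue (F : BRMap L) (θ : Circle) : Prop :=
  ∀ x : L.compl, F.f x = θ → ¬ IsCrit F.f x

/-- The Morse–Novikov number of `L`: the least number of critical points of
a simple boundary-regular Morse map `S³ ∖ L → S¹`. -/
def MN (L : Link) : ℕ∞ :=
  sInf {k : ℕ∞ | ∃ F : BRMap L, MorseFun F.f ∧ (critSet F.f).encard = k}

/-- `F` is a minimal Morse map for `L`. -/
def Minimal (F : BRMap L) : Prop :=
  MorseFun F.f ∧ ∀ G : BRMap L, MorseFun G.f →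
    (critSet F.f).encard ≤ (critSet G.f).encard

/-- All critical points of `F` have index 1 or 2. -/
def Moderate (F : BRMap L) : Prop :=
  ∀ x ∈ critSet F.f, HasIndex F.f x 1 ∨ HasIndex F.f x 2

/-- `F.f` restricted to its critical set factors as the index followed by an
injection. -/
def SelfIndexed (F : BRMap L) : Prop :=
  ∀ x ∈ critSet F.f, ∀ y ∈ critSet F.f, ∀ i j : ℕ,
    HasIndex F.f x i → HasIndex F.f y j → (F.f x = F.f y ↔ i = j)

/-- An ambient isotopy of `S³`: a smooth family of diffeomorphisms starting
at the identity. -/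
structure Isotopy where
  H : ℝ × Sph → Sph
  smooth : ContMDiff (𝓘(ℝ, ℝ).prod (𝓡 3)) (𝓡 3) (⊤ : ℕ∞) H
  init : ∀ x, H (0, x) = x
  bij : ∀ t, Function.Bijective (fun x => H (t, x))

/-- Two subsets of `S³` are ambient isotopic. -/
def AmbientIsotopic (A B : Set Sph) : Prop :=
  ∃ h : Isotopy, (fun x => h.H (1, x)) '' A = B

/-- Two links are (ambient) isotopic. -/
def LinkIsotopic (L₁ L₂ : Link) : Prop := AmbientIsotopic L₁.carrier L₂.carrier

/-- Isotopy of simple boundary-regular maps: an ambient isotopy carries one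
binding to the other and intertwines the two maps. -/
def BRMapIsotopic (L₁ : Link) (F₁ : BRMap L₁) (L₂ : Link) (F₂ : BRMap L₂) : Prop :=
  ∃ h : Isotopy, (fun x => h.H (1, x)) '' L₁.carrier = L₂.carrier ∧
    ∀ (x : L₁.compl) (y : L₂.compl), (y : Sph) = h.H (1, (x : Sph)) →
      F₂.f y = F₁.f x

/-- A closed (nonempty, compact, boundaryless) smooth surface inside `A ⊆ S³`. -/
structure ClosedSurfaceIn (A : Set Sph) where
  carr : Type
  [ts : TopologicalSpace carr]
  [cs : ChartedSpace E2 carr]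
  [cpt : CompactSpace carr]
  [ne : Nonempty carr]
  emb : carr → Sph
  smooth : ContMDiff (𝓡 2) (𝓡 3) (⊤ : ℕ∞) emb
  inj : Function.Injective emb
  imm : ∀ p, Function.Injective (mfderiv (𝓡 2) (𝓡 3) emb p)
  sub : Set.range emb ⊆ A

/-- `A` contains a nonempty closed surface. -/
def ContainsClosedSurface (A : Set Sph) : Prop := Nonempty (ClosedSurfaceIn A)

/-- `F` is boundary-connected: no page of `F` contains a nonempty closed
surface (equivalently, every page has trivial second homology). -/
def BoundaryConnected (F : BRMap L) : Prop :=
  ∀ θ : Circle, ¬ ContainsClosedSurface (pageSet F θ)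

/-- `F` is connected: every page of `F` is connected. -/
def ConnectedMap (F : BRMap L) : Prop :=
  ∀ θ : Circle, IsConnected (pageSet F θ)

/-- The ambient differential of a map into `S³` defined on a
surface-with-boundary. -/
def tangAmbS {C : Type*} [TopologicalSpace C] [ChartedSpace (EuclideanHalfSpace 2) C]
    (g : C → Sph) (p : C) (v : E2) : E :=
  mfderiv (𝓡 3) 𝓘(ℝ, E) (fun q : Sph => (q : E)) (g p)
    (mfderiv (𝓡∂ 2) (𝓡 3) g p v)

/-- A compact oriented smooth surface-with-boundary embedded in `S³`, with
boundary the link `L` (a *spanning surface* for `L`).  Orientedness is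
encoded by a continuous nonvanishing normal (coorientation) field in `S³`. -/
structure SpanningSurface (L : Link) where
  carr : Type
  [ts : TopologicalSpace carr]
  [cs : ChartedSpace (EuclideanHalfSpace 2) carr]
  [cpt : CompactSpace carr]
  emb : carr → Sph
  smooth : ContMDiff (𝓡∂ 2) (𝓡 3) (⊤ : ℕ∞) emb
  inj : Function.Injective emb
  imm : ∀ p, Function.Injective (mfderiv (𝓡∂ 2) (𝓡 3) emb p)
  bdry : emb '' ((𝓡∂ 2).boundary carr) = L.carrier
  int_off : ∀ p, p ∉ (𝓡∂ 2).boundary carr → emb p ∉ L.carrier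
  coorient : ∃ ν : carr → E, Continuous ν ∧ ∀ p, ν p ≠ 0 ∧
    inner (𝕜 := ℝ) (ν p) ((emb p : Sph) : E) = 0 ∧
    ∀ v : E2, inner (𝕜 := ℝ) (ν p) (tangAmbS emb p v) = 0

/-- A Seifert surface for `L`: a spanning surface with no closed components. -/
structure SeifertSurface (L : Link) extends SpanningSurface L where
  no_closed : ∀ p : carr, (connectedComponent p ∩ (𝓡∂ 2).boundary carr).Nonempty

/-- A compact smooth surface-with-boundary embedded in the region `Amb ⊆ S³`,
with boundary the set `Bd`. -/
structure EmbSurface (Bd Amb : Set Sph) where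
  carr : Type
  [ts : TopologicalSpace carr]
  [cs : ChartedSpace (EuclideanHalfSpace 2) carr]
  [cpt : CompactSpace carr]
  emb : carr → Sph
  smooth : ContMDiff (𝓡∂ 2) (𝓡 3) (⊤ : ℕ∞) emb
  inj : Function.Injective emb
  imm : ∀ p, Function.Injective (mfderiv (𝓡∂ 2) (𝓡 3) emb p)
  bdry : emb '' ((𝓡∂ 2).boundary carr) = Bd
  sub : Set.range emb ⊆ Amb

/-- Angular speed about the origin of a plane curve. -/
def angSpeed (g : ℝ → ℂ) (t : ℝ) : ℝ := ((deriv g t) / g t).im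

/-- Total winding number about `0` of a (`2π`-periodic) plane curve. -/
def windingNumber (g : ℝ → ℂ) : ℝ := (1/(2*π)) * ∫ t in (0:ℝ)..(2*π), angSpeed g t

/-- `w/|w|` (with junk value `1` at `0`). -/
def unitC (w : ℂ) : ℂ := if w = 0 then 1 else w / ‖w‖

/-- The defining property of the (discontinuous) bijection
`β : S³ → S³`, `β(z,w) = (z·w/|w|, w)` for `w ≠ 0`, `β(z,0) = (z,0)`. -/
def IsBetaMap (β : Equiv.Perm Sph) : Prop :=
  ∀ p : Sph, Z ((β p : Sph) : E) = Z ((p : Sph) : E) * unitC (W ((p : Sph) : E)) ∧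
    W ((β p : Sph) : E) = W ((p : Sph) : E)

/-!
Near the unknot `γ`, choose tube coordinates `(s, w)` in which `γ` is `w = 0`. As `θ` is a regular
value, the map there is `θ * exp (i h(s, w))` with `h(s, 0) = 0` and nonzero transverse derivative.
In polar coordinates `w = ε x exp (i φ)`, interpolate between `h` for large `x` and the linear
function `μ x cos (φ - e₀)`, independent of `s`, for `x ≤ 1`. The interpolation can be chosen with
only two critical points, both nondegenerate.

The twist `(s, w) ↦ (s + n arg w, w)` is discontinuous along `γ`, but preserves the modified map on
the core `x ≤ 1`, where that map is smooth and has no critical points. Away from `γ` the twist is a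
local diffeomorphism. Transporting the modified map by the twist thus gives a Morse map for the
twisted link with at most two critical points more.
-/

section
open scoped Topology ContDiff
open Filter
open Real (smoothTransition)

/-! ### Critical points in local parametrizations -/

attribute [local instance] finrank_real_complex_fact'

lemma contMDiff_circle_mul_exp (θ : Circle) :
    ContMDiff 𝓘(ℝ, ℝ) (𝓡 1) ∞ fun t : ℝ => θ * Circle.exp t :=
  contMDiff_const.mul contMDiff_circleExp

lemma hasDerivAt_coe_circle_mul_exp (θ : Circle) (t : ℝ) :
    HasDerivAt (fun t : ℝ => ((θ * Circle.exp t : Circle) : ℂ))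
      ((θ * Circle.exp t : Circle) * Complex.I) t := by
  simp only [Circle.coe_mul, Circle.coe_exp, mul_assoc]
  refine HasDerivAt.const_mul _ (HasDerivAt.cexp ?_)
  simpa using (Complex.ofRealCLM.hasDerivAt (x := t)).mul_const Complex.I

/-- The differential of `t ↦ θ e^{it}`, with the tangent spaces of `ℝ` and of the circle
replaced by their model spaces. -/
def circleExpDeriv (θ : Circle) (t : ℝ) : ℝ →L[ℝ] EuclideanSpace ℝ (Fin 1) :=
  mfderiv 𝓘(ℝ, ℝ) (𝓡 1) (fun t : ℝ => θ * Circle.exp t) t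

lemma injective_circleExpDeriv (θ : Circle) (t : ℝ) :
    Function.Injective (circleExpDeriv θ t) := by
  have hcoe : ContMDiff (𝓡 1) 𝓘(ℝ, ℂ) ∞ fun z : Circle => (z : ℂ) :=
    contMDiff_coe_sphere (E := ℂ) (n := 1)
  have hchain := mfderiv_comp t (hcoe.mdifferentiable (by simp) (θ * Circle.exp t))
    ((contMDiff_circle_mul_exp θ).mdifferentiable (by simp) t)
  rw [mfderiv_eq_fderiv, show (fun z : Circle => (z : ℂ)) ∘ (fun t : ℝ => θ * Circle.exp t) =
    fun t : ℝ => ((θ * Circle.exp t : Circle) : ℂ) from rfl,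
    (hasDerivAt_coe_circle_mul_exp θ t).hasFDerivAt.fderiv] at hchain
  rw [injective_iff_map_eq_zero]
  intro (v : ℝ) hv
  have hzero : v • (((θ * Circle.exp t : Circle) : ℂ) * Complex.I) = 0 :=
    (congrArg (fun A : ℝ →L[ℝ] ℂ => A v) hchain).trans
      ((congrArg (mfderiv (𝓡 1) 𝓘(ℝ, ℂ) (fun z : Circle => (z : ℂ)) (θ * Circle.exp t) :
        EuclideanSpace ℝ (Fin 1) →L[ℝ] ℂ) hv).trans (map_zero _))
  exact (smul_eq_zero.1 hzero).resolve_right (mul_ne_zero (Circle.coe_ne_zero _) Complex.I_ne_zero)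

lemma bijective_circleExpDeriv (θ : Circle) (t : ℝ) :
    Function.Bijective (circleExpDeriv θ t) :=
  ⟨injective_circleExpDeriv θ t,
    (LinearMap.injective_iff_surjective_of_finrank_eq_finrank
      (f := (circleExpDeriv θ t).toLinearMap) (by simp)).1 (injective_circleExpDeriv θ t)⟩

section Param
variable {U V : Type*} [NormedAddCommGroup U] [NormedSpace ℝ U]
  [NormedAddCommGroup V] [NormedSpace ℝ V]

/-- The Hessian of the real function `g` at `v₀` has trivial kernel; meaningful at critical
points. -/
def NondegAt (g : V → ℝ) (v₀ : V) : Prop :=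
  ∀ v, v ≠ 0 → ∃ w, fderiv ℝ (fun u => fderiv ℝ g u v) v₀ w ≠ 0

lemma NondegAt.congr {g g' : V → ℝ} {v₀ : V} (h : NondegAt g v₀) (e : g' =ᶠ[𝓝 v₀] g) :
    NondegAt g' v₀ := by
  intro v hv
  obtain ⟨w, hw⟩ := h v hv
  refine ⟨w, ?_⟩
  have e' : (fun u => fderiv ℝ g' u v) =ᶠ[𝓝 v₀] fun u => fderiv ℝ g u v := by
    filter_upwards [e.eventually_nhds] with u hu
    rw [EventuallyEq.fderiv_eq hu]
  rwa [e'.fderiv_eq]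

lemma fderiv_fderiv_comp_of_fderiv_eq_zero {g : V → ℝ} {ρ : U → V} {u₀ : U}
    (hg : ContDiffAt ℝ 2 g (ρ u₀)) (hρ : ContDiffAt ℝ 2 ρ u₀)
    (hcrit : fderiv ℝ g (ρ u₀) = 0) (v w : U) :
    fderiv ℝ (fun u => fderiv ℝ (fun u => g (ρ u)) u v) u₀ w =
      fderiv ℝ (fun y => fderiv ℝ g y (fderiv ℝ ρ u₀ v)) (ρ u₀) (fderiv ℝ ρ u₀ w) := by
  have hρd : ∀ᶠ u in 𝓝 u₀, DifferentiableAt ℝ ρ u :=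
    (hρ.eventually (by simp)).mono fun u hu => hu.differentiableAt (by simp)
  have hgd : ∀ᶠ u in 𝓝 u₀, DifferentiableAt ℝ g (ρ u) := hρ.continuousAt.eventually
    ((hg.eventually (by simp)).mono fun u hu => hu.differentiableAt (by simp))
  have hchain : (fun u => fderiv ℝ (fun u => g (ρ u)) u v) =ᶠ[𝓝 u₀]
      fun u => (fderiv ℝ g (ρ u)) (fderiv ℝ ρ u v) := by
    filter_upwards [hρd, hgd] with u h₁ h₂
    rw [show (fun u => g (ρ u)) = g ∘ ρ from rfl, fderiv_comp u h₂ h₁]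
    rfl
  have hg' : DifferentiableAt ℝ (fderiv ℝ g) (ρ u₀) :=
    (hg.fderiv_right (m := 1) (by norm_num)).differentiableAt (by simp)
  have hρ' : DifferentiableAt ℝ (fderiv ℝ ρ) u₀ :=
    (hρ.fderiv_right (m := 1) (by norm_num)).differentiableAt (by simp)
  have hleft : HasFDerivAt (fun u => fderiv ℝ g (ρ u))
      ((fderiv ℝ (fderiv ℝ g) (ρ u₀)).comp (fderiv ℝ ρ u₀)) u₀ :=
    hg'.hasFDerivAt.comp u₀ hρd.self_of_nhds.hasFDerivAt
  rw [hchain.fderiv_eq,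
    (hleft.clm_apply (hρ'.hasFDerivAt.clm_apply (hasFDerivAt_const v u₀))).fderiv,
    (hg'.hasFDerivAt.clm_apply (hasFDerivAt_const (fderiv ℝ ρ u₀ v) (ρ u₀))).fderiv]
  simp [hcrit]

lemma fderiv_apply_fderiv_of_leftInverse {ρ : U → V} {κ : V → U} {v₀ : V}
    (hρ : DifferentiableAt ℝ ρ (κ v₀)) (hκ : DifferentiableAt ℝ κ v₀)
    (h : ∀ᶠ v in 𝓝 v₀, ρ (κ v) = v) (v : V) :
    fderiv ℝ ρ (κ v₀) (fderiv ℝ κ v₀ v) = v := by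
  have hcomp : HasFDerivAt (fun v => ρ (κ v)) ((fderiv ℝ ρ (κ v₀)).comp (fderiv ℝ κ v₀)) v₀ :=
    hρ.hasFDerivAt.comp v₀ hκ.hasFDerivAt
  have hid : HasFDerivAt (fun v => ρ (κ v)) (ContinuousLinearMap.id ℝ V) v₀ :=
    (hasFDerivAt_id v₀).congr_of_eventuallyEq h
  exact congrArg (fun A : V →L[ℝ] V => A v) (hcomp.unique hid)

lemma NondegAt.of_comp {g : V → ℝ} {ρ : U → V} {κ : V → U} {u₀ : U}
    (h : NondegAt (fun u => g (ρ u)) u₀) (hg : ContDiffAt ℝ 2 g (ρ u₀))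
    (hcrit : fderiv ℝ g (ρ u₀) = 0) (hρ : ContDiffAt ℝ 2 ρ u₀) (hκ : ContDiffAt ℝ 2 κ (ρ u₀))
    (hκρ : ∀ᶠ u in 𝓝 u₀, κ (ρ u) = u) (hρκ : ∀ᶠ v in 𝓝 (ρ u₀), ρ (κ v) = v) :
    NondegAt g (ρ u₀) := by
  have hu : κ (ρ u₀) = u₀ := hκρ.self_of_nhds
  have hρd : DifferentiableAt ℝ ρ u₀ := hρ.differentiableAt (by simp)
  have hκd : DifferentiableAt ℝ κ (ρ u₀) := hκ.differentiableAt (by simp)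
  have hinv : ∀ v, fderiv ℝ ρ u₀ (fderiv ℝ κ (ρ u₀) v) = v := by
    have := fderiv_apply_fderiv_of_leftInverse (hu.symm ▸ hρd) hκd hρκ
    rwa [hu] at this
  intro v hv
  obtain ⟨w, hw⟩ := h (fderiv ℝ κ (ρ u₀) v) fun h0 => hv (by rw [← hinv v, h0, map_zero])
  rw [fderiv_fderiv_comp_of_fderiv_eq_zero hg hρ hcrit, hinv] at hw
  exact ⟨_, hw⟩

section Manifold
variable {M : Type*} [TopologicalSpace M] [ChartedSpace E3 M]

/-- `R` is a smooth local inverse of the map `Y`, itself smooth at `v₀`. -/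
structure IsLocalInverseAt (R : M → V) (Y : V → M) (v₀ : V) : Prop where
  contMDiffAt : ContMDiffAt 𝓘(ℝ, V) (𝓡 3) ∞ Y v₀
  contMDiffAt_inv : ContMDiffAt (𝓡 3) 𝓘(ℝ, V) ∞ R (Y v₀)
  left_inv : ∀ᶠ v in 𝓝 v₀, R (Y v) = v
  right_inv : ∀ᶠ x in 𝓝 (Y v₀), Y (R x) = x

/-- `Y` is a smooth local parametrization (a local diffeomorphism) at `v₀`. -/
def IsParamAt (Y : V → M) (v₀ : V) : Prop := ∃ R, IsLocalInverseAt R Y v₀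

variable {Y : V → M} {R : M → V} {v₀ : V} {f : M → Circle} {g : V → ℝ} {θ : Circle}

namespace IsLocalInverseAt

lemma self (h : IsLocalInverseAt R Y v₀) : R (Y v₀) = v₀ := h.left_inv.self_of_nhds

lemma eventually_eq_mul_exp (h : IsLocalInverseAt R Y v₀)
    (hf : ∀ᶠ v in 𝓝 v₀, f (Y v) = θ * Circle.exp (g v)) :
    ∀ᶠ x in 𝓝 (Y v₀), f x = θ * Circle.exp (g (R x)) := by
  have hR : Tendsto R (𝓝 (Y v₀)) (𝓝 v₀) := by
    simpa only [ContinuousAt, h.self] using h.contMDiffAt_inv.continuousAt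
  filter_upwards [h.right_inv, hR.eventually hf] with x h₁ h₂
  rw [← h₂, h₁]

lemma surjective_mfderiv (h : IsLocalInverseAt R Y v₀) :
    Function.Surjective (mfderiv 𝓘(ℝ, V) (𝓡 3) Y v₀ : V →L[ℝ] E3) := by
  suffices Function.Surjective (mfderiv 𝓘(ℝ, V) (𝓡 3) Y (R (Y v₀)) : V →L[ℝ] E3) by
    rwa [h.self] at this
  have hid : Y ∘ R =ᶠ[𝓝 (Y v₀)] id := h.right_inv
  have hchain := hid.mfderiv_eq (I := 𝓡 3) (I' := 𝓡 3)
  rw [mfderiv_id, mfderiv_comp (Y v₀)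
    (h.self.symm ▸ h.contMDiffAt.mdifferentiableAt (by simp))
    (h.contMDiffAt_inv.mdifferentiableAt (by simp))] at hchain
  exact fun x => ⟨mfderiv (𝓡 3) 𝓘(ℝ, V) R (Y v₀) x,
    congrArg (fun A : E3 →L[ℝ] E3 => A x) hchain⟩

end IsLocalInverseAt

namespace IsParamAt

lemma contMDiffAt_of_lift (hY : IsParamAt Y v₀)
    (hf : ∀ᶠ v in 𝓝 v₀, f (Y v) = θ * Circle.exp (g v)) (hg : ContDiffAt ℝ ∞ g v₀) :
    ContMDiffAt (𝓡 3) (𝓡 1) ∞ f (Y v₀) := by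
  obtain ⟨R, hR⟩ := hY
  have hg' : ContMDiffAt 𝓘(ℝ, V) 𝓘(ℝ, ℝ) ∞ g (R (Y v₀)) := hR.self.symm ▸ hg.contMDiffAt
  exact ((contMDiff_circle_mul_exp θ).contMDiffAt.comp (Y v₀)
    (hg'.comp (Y v₀) hR.contMDiffAt_inv)).congr_of_eventuallyEq (hR.eventually_eq_mul_exp hf)

lemma mfderiv_lift (hY : IsParamAt Y v₀)
    (hf : ∀ᶠ v in 𝓝 v₀, f (Y v) = θ * Circle.exp (g v)) (hg : ContDiffAt ℝ ∞ g v₀) (v : V) :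
    mfderiv (𝓡 3) (𝓡 1) f (Y v₀) ((mfderiv 𝓘(ℝ, V) (𝓡 3) Y v₀ : V →L[ℝ] E3) v) =
      circleExpDeriv θ (g v₀) (fderiv ℝ g v₀ v) := by
  have hfd := (hY.contMDiffAt_of_lift hf hg).mdifferentiableAt (by simp)
  obtain ⟨R, hR⟩ := hY
  have hlift : mfderiv 𝓘(ℝ, V) (𝓡 1) (f ∘ Y) v₀ =
      (circleExpDeriv θ (g v₀)).comp (fderiv ℝ g v₀) := by
    have : f ∘ Y =ᶠ[𝓝 v₀] (fun t : ℝ => θ * Circle.exp t) ∘ g := hf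
    rw [this.mfderiv_eq, mfderiv_comp v₀
      ((contMDiff_circle_mul_exp θ).mdifferentiable (by simp) _)
      (hg.differentiableAt (by simp)).mdifferentiableAt, mfderiv_eq_fderiv]
    rfl
  exact congrArg (fun A : V →L[ℝ] EuclideanSpace ℝ (Fin 1) => A v)
    ((mfderiv_comp v₀ hfd (hR.contMDiffAt.mdifferentiableAt (by simp))).symm.trans hlift)

lemma isCrit_iff (hY : IsParamAt Y v₀)
    (hf : ∀ᶠ v in 𝓝 v₀, f (Y v) = θ * Circle.exp (g v)) (hg : ContDiffAt ℝ ∞ g v₀) :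
    IsCrit f (Y v₀) ↔ fderiv ℝ g v₀ = 0 := by
  have hlift := hY.mfderiv_lift hf hg
  have hbij := bijective_circleExpDeriv θ (g v₀)
  obtain ⟨R, hR⟩ := hY
  constructor
  · intro hcrit
    by_contra hne
    obtain ⟨v, hv⟩ := DFunLike.ne_iff.1 hne
    refine hcrit fun y => ?_
    obtain ⟨t, rfl⟩ := hbij.2 y
    refine ⟨_, (hlift ((t / fderiv ℝ g v₀ v) • v)).trans ?_⟩
    rw [map_smul, smul_eq_mul, div_mul_cancel₀ _ (by simpa using hv)]
  · intro hzero hsurj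
    obtain ⟨x, hx⟩ := hsurj (circleExpDeriv θ (g v₀) 1)
    obtain ⟨v, rfl⟩ := hR.surjective_mfderiv x
    have := hbij.1 ((hlift v).symm.trans hx)
    rw [hzero] at this
    exact zero_ne_one this

end IsParamAt

lemma eventually_liftChart_eq {h : E3 → ℝ} {x : M}
    (hh : ContinuousAt h (extChartAt (𝓡 3) x x))
    (hf : ∀ᶠ u in 𝓝 (extChartAt (𝓡 3) x x),
      f ((extChartAt (𝓡 3) x).symm u) = θ * Circle.exp (h u)) :
    liftChart f x =ᶠ[𝓝 (extChartAt (𝓡 3) x x)] fun u => h u - h (extChartAt (𝓡 3) x x) := by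
  have hsmall : ∀ᶠ u in 𝓝 (extChartAt (𝓡 3) x x),
      h u - h (extChartAt (𝓡 3) x x) ∈ Ioo (-π) π := by
    refine (hh.sub continuousAt_const).eventually ?_
    rw [Pi.sub_apply, sub_self]
    exact Ioo_mem_nhds (neg_lt_zero.2 Real.pi_pos) Real.pi_pos
  have hx := hf.self_of_nhds
  rw [extChartAt_to_inv] at hx
  filter_upwards [hf, hsmall] with u hu hlt
  rw [liftChart, hu, hx]
  simp only [Circle.coe_mul, Circle.coe_exp]
  rw [mul_div_mul_left _ _ (Circle.coe_ne_zero θ), ← Complex.exp_sub, ← sub_mul,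
    ← Complex.ofReal_sub, Complex.arg_exp_mul_I, toIocMod_eq_self]
  exact ⟨hlt.1, by linarith [hlt.2]⟩

lemma nondegAt_sub_const {g : V → ℝ} (c : ℝ) (v₀ : V) :
    NondegAt (fun v => g v - c) v₀ ↔ NondegAt g v₀ := by
  simp only [NondegAt, fderiv_sub_const]

lemma nondeg_iff_nondegAt_liftChart (f : M → Circle) (x : M) :
    Nondeg f x ↔ NondegAt (liftChart f x) (extChartAt (𝓡 3) x x) := Iff.rfl

variable [IsManifold (𝓡 3) ∞ M]

lemma IsLocalInverseAt.chart (h : IsLocalInverseAt R Y v₀) :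
    ContDiffAt ℝ ∞ (fun u => R ((extChartAt (𝓡 3) (Y v₀)).symm u))
        (extChartAt (𝓡 3) (Y v₀) (Y v₀)) ∧
      ContDiffAt ℝ ∞ (fun v => extChartAt (𝓡 3) (Y v₀) (Y v)) v₀ ∧
      (∀ᶠ v in 𝓝 v₀, R ((extChartAt (𝓡 3) (Y v₀)).symm (extChartAt (𝓡 3) (Y v₀) (Y v))) = v) ∧
      ∀ᶠ u in 𝓝 (extChartAt (𝓡 3) (Y v₀) (Y v₀)),
        extChartAt (𝓡 3) (Y v₀) (Y (R ((extChartAt (𝓡 3) (Y v₀)).symm u))) = u := by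
  have hsymm : ContMDiffAt 𝓘(ℝ, E3) (𝓡 3) ∞ (extChartAt (𝓡 3) (Y v₀)).symm
      (extChartAt (𝓡 3) (Y v₀) (Y v₀)) :=
    (contMDiffOn_extChartAt_symm (I := 𝓡 3) (n := ∞) (Y v₀)).contMDiffAt
      (extChartAt_target_mem_nhds _)
  refine ⟨?_, ?_, ?_, ?_⟩
  · exact (ContMDiffAt.comp_of_eq h.contMDiffAt_inv hsymm (extChartAt_to_inv _)).contDiffAt
  · exact ((contMDiffAt_extChartAt (I := 𝓡 3) (n := ∞)).comp v₀ h.contMDiffAt).contDiffAt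
  · filter_upwards [h.left_inv, h.contMDiffAt.continuousAt.eventually
      (extChartAt_source_mem_nhds (I := 𝓡 3) (Y v₀))] with v h₁ h₂
    rw [(extChartAt (𝓡 3) (Y v₀)).left_inv h₂, h₁]
  · have hc : Tendsto (extChartAt (𝓡 3) (Y v₀)).symm (𝓝 (extChartAt (𝓡 3) (Y v₀) (Y v₀)))
        (𝓝 (Y v₀)) := by
      simpa only [ContinuousAt, extChartAt_to_inv] using hsymm.continuousAt
    filter_upwards [hc.eventually h.right_inv, extChartAt_target_mem_nhds (I := 𝓡 3) (Y v₀)]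
      with u h₁ h₂
    rw [h₁, (extChartAt (𝓡 3) (Y v₀)).right_inv h₂]

lemma IsParamAt.nondeg_iff (hY : IsParamAt Y v₀)
    (hf : ∀ᶠ v in 𝓝 v₀, f (Y v) = θ * Circle.exp (g v)) (hg : ContDiffAt ℝ ∞ g v₀)
    (hcrit : fderiv ℝ g v₀ = 0) : Nondeg f (Y v₀) ↔ NondegAt g v₀ := by
  obtain ⟨R, hR⟩ := hY
  obtain ⟨hρ, hκ, hρκ, hκρ⟩ := hR.chart
  set ψ := extChartAt (𝓡 3) (Y v₀)
  set ρ : E3 → V := fun u => R (ψ.symm u)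
  have hρ₀ : ρ (ψ (Y v₀)) = v₀ := hρκ.self_of_nhds
  have hg' : ContDiffAt ℝ ∞ g (ρ (ψ (Y v₀))) := hρ₀.symm ▸ hg
  have hcrit' : fderiv ℝ g (ρ (ψ (Y v₀))) = 0 := hρ₀.symm ▸ hcrit
  have hψ : Tendsto ψ.symm (𝓝 (ψ (Y v₀))) (𝓝 (Y v₀)) := by
    simpa only [ContinuousAt, ψ, extChartAt_to_inv] using
      continuousAt_extChartAt_symm (I := 𝓡 3) (Y v₀)
  have hlift : liftChart f (Y v₀) =ᶠ[𝓝 (ψ (Y v₀))] fun u => g (ρ u) - g (ρ (ψ (Y v₀))) :=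
    eventually_liftChart_eq (hg'.continuousAt.comp (f := ρ) hρ.continuousAt)
      (hψ.eventually (hR.eventually_eq_mul_exp hf))
  have htwo : (2 : WithTop ℕ∞) ≤ ∞ := WithTop.coe_le_coe.2 le_top
  rw [nondeg_iff_nondegAt_liftChart]
  constructor
  · intro h
    have := ((nondegAt_sub_const _ _).1 (h.congr hlift.symm)).of_comp (hg'.of_le htwo) hcrit'
      (hρ.of_le htwo) (by rw [hρ₀]; exact hκ.of_le htwo) hκρ (by rwa [hρ₀])
    rwa [hρ₀] at this
  · intro h
    refine NondegAt.congr ((nondegAt_sub_const _ _).2 ?_) hlift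
    refine NondegAt.of_comp (κ := ρ) (ρ := fun v => ψ (Y v)) (u₀ := v₀)
      (g := fun u => g (ρ u)) (h.congr (hρκ.mono fun _ hv => congrArg g hv)) ?_ ?_ (hκ.of_le htwo)
      (hρ.of_le htwo) hρκ hκρ
    · exact (hg'.comp (ψ (Y v₀)) hρ).of_le htwo
    · rw [show (fun u => g (ρ u)) = g ∘ ρ from rfl,
        fderiv_comp _ (hg'.differentiableAt (by simp)) (hρ.differentiableAt (by simp)), hcrit',
        ContinuousLinearMap.zero_comp]

end Manifold

end Param

/-! ### The radial profile -/

lemma differentiable_smoothTransition : Differentiable ℝ smoothTransition :=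
  Real.smoothTransition.contDiff.differentiable one_ne_zero

lemma deriv_smoothTransition_of_nonpos {x : ℝ} (h : x ≤ 0) : deriv smoothTransition x = 0 := by
  refine IsLocalMin.deriv_eq_zero (Eventually.of_forall fun y => ?_)
  rw [Real.smoothTransition.zero_of_nonpos h]
  exact Real.smoothTransition.nonneg y

lemma deriv_smoothTransition_of_one_le {x : ℝ} (h : 1 ≤ x) : deriv smoothTransition x = 0 := by
  refine IsLocalMax.deriv_eq_zero (Eventually.of_forall fun y => ?_)
  rw [Real.smoothTransition.one_of_one_le h]
  exact Real.smoothTransition.le_one y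

lemma exists_deriv_smoothTransition_le :
    ∃ K : ℝ, 0 < K ∧ ∀ x, deriv smoothTransition x ≤ K := by
  have hc : Continuous (deriv smoothTransition) :=
    Real.smoothTransition.contDiff (n := 1).continuous_deriv le_rfl
  obtain ⟨C, hC⟩ := (isCompact_Icc (a := (0 : ℝ)) (b := 1)).exists_bound_of_continuousOn
    hc.continuousOn
  refine ⟨max C 1, by positivity, fun x => ?_⟩
  rcases le_total x 0 with h₀ | h₀
  · rw [deriv_smoothTransition_of_nonpos h₀]
    positivity
  rcases le_total 1 x with h₁ | h₁
  · rw [deriv_smoothTransition_of_one_le h₁]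
    positivity
  · exact (le_abs_self _).trans ((hC x ⟨h₀, h₁⟩).trans (le_max_left _ _))

/-- A smooth bump on `[1, 4]`, symmetric about `5/2` with `5/2` its only critical point inside;
the derivative of the rising part of the radial profile. -/
def profileBump (x : ℝ) : ℝ := expNegInvGlue ((x - 1) * (4 - x))

lemma contDiff_profileBump : ContDiff ℝ ∞ profileBump :=
  expNegInvGlue.contDiff.comp (by fun_prop)

lemma profileBump_eq_zero_of_le {x : ℝ} (h : x ≤ 1) : profileBump x = 0 :=
  expNegInvGlue.zero_of_nonpos (by nlinarith)

lemma profileBump_eq_zero_of_ge {x : ℝ} (h : 4 ≤ x) : profileBump x = 0 :=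
  expNegInvGlue.zero_of_nonpos (by nlinarith)

lemma profileBump_nonneg (x : ℝ) : 0 ≤ profileBump x := expNegInvGlue.nonneg _

lemma profileBump_eq_exp {x : ℝ} (h : x ∈ Ioo 1 4) :
    profileBump x = Real.exp (-((x - 1) * (4 - x))⁻¹) := by
  have : ¬ (x - 1) * (4 - x) ≤ 0 := not_le.2 (mul_pos (sub_pos.2 h.1) (sub_pos.2 h.2))
  rw [profileBump, expNegInvGlue, if_neg this]

lemma exp_neg_one_le_profileBump {x : ℝ} (h : x ∈ Icc 2 3) : Real.exp (-1) ≤ profileBump x := by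
  rw [profileBump_eq_exp ⟨by linarith [h.1], by linarith [h.2]⟩, Real.exp_le_exp, neg_le_neg_iff]
  exact inv_le_one_of_one_le₀ (by nlinarith [h.1, h.2])

lemma eq_or_add_eq_of_profileBump_eq {x y : ℝ} (hx : x ∈ Ioo 1 4) (hy : y ∈ Ioo 1 4)
    (h : profileBump x = profileBump y) : x = y ∨ x + y = 5 := by
  rw [profileBump_eq_exp hx, profileBump_eq_exp hy] at h
  have := inv_injective (neg_injective (Real.exp_injective h))
  have : (x - y) * (5 - (x + y)) = 0 := by linarith
  exact (mul_eq_zero.1 this).imp sub_eq_zero.1 fun h => (sub_eq_zero.1 h).symm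

lemma deriv_profileBump_ne_zero {x : ℝ} (h : x ∈ Ioo 1 4) (hx : x ≠ 5 / 2) :
    deriv profileBump x ≠ 0 := by
  have heq : profileBump =ᶠ[𝓝 x] fun x => Real.exp (-((x - 1) * (4 - x))⁻¹) := by
    filter_upwards [isOpen_Ioo.mem_nhds h] with y hy using profileBump_eq_exp hy
  have hpos : 0 < (x - 1) * (4 - x) := mul_pos (sub_pos.2 h.1) (sub_pos.2 h.2)
  have hd : HasDerivAt (fun x : ℝ => Real.exp (-((x - 1) * (4 - x))⁻¹)) _ x :=
    (((((hasDerivAt_id x).sub_const 1).mul ((hasDerivAt_id x).const_sub 4)).inv hpos.ne').neg).exp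
  rw [heq.deriv_eq, hd.deriv]
  refine mul_ne_zero (Real.exp_ne_zero _) (neg_ne_zero.2 (div_ne_zero ?_ (pow_ne_zero 2 hpos.ne')))
  intro h0
  simp only [id] at h0
  exact hx (by linarith)

/-- The primitive of `profileBump`, a smooth step rising on `[1, 4]`. -/
def profileStep (x : ℝ) : ℝ := ∫ t in (0 : ℝ)..x, profileBump t

lemma hasDerivAt_profileStep (x : ℝ) : HasDerivAt profileStep (profileBump x) x :=
  intervalIntegral.integral_hasDerivAt_right
    (contDiff_profileBump.continuous.intervalIntegrable _ _)
    contDiff_profileBump.continuous.stronglyMeasurable.stronglyMeasurableAtFilter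
    contDiff_profileBump.continuous.continuousAt

lemma deriv_profileStep : deriv profileStep = profileBump :=
  funext fun x => (hasDerivAt_profileStep x).deriv

lemma contDiff_profileStep : ContDiff ℝ ∞ profileStep := by
  rw [contDiff_infty_iff_deriv, deriv_profileStep]
  exact ⟨fun x => (hasDerivAt_profileStep x).differentiableAt, contDiff_profileBump⟩

lemma monotone_profileStep : Monotone profileStep :=
  monotone_of_deriv_nonneg (fun x => (hasDerivAt_profileStep x).differentiableAt) fun x => by
    rw [deriv_profileStep]
    exact profileBump_nonneg x

lemma profileStep_eq_zero {x : ℝ} (h : x ≤ 1) : profileStep x = 0 := by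
  rw [profileStep, intervalIntegral.integral_congr (g := fun _ => (0 : ℝ)),
    intervalIntegral.integral_zero]
  exact fun t ht => profileBump_eq_zero_of_le (ht.2.trans (max_le zero_le_one h))

lemma profileStep_pos {x : ℝ} (h : 1 < x) : 0 < profileStep x := by
  have hmono : StrictMonoOn profileStep (Icc 1 4) := by
    refine strictMonoOn_of_deriv_pos (convex_Icc _ _) contDiff_profileStep.continuous.continuousOn
      fun y hy => ?_
    rw [interior_Icc] at hy
    rw [deriv_profileStep, profileBump_eq_exp hy]
    exact Real.exp_pos _
  have hlt : profileStep 1 < profileStep (min x 4) :=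
    hmono ⟨le_rfl, by norm_num⟩ ⟨le_min h.le (by norm_num), min_le_right _ _⟩
      (lt_min h (by norm_num))
  rw [profileStep_eq_zero le_rfl] at hlt
  exact hlt.trans_le (monotone_profileStep (min_le_left _ _))

lemma profileStep_eq_profileStep_four {x : ℝ} (h : 4 ≤ x) : profileStep x = profileStep 4 := by
  have hint := contDiff_profileBump.continuous.intervalIntegrable (μ := MeasureTheory.volume)
  rw [← sub_eq_zero, profileStep, profileStep,
    intervalIntegral.integral_interval_sub_left (hint _ _) (hint _ _),
    intervalIntegral.integral_congr (g := fun _ => (0 : ℝ)), intervalIntegral.integral_zero]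
  intro t ht
  rw [uIcc_of_le h] at ht
  exact profileBump_eq_zero_of_ge ht.1

/-- A radial profile: a function supported in `[1, R]` rising with slope at least `C` on
`[2, 3]` and decaying with slope at least `-1/2`, whose slope is `1` at most once before `2` and
at most once after `3`, transversally. The slope-one points give the two new critical points. -/
structure IsProfile (C R : ℝ) (σ : ℝ → ℝ) : Prop where
  four_le : 4 ≤ R
  contDiff : ContDiff ℝ ∞ σ
  eq_zero_of_le : ∀ x ≤ 1, σ x = 0
  eq_zero_of_ge : ∀ x, R ≤ x → σ x = 0
  le_deriv : ∀ x ∈ Icc (2 : ℝ) 3, C ≤ deriv σ x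
  neg_half_le_deriv : ∀ x, -(1 / 2) ≤ deriv σ x
  deriv_nonpos : ∀ x, 4 ≤ x → deriv σ x ≤ 0
  pos_of_deriv_pos : ∀ x, 0 < deriv σ x → 0 < σ x
  deriv_deriv_ne_zero : ∀ x, deriv σ x = 1 → x ≠ 5 / 2 → deriv (deriv σ) x ≠ 0
  eq_of_lt_two : ∀ x y, x < 2 → y < 2 → deriv σ x = 1 → deriv σ y = 1 → x = y
  eq_of_three_lt : ∀ x y, 3 < x → 3 < y → deriv σ x = 1 → deriv σ y = 1 → x = y

/-- The profile with slope factor `N` which decays to `0` between `4` and `4 + T`. -/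
def profile (N T x : ℝ) : ℝ := N * profileStep x * (1 - smoothTransition ((x - 4) / T))

section Profile
variable {N T K x : ℝ}

lemma contDiff_profile : ContDiff ℝ ∞ (profile N T) :=
  (contDiff_const.mul contDiff_profileStep).mul
    (contDiff_const.sub (Real.smoothTransition.contDiff.comp (by fun_prop)))

lemma deriv_profile (N T x : ℝ) : deriv (profile N T) x =
    N * profileBump x * (1 - smoothTransition ((x - 4) / T)) -
      N * profileStep x * (deriv smoothTransition ((x - 4) / T) / T) := by
  have hst : HasDerivAt (fun x : ℝ => smoothTransition ((x - 4) / T))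
      (deriv smoothTransition ((x - 4) / T) * (1 / T)) x :=
    HasDerivAt.comp x (differentiable_smoothTransition _).hasDerivAt
      (((hasDerivAt_id x).sub_const 4).div_const T)
  refine ((((hasDerivAt_profileStep x).const_mul N).mul (hst.const_sub 1)).deriv).trans ?_
  ring

lemma sub_div_nonpos (hT : 0 < T) (hx : x ≤ 4) : (x - 4) / T ≤ 0 :=
  div_nonpos_of_nonpos_of_nonneg (sub_nonpos.2 hx) hT.le

lemma deriv_profile_of_le_four (hT : 0 < T) (hx : x ≤ 4) :
    deriv (profile N T) x = N * profileBump x := by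
  rw [deriv_profile, deriv_smoothTransition_of_nonpos (sub_div_nonpos hT hx),
    Real.smoothTransition.zero_of_nonpos (sub_div_nonpos hT hx)]
  ring

lemma deriv_profile_of_four_le (hx : 4 ≤ x) : deriv (profile N T) x =
    -(N * profileStep 4 * deriv smoothTransition ((x - 4) / T) / T) := by
  rw [deriv_profile, profileBump_eq_zero_of_ge hx, profileStep_eq_profileStep_four hx]
  ring

lemma deriv_profile_nonpos (hN : 0 < N) (hT : 0 < T) (hx : 4 ≤ x) :
    deriv (profile N T) x ≤ 0 := by
  rw [deriv_profile_of_four_le hx, neg_nonpos]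
  have := Real.smoothTransition.monotone.deriv_nonneg (x := (x - 4) / T)
  have := profileStep_pos (x := 4) (by norm_num)
  positivity

lemma mem_Ioo_of_deriv_profile_pos (hN : 0 < N) (hT : 0 < T)
    (hx : 0 < deriv (profile N T) x) : x ∈ Ioo 1 4 := by
  have hlt : x < 4 := lt_of_not_ge fun h => hx.not_ge (deriv_profile_nonpos hN hT h)
  refine ⟨lt_of_not_ge fun h => ?_, hlt⟩
  rw [deriv_profile_of_le_four hT hlt.le, profileBump_eq_zero_of_le h, mul_zero] at hx
  exact hx.false

lemma neg_half_le_deriv_profile (hN : 0 < N) (hT : 0 < T)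
    (hK : ∀ x, deriv smoothTransition x ≤ K) (hTK : T = 2 * (N * profileStep 4 * K)) (x : ℝ) :
    -(1 / 2) ≤ deriv (profile N T) x := by
  rcases le_total x 4 with h | h
  · rw [deriv_profile_of_le_four hT h]
    linarith [mul_nonneg hN.le (profileBump_nonneg x)]
  · rw [deriv_profile_of_four_le h, neg_le_neg_iff, div_le_iff₀ hT]
    have := profileStep_pos (x := 4) (by norm_num)
    calc N * profileStep 4 * deriv smoothTransition ((x - 4) / T)
        ≤ N * profileStep 4 * K := by gcongr; exact hK _
      _ = 1 / 2 * T := by rw [hTK]; ring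

lemma deriv_deriv_profile_ne_zero (hN : 0 < N) (hT : 0 < T) (hx : 0 < deriv (profile N T) x)
    (hne : x ≠ 5 / 2) : deriv (deriv (profile N T)) x ≠ 0 := by
  have hmem := mem_Ioo_of_deriv_profile_pos hN hT hx
  have heq : deriv (profile N T) =ᶠ[𝓝 x] fun y => N * profileBump y := by
    filter_upwards [Iio_mem_nhds hmem.2] with y hy using deriv_profile_of_le_four hT (le_of_lt hy)
  rw [heq.deriv_eq, deriv_const_mul _ (contDiff_profileBump.differentiable (by simp) x)]
  exact mul_ne_zero hN.ne' (deriv_profileBump_ne_zero hmem hne)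

lemma eq_or_add_eq_of_deriv_profile_eq {y : ℝ} (hN : 0 < N) (hT : 0 < T)
    (hx : deriv (profile N T) x = 1) (hy : deriv (profile N T) y = 1) : x = y ∨ x + y = 5 := by
  have hmx := mem_Ioo_of_deriv_profile_pos hN hT (hx ▸ one_pos)
  have hmy := mem_Ioo_of_deriv_profile_pos hN hT (hy ▸ one_pos)
  rw [deriv_profile_of_le_four hT hmx.2.le] at hx
  rw [deriv_profile_of_le_four hT hmy.2.le] at hy
  exact eq_or_add_eq_of_profileBump_eq hmx hmy (mul_left_cancel₀ hN.ne' (hx.trans hy.symm))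

end Profile

lemma exists_isProfile {C : ℝ} (hC : 0 < C) : ∃ R σ, IsProfile C R σ := by
  obtain ⟨K, hK, hKle⟩ := exists_deriv_smoothTransition_le
  have h4 : 0 < profileStep 4 := profileStep_pos (by norm_num)
  obtain ⟨N, hN⟩ : ∃ N, N = C * Real.exp 1 := ⟨_, rfl⟩
  have hN₀ : 0 < N := by rw [hN]; positivity
  obtain ⟨T, hTK⟩ : ∃ T, T = 2 * (N * profileStep 4 * K) := ⟨_, rfl⟩
  have hT : 0 < T := by rw [hTK]; positivity
  refine ⟨4 + T, profile N T, ?_⟩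
  constructor
  case four_le => linarith
  case contDiff => exact contDiff_profile
  case eq_zero_of_le => intro x hx; simp [profile, profileStep_eq_zero hx]
  case eq_zero_of_ge =>
    intro x hx
    have : 1 ≤ (x - 4) / T := by rw [le_div_iff₀ hT]; linarith
    rw [profile, Real.smoothTransition.one_of_one_le this, sub_self, mul_zero]
  case le_deriv =>
    intro x hx
    rw [deriv_profile_of_le_four hT (by linarith [hx.2])]
    calc C = N * Real.exp (-1) := by rw [hN, mul_assoc, ← Real.exp_add]; simp
      _ ≤ N * profileBump x := by gcongr; exact exp_neg_one_le_profileBump hx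
  case neg_half_le_deriv => exact neg_half_le_deriv_profile hN₀ hT hKle hTK
  case deriv_nonpos => exact fun x hx => deriv_profile_nonpos hN₀ hT hx
  case pos_of_deriv_pos =>
    intro x hx
    obtain ⟨h1, h4⟩ := mem_Ioo_of_deriv_profile_pos hN₀ hT hx
    rw [profile, Real.smoothTransition.zero_of_nonpos (sub_div_nonpos hT h4.le), sub_zero, mul_one]
    exact mul_pos hN₀ (profileStep_pos h1)
  case deriv_deriv_ne_zero =>
    exact fun x hx hne => deriv_deriv_profile_ne_zero hN₀ hT (hx ▸ one_pos) hne
  case eq_of_lt_two =>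
    intro x y hx hy ex ey
    exact (eq_or_add_eq_of_deriv_profile_eq hN₀ hT ex ey).resolve_right (by linarith)
  case eq_of_three_lt =>
    intro x y hx hy ex ey
    exact (eq_or_add_eq_of_deriv_profile_eq hN₀ hT ex ey).resolve_right (by linarith)

/-! ### The cancelling pair of critical points -/

/-- The space of triples `(s, x, φ)`: the angle along an unknot, the scaled distance to it, and
the angle around it. -/
abbrev P3 := ℝ × ℝ × ℝ

/-- Equality of triples up to periods of the two angles. -/
def ModEq3 (p p' : P3) : Prop :=
  ∃ j l : ℤ, p = (p'.1 + 2 * π * j, p'.2.1, p'.2.2 + 2 * π * l)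

lemma deriv_radial_eq_zero {G : P3 → ℝ} {s x φ a : ℝ}
    (hG : DifferentiableAt ℝ G (s, x, φ)) (hc : fderiv ℝ G (s, x, φ) = 0)
    (h : HasDerivAt (fun t => G (s, t, φ)) a x) : a = 0 := by
  have := hG.hasFDerivAt.comp_hasDerivAt x
    ((hasDerivAt_const x s).prodMk ((hasDerivAt_id x).prodMk (hasDerivAt_const x φ)))
  rw [hc] at this
  exact h.unique this

lemma deriv_angular_eq_zero {G : P3 → ℝ} {s x φ a : ℝ}
    (hG : DifferentiableAt ℝ G (s, x, φ)) (hc : fderiv ℝ G (s, x, φ) = 0)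
    (h : HasDerivAt (fun t => G (s, x, t)) a φ) : a = 0 := by
  have := hG.hasFDerivAt.comp_hasDerivAt φ
    ((hasDerivAt_const φ s).prodMk ((hasDerivAt_const φ x).prodMk (hasDerivAt_id φ)))
  rw [hc] at this
  exact h.unique this

lemma exists_eq_of_cos_eq_neg_one {x : ℝ} (h : Real.cos x = -1) :
    ∃ n : ℤ, x = π + 2 * π * n := by
  have hcos : Real.cos (x - π) = 1 := by rw [Real.cos_sub_pi, h, neg_neg]
  obtain ⟨n, hn⟩ := (Real.cos_eq_one_iff _).1 hcos
  exact ⟨n, by linarith⟩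

lemma cos_eq_neg_one_of_sin_eq_zero {x : ℝ} (h : Real.sin x = 0) (h₁ : Real.cos x ≠ 1) :
    Real.cos x = -1 :=
  ((Real.sin_eq_zero_iff_cos_eq).1 h).resolve_left h₁

lemma sin_eq_zero_of_cos_eq_neg_one {x : ℝ} (h : Real.cos x = -1) : Real.sin x = 0 :=
  (Real.sin_eq_zero_iff_cos_eq).2 (Or.inr h)

/-- The height of the perturbation along the unknot, equal to `0` at `s = 0` and to `1` at
`s = π`. -/
def height (s : ℝ) : ℝ := (1 - Real.cos s) / 2

lemma hasDerivAt_height (s : ℝ) : HasDerivAt height (Real.sin s / 2) s := by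
  refine (((Real.hasDerivAt_cos s).const_sub 1).div_const 2).congr_deriv ?_
  rw [neg_neg]

lemma height_nonneg (s : ℝ) : 0 ≤ height s :=
  div_nonneg (sub_nonneg.2 (Real.cos_le_one s)) zero_le_two

lemma height_le_one (s : ℝ) : height s ≤ 1 := by
  unfold height; linarith [Real.neg_one_le_cos s]

lemma height_of_cos_eq_neg_one {s : ℝ} (h : Real.cos s = -1) : height s = 1 := by
  rw [height, h]; norm_num

lemma contDiff_height : ContDiff ℝ ∞ height :=
  (contDiff_const.sub Real.contDiff_cos).div_const 2

/-- The function `x cos φ + a(s) σ(x)`: the angular function `x cos φ` of a page through the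
unknot, perturbed by a radial profile `σ`. -/
def modelFun (σ : ℝ → ℝ) (p : P3) : ℝ := p.2.1 * Real.cos p.2.2 + height p.1 * σ p.2.1

section modelFun
variable {σ : ℝ → ℝ}

lemma contDiff_modelFun (hσ : ContDiff ℝ ∞ σ) : ContDiff ℝ ∞ (modelFun σ) := by
  have := contDiff_height
  unfold modelFun
  fun_prop

lemma fderiv_modelFun (hσ : Differentiable ℝ σ) (p v : P3) : fderiv ℝ (modelFun σ) p v =
    v.2.1 * Real.cos p.2.2 - p.2.1 * Real.sin p.2.2 * v.2.2 + Real.sin p.1 / 2 * v.1 * σ p.2.1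
      + height p.1 * (deriv σ p.2.1 * v.2.1) := by
  have hs : HasFDerivAt (𝕜 := ℝ) (fun p : P3 => p.1) _ p := hasFDerivAt_fst
  have hx : HasFDerivAt (𝕜 := ℝ) (fun p : P3 => p.2.1) _ p := hasFDerivAt_snd.fst
  have hφ : HasFDerivAt (𝕜 := ℝ) (fun p : P3 => p.2.2) _ p := hasFDerivAt_snd.snd
  have h : HasFDerivAt (modelFun σ) _ p := (hx.mul hφ.cos).add
    (((hasDerivAt_height p.1).comp_hasFDerivAt p hs).mul
      ((hσ p.2.1).hasDerivAt.comp_hasFDerivAt p hx))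
  rw [h.fderiv]
  simp
  ring

lemma fderiv_fderiv_modelFun (hσ : ContDiff ℝ ∞ σ) {p : P3} (hs : Real.cos p.1 = -1)
    (hφ : Real.cos p.2.2 = -1) (v w : P3) :
    fderiv ℝ (fun u => fderiv ℝ (modelFun σ) u v) p w =
      -(σ p.2.1 / 2) * v.1 * w.1 + deriv (deriv σ) p.2.1 * v.2.1 * w.2.1
        + p.2.1 * v.2.2 * w.2.2 := by
  have dσ : Differentiable ℝ σ := hσ.differentiable (by simp)
  have dσ' : Differentiable ℝ (deriv σ) :=
    (contDiff_infty_iff_deriv.1 hσ).2.differentiable (by simp)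
  have es : HasFDerivAt (𝕜 := ℝ) (fun p : P3 => p.1) _ p := hasFDerivAt_fst
  have ex : HasFDerivAt (𝕜 := ℝ) (fun p : P3 => p.2.1) _ p := hasFDerivAt_snd.fst
  have eφ : HasFDerivAt (𝕜 := ℝ) (fun p : P3 => p.2.2) _ p := hasFDerivAt_snd.snd
  have h := (((eφ.cos.const_mul v.2.1).sub ((ex.mul eφ.sin).mul_const v.2.2)).add
    (((es.sin.mul_const (1 / 2)).mul_const v.1).mul
      ((dσ p.2.1).hasDerivAt.comp_hasFDerivAt p ex))).add
    (((hasDerivAt_height p.1).comp_hasFDerivAt p es).mul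
      (((dσ' p.2.1).hasDerivAt.comp_hasFDerivAt p ex).mul_const v.2.1))
  rw [(h.congr_of_eventuallyEq (Eventually.of_forall fun u => ?_)).fderiv]
  · simp [hs, hφ, sin_eq_zero_of_cos_eq_neg_one hs, sin_eq_zero_of_cos_eq_neg_one hφ,
      height_of_cos_eq_neg_one hs]
    ring
  · simp only [fderiv_modelFun dσ, Pi.add_apply, Pi.sub_apply, Pi.mul_apply, Function.comp_apply]
    ring

variable {C R s x φ : ℝ}

lemma IsProfile.of_fderiv_modelFun_eq_zero (hσ : IsProfile C R σ) (hx : 0 < x)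
    (hc : fderiv ℝ (modelFun σ) (s, x, φ) = 0) :
    Real.cos s = -1 ∧ deriv σ x = 1 ∧ Real.cos φ = -1 := by
  have h := fderiv_modelFun (hσ.contDiff.differentiable (by simp)) (s, x, φ)
  have hds : Real.sin s = 0 ∨ σ x = 0 := by simpa [hc] using h (1, 0, 0)
  have hdx : Real.cos φ + height s * deriv σ x = 0 := by simpa [hc] using (h (0, 1, 0)).symm
  have hdφ : Real.sin φ = 0 := by simpa [hc, hx.ne'] using h (0, 0, 1)
  have h₀ := height_nonneg s
  have h₁ := height_le_one s
  have hcφ : Real.cos φ = -1 := cos_eq_neg_one_of_sin_eq_zero hdφ fun hcos => by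
    nlinarith [hσ.neg_half_le_deriv x]
  rw [hcφ] at hdx
  have hpos : 0 < deriv σ x := by
    by_contra! hneg
    nlinarith
  have hcs : Real.cos s = -1 := cos_eq_neg_one_of_sin_eq_zero
    (hds.resolve_right (hσ.pos_of_deriv_pos x hpos).ne') fun hcos => by simp [height, hcos] at hdx
  rw [height_of_cos_eq_neg_one hcs] at hdx
  exact ⟨hcs, by linarith, hcφ⟩

lemma IsProfile.nondegAt_modelFun (hσ : IsProfile C R σ) (hx : 0 < x) (hx' : x ≠ 5 / 2)
    (hs : Real.cos s = -1) (hdx : deriv σ x = 1) (hφ : Real.cos φ = -1) :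
    NondegAt (modelFun σ) (s, x, φ) := by
  intro v hv
  refine ⟨(-v.1, deriv (deriv σ) x * v.2.1, v.2.2), ne_of_gt ?_⟩
  have hσx : 0 < σ x := hσ.pos_of_deriv_pos x (by rw [hdx]; exact one_pos)
  have hσ'' := hσ.deriv_deriv_ne_zero x hdx hx'
  rw [fderiv_fderiv_modelFun hσ.contDiff hs hφ, show
    -(σ x / 2) * v.1 * -v.1 + deriv (deriv σ) x * v.2.1 * (deriv (deriv σ) x * v.2.1)
      + x * v.2.2 * v.2.2 =
    σ x / 2 * v.1 ^ 2 + (deriv (deriv σ) x * v.2.1) ^ 2 + x * v.2.2 ^ 2 by ring]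
  by_contra! hle
  have h₁ : 0 ≤ σ x / 2 * v.1 ^ 2 := by positivity
  have h₂ : 0 ≤ (deriv (deriv σ) x * v.2.1) ^ 2 := sq_nonneg _
  have h₃ : 0 ≤ x * v.2.2 ^ 2 := by positivity
  have e₁ : v.1 = 0 := by
    simpa [hσx.ne'] using (le_antisymm (by linarith) h₁ : σ x / 2 * v.1 ^ 2 = 0)
  have e₂ : v.2.1 = 0 := by
    simpa [hσ''] using (le_antisymm (by linarith) h₂ : (deriv (deriv σ) x * v.2.1) ^ 2 = 0)
  have e₃ : v.2.2 = 0 := by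
    simpa [hx.ne'] using (le_antisymm (by linarith) h₃ : x * v.2.2 ^ 2 = 0)
  exact hv (Prod.ext e₁ (Prod.ext e₂ e₃))

end modelFun

/-- The shear turning the angle around the unknot by `-ϑ(s)`. -/
def shear (ϑ : ℝ → ℝ) (p : P3) : P3 := (p.1, p.2.1, p.2.2 - ϑ p.1)

section shear
variable {ϑ : ℝ → ℝ}

lemma contDiff_shear (hϑ : ContDiff ℝ ∞ ϑ) : ContDiff ℝ ∞ (shear ϑ) := by
  unfold shear
  fun_prop

lemma shear_neg_shear (p : P3) : shear (-ϑ) (shear ϑ p) = p := by simp [shear]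

lemma shear_shear_neg (p : P3) : shear ϑ (shear (-ϑ) p) = p := by simp [shear]

variable {g : P3 → ℝ} {p : P3}

lemma fderiv_shear_eq_zero (hϑ : ContDiff ℝ ∞ ϑ) (hg : ContDiff ℝ ∞ g)
    (hc : fderiv ℝ (fun p => g (shear ϑ p)) p = 0) : fderiv ℝ g (shear ϑ p) = 0 := by
  have hleft : DifferentiableAt ℝ (fun p => g (shear ϑ p)) (shear (-ϑ) (shear ϑ p)) :=
    (hg.comp (contDiff_shear hϑ)).differentiable (by simp) _
  have hchain := fderiv_comp (shear ϑ p) hleft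
    ((contDiff_shear hϑ.neg).differentiable (by simp) _)
  rwa [shear_neg_shear, hc, ContinuousLinearMap.zero_comp,
    show (fun p => g (shear ϑ p)) ∘ shear (-ϑ) = g from
      funext fun p => congrArg g (shear_shear_neg p)] at hchain

lemma NondegAt.comp_shear (h : NondegAt g (shear ϑ p)) (hϑ : ContDiff ℝ ∞ ϑ)
    (hg : ContDiff ℝ ∞ g) (hc : fderiv ℝ (fun p => g (shear ϑ p)) p = 0) :
    NondegAt (fun p => g (shear ϑ p)) p := by
  have h2 : (2 : WithTop ℕ∞) ≤ ∞ := WithTop.coe_le_coe.2 le_top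
  have hϑ' := contDiff_shear hϑ.neg
  have := NondegAt.of_comp (g := fun p => g (shear ϑ p)) (ρ := shear (-ϑ)) (κ := shear ϑ)
    (u₀ := shear ϑ p) (by simpa only [shear_shear_neg] using h)
    ((hg.comp (contDiff_shear hϑ)).contDiffAt.of_le h2) (by rwa [shear_neg_shear])
    (hϑ'.contDiffAt.of_le h2) ((contDiff_shear hϑ).contDiffAt.of_le h2)
    (Eventually.of_forall shear_shear_neg) (Eventually.of_forall shear_neg_shear)
  rwa [shear_neg_shear] at this

end shear

lemma IsProfile.nondegAt_modelFun_shear {σ ϑ : ℝ → ℝ} {C R s x φ : ℝ} (hσ : IsProfile C R σ)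
    (hϑ : ContDiff ℝ ∞ ϑ) (hx : 0 < x) (hx' : x ≠ 5 / 2)
    (hc : fderiv ℝ (fun p => modelFun σ (shear ϑ p)) (s, x, φ) = 0) :
    NondegAt (fun p => modelFun σ (shear ϑ p)) (s, x, φ) := by
  have hg := contDiff_modelFun hσ.contDiff
  obtain ⟨hs, hdx, hφ⟩ := hσ.of_fderiv_modelFun_eq_zero hx (fderiv_shear_eq_zero hϑ hg hc)
  exact (hσ.nondegAt_modelFun hx hx' hs hdx hφ).comp_shear hϑ hg hc

lemma IsProfile.of_fderiv_modelFun_shear_eq_zero {σ ϑ : ℝ → ℝ} {C R s x φ : ℝ}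
    (hσ : IsProfile C R σ) (hϑ : ContDiff ℝ ∞ ϑ) (hx : 0 < x)
    (hc : fderiv ℝ (fun p => modelFun σ (shear ϑ p)) (s, x, φ) = 0) :
    Real.cos s = -1 ∧ deriv σ x = 1 ∧ Real.cos (φ - ϑ s) = -1 :=
  hσ.of_fderiv_modelFun_eq_zero hx (fderiv_shear_eq_zero hϑ (contDiff_modelFun hσ.contDiff) hc)

/-! ### Interpolating between the core and a page -/

/-- A `2π`-periodic smooth function which is congruent to `s` modulo `2π` where `1 / 2 < cos s` and
vanishes where `cos s < 1 / 4`; subtracting it from `s` collapses a neighbourhood of `s ≡ 0`. -/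
def angleCutoff (s : ℝ) : ℝ := smoothTransition (4 * Real.cos s - 1) * Real.arcsin (Real.sin s)

lemma contDiff_angleCutoff : ContDiff ℝ ∞ angleCutoff := by
  refine contDiff_iff_contDiffAt.2 fun s => ?_
  rcases lt_or_ge 0 (Real.cos s) with h | h
  · have hsq := Real.sin_sq_add_cos_sq s
    have h₁ : Real.sin s ≠ 1 := fun h' => by rw [h'] at hsq; nlinarith
    have h₂ : Real.sin s ≠ -1 := fun h' => by rw [h'] at hsq; nlinarith
    exact (Real.smoothTransition.contDiffAt.comp s
      (by fun_prop : ContDiffAt ℝ ∞ (fun s => 4 * Real.cos s - 1) s)).mul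
      ((Real.contDiffAt_arcsin h₂ h₁).comp s Real.contDiff_sin.contDiffAt)
  · have hzero : angleCutoff =ᶠ[𝓝 s] fun _ => 0 := by
      filter_upwards [Real.continuous_cos.continuousAt.eventually
        (Iio_mem_nhds (show Real.cos s < 1 / 4 by linarith))] with t ht
      rw [angleCutoff, Real.smoothTransition.zero_of_nonpos (by linarith [ht]), zero_mul]
    exact contDiffAt_const.congr_of_eventuallyEq hzero

lemma angleCutoff_periodic : Function.Periodic angleCutoff (2 * π) := fun s => by
  rw [angleCutoff, angleCutoff, Real.cos_add_two_pi, Real.sin_add_two_pi]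

lemma exists_angleCutoff_eq {s : ℝ} (h : 1 / 2 < Real.cos s) :
    ∃ l : ℤ, s - angleCutoff s = 2 * π * l := by
  obtain ⟨l, hl, -⟩ := existsUnique_add_zsmul_mem_Ico Real.two_pi_pos s (-π)
  obtain ⟨t, ht⟩ : ∃ t, t = s + l * (2 * π) := ⟨_, rfl⟩
  rw [zsmul_eq_mul, ← ht] at hl
  have hc : Real.cos t = Real.cos s := ht ▸ Real.cos_add_int_mul_two_pi s l
  have hs : Real.sin t = Real.sin s := ht ▸ Real.sin_add_int_mul_two_pi s l
  have h₁ : -(π / 2) < t := by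
    by_contra! hle
    have := Real.cos_nonpos_of_pi_div_two_le_of_le (x := -t) (by linarith)
      (by linarith [hl.1, Real.pi_pos])
    rw [Real.cos_neg, hc] at this
    linarith
  have h₂ : t < π / 2 := by
    by_contra! hle
    have := Real.cos_nonpos_of_pi_div_two_le_of_le hle (by linarith [hl.2, Real.pi_pos])
    rw [hc] at this
    linarith
  refine ⟨-l, ?_⟩
  rw [angleCutoff, Real.smoothTransition.one_of_one_le (by linarith), one_mul, ← hs,
    Real.arcsin_sin h₁.le h₂.le, ht]
  push_cast
  ring

lemma apply_add_int_mul {α : ℝ → ℝ} {k : ℤ} (hα : ∀ s, α (s + 2 * π) = α s + 2 * π * k)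
    (s : ℝ) (l : ℤ) : α (s + 2 * π * l) = α s + 2 * π * (l * k : ℤ) := by
  have hper : Function.Periodic (fun s => α s - k * s) (2 * π) := fun s => by
    simp only [hα]; ring
  have := hper.int_mul l s
  beta_reduce at this
  rw [mul_comm (2 * π) (l : ℝ)]
  push_cast
  linear_combination this

/-- The point of the plane with polar coordinates `(ε x, φ)`. -/
def scaledPolar (ε x φ : ℝ) : ℂ := ((ε * x : ℝ) : ℂ) * Complex.exp (φ * Complex.I)

section scaledPolar
variable (ε x φ : ℝ)

lemma norm_scaledPolar : ‖scaledPolar ε x φ‖ = |ε * x| := by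
  simp only [scaledPolar, norm_mul, Complex.norm_exp_ofReal_mul_I, mul_one, Complex.norm_real,
    Real.norm_eq_abs, abs_mul]

lemma scaledPolar_add_two_pi : scaledPolar ε x (φ + 2 * π) = scaledPolar ε x φ := by
  rw [scaledPolar, scaledPolar]
  push_cast
  rw [add_mul, Complex.exp_periodic]

lemma contDiff_scaledPolar : ContDiff ℝ ∞ fun p : ℝ × ℝ => scaledPolar ε p.1 p.2 := by
  have h : ContDiff ℝ ∞ fun x : ℝ => (x : ℂ) := Complex.ofRealCLM.contDiff
  exact (h.comp (contDiff_const.mul contDiff_fst)).mul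
    ((h.comp contDiff_snd).mul contDiff_const).cexp

lemma hasDerivAt_scaledPolar_radial :
    HasDerivAt (fun t => scaledPolar ε t φ) (ε * Complex.exp (φ * Complex.I)) x := by
  have := ((hasDerivAt_id x).const_mul ε).ofReal_comp
  simp only [mul_one] at this
  exact this.mul_const _

lemma hasDerivAt_scaledPolar_angular :
    HasDerivAt (fun t => scaledPolar ε x t) (scaledPolar ε x φ * Complex.I) φ := by
  have := ((hasDerivAt_id φ).ofReal_comp.mul_const Complex.I).cexp.const_mul ((ε * x : ℝ) : ℂ)
  simpa [scaledPolar, mul_assoc] using this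

end scaledPolar

lemma hasDerivAt_smoothTransition_sub (c x : ℝ) :
    HasDerivAt (fun x => smoothTransition (x - c)) (deriv smoothTransition (x - c)) x :=
  (differentiable_smoothTransition (x - c)).hasDerivAt.comp_sub_const x c

lemma deriv_smoothTransition_nonneg (x : ℝ) : 0 ≤ deriv smoothTransition x :=
  Real.smoothTransition.monotone.deriv_nonneg

/-- The data from which a page is modified near an unknot. In coordinates `(s, w)` around the
unknot the page function is a positive multiple of `m(s) Re (w e^{-iα(s)}) + q(s, w)`, with phase
`α` of winding number `k` and `q` of second order in `w`. The modification uses the radial profile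
`σ` in the scaled radius `x = ‖w‖ / ε`, and `η`, `K` control the error terms. -/
structure PageData where
  m : ℝ → ℝ
  α : ℝ → ℝ
  k : ℤ
  q : ℝ × ℂ → ℝ
  σ : ℝ → ℝ
  R : ℝ
  ε : ℝ
  η : ℝ
  K : ℝ
  contDiff_m : ContDiff ℝ ∞ m
  one_le_m : ∀ s, 1 ≤ m s
  m_periodic : ∀ s, m (s + 2 * π) = m s
  contDiff_α : ContDiff ℝ ∞ α
  α_add : ∀ s, α (s + 2 * π) = α s + 2 * π * k
  deriv_le : ∀ x, deriv smoothTransition x ≤ K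
  profile : IsProfile (4 * (2 + 6 * K)) R σ
  ε_pos : 0 < ε
  η_mul_lt : η * (2 + K * (R + 4)) < 1
  q_periodic : ∀ s w, q (s + 2 * π, w) = q (s, w)
  contDiffAt_q : ∀ s w, ‖w‖ < ε * (R + 4) → ContDiffAt ℝ ∞ q (s, w)
  abs_q_le : ∀ s w, ‖w‖ < ε * (R + 4) → |q (s, w)| ≤ η * ‖w‖
  abs_fderiv_q_le : ∀ s w v, ‖w‖ < ε * (R + 4) → |fderiv ℝ q (s, w) (0, v)| ≤ η * ‖v‖

namespace PageData
variable (D : PageData)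

/-- The phase of the page with a neighbourhood of `s ≡ 0` collapsed. -/
def κ (s : ℝ) : ℝ := D.α (s - angleCutoff s)

lemma contDiff_κ : ContDiff ℝ ∞ D.κ := D.contDiff_α.comp (contDiff_id.sub contDiff_angleCutoff)

lemma κ_add (s : ℝ) : D.κ (s + 2 * π) = D.κ s + 2 * π * D.k := by
  rw [κ, angleCutoff_periodic, add_sub_right_comm, D.α_add, κ]

lemma exists_κ_eq {s : ℝ} (h : 1 / 2 < Real.cos s) : ∃ l : ℤ, D.κ s = D.α 0 + 2 * π * l := by
  obtain ⟨l, hl⟩ := exists_angleCutoff_eq h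
  exact ⟨l * D.k, by rw [κ, hl, ← apply_add_int_mul D.α_add, zero_add]⟩

/-- The interpolating function: `x cos (φ - α(0))` for `x ≤ 1`, the rescaled page function for
`R + 3 ≤ x`. In between, the phase changes first from `α(0)` to `κ` and then to `α`, at the cost of
the perturbation by the profile. -/
def interp (p : P3) : ℝ :=
  p.2.1 * (1 - smoothTransition (p.2.1 - 2)) * Real.cos (p.2.2 - D.α 0)
    + smoothTransition (p.2.1 - 2) * (p.2.1 * (1 + (D.m p.1 - 1) * smoothTransition (p.2.1 - D.R)))
      * Real.cos (p.2.2 - D.κ p.1 - smoothTransition (p.2.1 - D.R) * (D.α p.1 - D.κ p.1))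
    + height p.1 * D.σ p.2.1
    + smoothTransition (p.2.1 - D.R - 2) * (D.q (p.1, scaledPolar D.ε p.2.1 p.2.2) / D.ε)

lemma norm_scaledPolar_lt {x : ℝ} (hx : |x| < D.R + 4) (φ : ℝ) :
    ‖scaledPolar D.ε x φ‖ < D.ε * (D.R + 4) := by
  rw [norm_scaledPolar, abs_mul, abs_of_pos D.ε_pos]
  exact mul_lt_mul_of_pos_left hx D.ε_pos

lemma contDiffAt_interp {s x φ : ℝ} (hx : |x| < D.R + 4) :
    ContDiffAt ℝ ∞ D.interp (s, x, φ) := by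
  have : ContDiff ℝ ∞ smoothTransition := Real.smoothTransition.contDiff
  have hκ := D.contDiff_κ
  have hα := D.contDiff_α
  have hm := D.contDiff_m
  have hσ := D.profile.contDiff
  have hheight := contDiff_height
  have hpol : ContDiff ℝ ∞ fun p : P3 => (p.1, scaledPolar D.ε p.2.1 p.2.2) :=
    contDiff_fst.prodMk ((contDiff_scaledPolar D.ε).comp contDiff_snd)
  have hq : ContDiffAt ℝ ∞ (fun p : P3 => D.q (p.1, scaledPolar D.ε p.2.1 p.2.2)) (s, x, φ) :=
    ContDiffAt.comp (g := D.q) (s, x, φ) (D.contDiffAt_q s _ (D.norm_scaledPolar_lt hx φ))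
      hpol.contDiffAt
  refine ContDiffAt.add ?_ (ContDiffAt.mul ?_ (hq.div_const D.ε)) <;>
  · apply ContDiff.contDiffAt
    fun_prop

lemma interp_periodic_fst (s x φ : ℝ) : D.interp (s + 2 * π, x, φ) = D.interp (s, x, φ) := by
  have h : φ - (D.κ s + 2 * π * D.k) - smoothTransition (x - D.R) *
      (D.α s + 2 * π * D.k - (D.κ s + 2 * π * D.k)) =
      φ - D.κ s - smoothTransition (x - D.R) * (D.α s - D.κ s) - D.k * (2 * π) := by ring
  simp only [interp, height, D.m_periodic, D.α_add, D.κ_add, D.q_periodic, Real.cos_add_two_pi, h,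
    Real.cos_sub_int_mul_two_pi]

lemma interp_periodic_snd (s x φ : ℝ) : D.interp (s, x, φ + 2 * π) = D.interp (s, x, φ) := by
  simp only [interp, scaledPolar_add_two_pi, add_sub_right_comm, Real.cos_add_two_pi]

section LocalForms
variable {s x φ : ℝ}

lemma interp_of_le_one (hx : x ≤ 1) : D.interp (s, x, φ) = x * Real.cos (φ - D.α 0) := by
  have hR := D.profile.four_le
  simp only [interp, D.profile.eq_zero_of_le x hx,
    Real.smoothTransition.zero_of_nonpos (show x - 2 ≤ 0 by linarith),
    Real.smoothTransition.zero_of_nonpos (show x - D.R - 2 ≤ 0 by linarith)]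
  ring

lemma interp_of_le (hx : x ≤ D.R) : D.interp (s, x, φ) =
    x * (1 - smoothTransition (x - 2)) * Real.cos (φ - D.α 0)
      + smoothTransition (x - 2) * x * Real.cos (φ - D.κ s) + height s * D.σ x := by
  simp only [interp, Real.smoothTransition.zero_of_nonpos (show x - D.R ≤ 0 by linarith),
    Real.smoothTransition.zero_of_nonpos (show x - D.R - 2 ≤ 0 by linarith)]
  ring_nf

lemma interp_of_lt_two (hx : x < 2) :
    D.interp (s, x, φ) = modelFun D.σ (shear (fun _ => D.α 0) (s, x, φ)) := by
  rw [D.interp_of_le (by linarith [D.profile.four_le]),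
    Real.smoothTransition.zero_of_nonpos (by linarith), modelFun, shear]
  ring

lemma interp_of_lt_four (hx : x < 4) (hs : 1 / 2 < Real.cos s) :
    D.interp (s, x, φ) = modelFun D.σ (shear (fun _ => D.α 0) (s, x, φ)) := by
  obtain ⟨l, hl⟩ := D.exists_κ_eq hs
  rw [D.interp_of_le (by linarith [D.profile.four_le]), hl, ← sub_sub, mul_comm (2 * π),
    Real.cos_sub_int_mul_two_pi, modelFun, shear]
  ring

lemma interp_of_three_le (hx : 3 ≤ x) (hx' : x ≤ D.R + 2) : D.interp (s, x, φ) =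
    (x * (1 + (D.m s - 1) * smoothTransition (x - D.R)))
      * Real.cos (φ - D.κ s - smoothTransition (x - D.R) * (D.α s - D.κ s))
      + height s * D.σ x := by
  simp only [interp, Real.smoothTransition.one_of_one_le (show 1 ≤ x - 2 by linarith),
    Real.smoothTransition.zero_of_nonpos (show x - D.R - 2 ≤ 0 by linarith)]
  ring_nf

lemma interp_of_mem_Icc (hx : 3 ≤ x) (hx' : x ≤ D.R) :
    D.interp (s, x, φ) = modelFun D.σ (shear D.κ (s, x, φ)) := by
  rw [D.interp_of_three_le hx (by linarith),
    Real.smoothTransition.zero_of_nonpos (by linarith), modelFun, shear]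
  ring_nf

lemma interp_of_add_one_le (hx : D.R + 1 ≤ x) : D.interp (s, x, φ) =
    x * D.m s * Real.cos (φ - D.α s)
      + smoothTransition (x - (D.R + 2)) * (D.q (s, scaledPolar D.ε x φ) / D.ε) := by
  have hR := D.profile.four_le
  simp only [interp, D.profile.eq_zero_of_ge x (by linarith), ← sub_sub,
    Real.smoothTransition.one_of_one_le (show 1 ≤ x - 2 by linarith),
    Real.smoothTransition.one_of_one_le (show 1 ≤ x - D.R by linarith)]
  ring_nf

end LocalForms
end PageData

/-! ### Critical points of the interpolation -/

lemma le_abs_add_abs_of_mul_cos_of_mul_sin {m a b y : ℝ} (ha : m * Real.cos y = a)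
    (hb : m * Real.sin y = b) : m ≤ |a| + |b| := by
  have hm : m = Real.cos y * a + Real.sin y * b := by
    linear_combination (-m) * Real.sin_sq_add_cos_sq y + Real.cos y * ha + Real.sin y * hb
  rw [hm]
  refine add_le_add (le_trans (le_abs_self _) ?_) (le_trans (le_abs_self _) ?_) <;> rw [abs_mul]
  · exact mul_le_of_le_one_left (abs_nonneg a) (Real.abs_cos_le_one y)
  · exact mul_le_of_le_one_left (abs_nonneg b) (Real.abs_sin_le_one y)

lemma exists_forall_eq {p : ℝ → Prop} (h : ∀ x y, p x → p y → x = y) : ∃ a, ∀ x, p x → x = a := by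
  by_cases hp : ∃ a, p a
  · exact hp.imp fun a ha x hx => h x a hx ha
  · exact ⟨0, fun x hx => absurd ⟨x, hx⟩ hp⟩

namespace PageData
variable (D : PageData) {s x φ : ℝ}

lemma K_nonneg : 0 ≤ D.K := (deriv_smoothTransition_nonneg 0).trans (D.deriv_le 0)

lemma hasDerivAt_σ (x : ℝ) : HasDerivAt D.σ (deriv D.σ x) x :=
  (D.profile.contDiff.differentiable (by simp) x).hasDerivAt

lemma differentiableAt_interp (hx : 0 < x) (hxR : x < D.R + 4) :
    DifferentiableAt ℝ D.interp (s, x, φ) :=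
  (D.contDiffAt_interp (by rwa [abs_of_pos hx])).differentiableAt (by simp)

-- In this range the slope of `σ` beats all the other radial derivatives.
lemma fderiv_interp_ne_zero_of_mem_Icc (h₂ : 2 ≤ x) (h₃ : x ≤ 3) (hs : Real.cos s ≤ 1 / 2) :
    fderiv ℝ D.interp (s, x, φ) ≠ 0 := fun hc => by
  have hR := D.profile.four_le
  have hform : (fun t => D.interp (s, t, φ)) =ᶠ[𝓝 x] fun t =>
      t * (1 - smoothTransition (t - 2)) * Real.cos (φ - D.α 0)
        + smoothTransition (t - 2) * t * Real.cos (φ - D.κ s) + height s * D.σ t := by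
    filter_upwards [Iio_mem_nhds (show x < D.R by linarith)] with t ht using D.interp_of_le ht.le
  have hS := hasDerivAt_smoothTransition_sub 2 x
  have hderiv := ((((hasDerivAt_id x).mul (hS.const_sub 1)).mul_const (Real.cos (φ - D.α 0))).add
    ((hS.mul (hasDerivAt_id x)).mul_const (Real.cos (φ - D.κ s)))).add
      ((D.hasDerivAt_σ x).const_mul (height s))
  have hzero := deriv_radial_eq_zero (D.differentiableAt_interp (by linarith) (by linarith)) hc
    (hderiv.congr_of_eventuallyEq hform)
  simp only [id] at hzero
  have hS₀ := Real.smoothTransition.nonneg (x - 2)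
  have hS₁ := Real.smoothTransition.le_one (x - 2)
  have hS'₀ := deriv_smoothTransition_nonneg (x - 2)
  have hS'₁ := D.deriv_le (x - 2)
  generalize smoothTransition (x - 2) = S at hzero hS₀ hS₁
  generalize deriv smoothTransition (x - 2) = S' at hzero hS'₀ hS'₁
  have hc₁ := Real.cos_le_one (φ - D.α 0)
  have hc₂ := Real.neg_one_le_cos (φ - D.α 0)
  have hc₃ := Real.cos_le_one (φ - D.κ s)
  have hc₄ := Real.neg_one_le_cos (φ - D.κ s)
  have hheight : 1 / 4 ≤ height s := by unfold height; linarith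
  have hslope : 2 + 6 * D.K ≤ height s * deriv D.σ x := by
    nlinarith [D.profile.le_deriv x ⟨h₂, h₃⟩, D.K_nonneg]
  have hconvex : -1 ≤ (1 - S) * Real.cos (φ - D.α 0) + S * Real.cos (φ - D.κ s) := by nlinarith
  have hS'x₀ : 0 ≤ S' * x := mul_nonneg hS'₀ (by linarith)
  have hS'x₁ : S' * x ≤ 3 * D.K := by nlinarith
  have hdiff : -(6 * D.K) ≤ S' * x * (Real.cos (φ - D.κ s) - Real.cos (φ - D.α 0)) := by nlinarith
  nlinarith

lemma fderiv_interp_ne_zero_of_four_le (h₄ : 4 ≤ x) (hR : x < D.R + 2) :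
    fderiv ℝ D.interp (s, x, φ) ≠ 0 := fun hc => by
  have hx : 0 < x := by linarith
  have hdiff := D.differentiableAt_interp (s := s) (φ := φ) hx (by linarith)
  have hform : (fun t => D.interp (s, t, φ)) =ᶠ[𝓝 x] fun t =>
      (t * (1 + (D.m s - 1) * smoothTransition (t - D.R)))
        * Real.cos (φ - D.κ s - smoothTransition (t - D.R) * (D.α s - D.κ s))
        + height s * D.σ t := by
    filter_upwards [Ioo_mem_nhds (show 3 < x by linarith) hR] with t ht
      using D.interp_of_three_le ht.1.le ht.2.le
  have hform' : (fun t => D.interp (s, x, t)) = _ :=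
    funext fun t => D.interp_of_three_le (φ := t) (by linarith) hR.le
  have hS := hasDerivAt_smoothTransition_sub D.R x
  have hrad := deriv_radial_eq_zero hdiff hc <| HasDerivAt.congr_of_eventuallyEq
    (((hasDerivAt_id x).mul ((hS.const_mul (D.m s - 1)).const_add 1)).mul
      ((hS.mul_const (D.α s - D.κ s)).const_sub (φ - D.κ s)).cos |>.add
        ((D.hasDerivAt_σ x).const_mul (height s))) hform
  have hang := deriv_angular_eq_zero hdiff hc <| HasDerivAt.congr_of_eventuallyEq
    (((((hasDerivAt_id φ).sub_const _).sub_const _).cos.const_mul _).add_const _) (.of_eq hform')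
  simp only [id, Pi.mul_apply, mul_one] at hrad hang
  have hS₀ := Real.smoothTransition.nonneg (x - D.R)
  have hS'₀ := deriv_smoothTransition_nonneg (x - D.R)
  have hm : 0 ≤ D.m s - 1 := sub_nonneg.2 (D.one_le_m s)
  have hfactor : 1 ≤ 1 + (D.m s - 1) * smoothTransition (x - D.R) := by nlinarith
  generalize φ - D.κ s - smoothTransition (x - D.R) * (D.α s - D.κ s) = y at hrad hang
  have hsin : Real.sin y = 0 := by simpa [hx.ne', (one_pos.trans_le hfactor).ne'] using hang
  have hgrowth : 0 ≤ x * ((D.m s - 1) * deriv smoothTransition (x - D.R)) := by positivity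
  have hσ₀ : height s * deriv D.σ x ≤ 0 :=
    mul_nonpos_of_nonneg_of_nonpos (height_nonneg s) (D.profile.deriv_nonpos x h₄)
  have hσ₁ : -(1 / 2) ≤ height s * deriv D.σ x := by
    nlinarith [height_nonneg s, height_le_one s, D.profile.neg_half_le_deriv x]
  rw [hsin] at hrad
  rcases Real.sin_eq_zero_iff_cos_eq.1 hsin with h | h <;> rw [h] at hrad <;> nlinarith

section Remainder

lemma norm_scaledPolar_lt_of_pos (hx : 0 < x) (hxR : x < D.R + 4) (φ : ℝ) :
    ‖scaledPolar D.ε x φ‖ < D.ε * (D.R + 4) := D.norm_scaledPolar_lt (by rwa [abs_of_pos hx]) φ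

lemma abs_q_div_le (hx : 0 < x) (hxR : x < D.R + 4) :
    |D.q (s, scaledPolar D.ε x φ) / D.ε| ≤ D.η * x := by
  have h := D.abs_q_le s _ (D.norm_scaledPolar_lt_of_pos hx hxR φ)
  rw [norm_scaledPolar, abs_of_pos (mul_pos D.ε_pos hx)] at h
  rw [abs_div, abs_of_pos D.ε_pos, div_le_iff₀ D.ε_pos]
  linarith

lemma exists_hasDerivAt_q_div {w : ℝ → ℂ} {t : ℝ} {v : ℂ} (hw : HasDerivAt w v t)
    (ht : ‖w t‖ < D.ε * (D.R + 4)) :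
    ∃ a, HasDerivAt (fun t => D.q (s, w t) / D.ε) a t ∧ |a| ≤ D.η * ‖v‖ / D.ε := by
  have hq := ((D.contDiffAt_q s _ ht).differentiableAt (by simp)).hasFDerivAt
  refine ⟨_, (hq.comp_hasDerivAt t ((hasDerivAt_const t s).prodMk hw)).div_const D.ε, ?_⟩
  rw [abs_div, abs_of_pos D.ε_pos]
  exact div_le_div_of_nonneg_right (D.abs_fderiv_q_le s _ v ht) D.ε_pos.le

lemma exists_hasDerivAt_q_div_radial (hx : 0 < x) (hxR : x < D.R + 4) :
    ∃ a, HasDerivAt (fun t => D.q (s, scaledPolar D.ε t φ) / D.ε) a x ∧ |a| ≤ D.η := by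
  convert D.exists_hasDerivAt_q_div (hasDerivAt_scaledPolar_radial D.ε x φ)
    (D.norm_scaledPolar_lt_of_pos hx hxR φ) using 4
  rw [norm_mul, Complex.norm_exp_ofReal_mul_I, Complex.norm_real, Real.norm_eq_abs,
    abs_of_pos D.ε_pos, mul_one, mul_div_cancel_right₀ _ D.ε_pos.ne']

lemma exists_hasDerivAt_q_div_angular (hx : 0 < x) (hxR : x < D.R + 4) :
    ∃ a, HasDerivAt (fun t => D.q (s, scaledPolar D.ε x t) / D.ε) a φ ∧ |a| ≤ D.η * x := by
  convert D.exists_hasDerivAt_q_div (hasDerivAt_scaledPolar_angular D.ε x φ)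
    (D.norm_scaledPolar_lt_of_pos hx hxR φ) using 4
  rw [norm_mul, Complex.norm_I, mul_one, norm_scaledPolar, abs_of_pos (mul_pos D.ε_pos hx),
    mul_left_comm, mul_div_cancel_left₀ _ D.ε_pos.ne']

end Remainder

-- Here the page function has gradient of norm `m ≥ 1`, which the remainder `q` cannot cancel.
lemma fderiv_interp_ne_zero_of_add_one_lt (h₁ : D.R + 1 < x) (hR : x < D.R + 4) :
    fderiv ℝ D.interp (s, x, φ) ≠ 0 := fun hc => by
  have hx : 0 < x := by linarith [D.profile.four_le]
  have hdiff := D.differentiableAt_interp (s := s) (φ := φ) hx hR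
  obtain ⟨a, ha, haη⟩ := D.exists_hasDerivAt_q_div_radial (s := s) (φ := φ) hx hR
  obtain ⟨b, hb, hbη⟩ := D.exists_hasDerivAt_q_div_angular (s := s) (φ := φ) hx hR
  have hq := D.abs_q_div_le (s := s) (φ := φ) hx hR
  have hform : (fun t => D.interp (s, t, φ)) =ᶠ[𝓝 x] fun t => t * D.m s * Real.cos (φ - D.α s)
      + smoothTransition (t - (D.R + 2)) * (D.q (s, scaledPolar D.ε t φ) / D.ε) := by
    filter_upwards [Ioi_mem_nhds h₁] with t ht using D.interp_of_add_one_le (le_of_lt ht)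
  have hform' : (fun t => D.interp (s, x, t)) = _ :=
    funext fun t => D.interp_of_add_one_le (φ := t) h₁.le
  have hrad := deriv_radial_eq_zero hdiff hc <| HasDerivAt.congr_of_eventuallyEq
    ((((hasDerivAt_id x).mul_const _).mul_const _).add
      ((hasDerivAt_smoothTransition_sub (D.R + 2) x).mul ha)) hform
  have hang := deriv_angular_eq_zero hdiff hc <| HasDerivAt.congr_of_eventuallyEq
    ((((hasDerivAt_id φ).sub_const _).cos.const_mul _).add (hb.const_mul _)) (.of_eq hform')
  simp only [id, one_mul, mul_one] at hrad hang
  have hS₀ := Real.smoothTransition.nonneg (x - (D.R + 2))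
  have hS₁ := Real.smoothTransition.le_one (x - (D.R + 2))
  have hS'₀ := deriv_smoothTransition_nonneg (x - (D.R + 2))
  have hS'₁ := D.deriv_le (x - (D.R + 2))
  generalize smoothTransition (x - (D.R + 2)) = S at hrad hang hS₀ hS₁
  generalize deriv smoothTransition (x - (D.R + 2)) = S' at hrad hS'₀ hS'₁
  generalize D.q (s, scaledPolar D.ε x φ) / D.ε = Q at hrad hq
  have hη : 0 ≤ D.η := (abs_nonneg a).trans haη
  have hrad' : |-(S' * Q + S * a)| ≤ D.K * (D.η * (D.R + 4)) + D.η := by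
    rw [abs_neg]
    refine (abs_add_le _ _).trans (add_le_add ?_ ?_) <;> rw [abs_mul, abs_of_nonneg ‹_›]
    · exact mul_le_mul hS'₁ (hq.trans (by gcongr)) (abs_nonneg Q) D.K_nonneg
    · exact (mul_le_of_le_one_left (abs_nonneg a) hS₁).trans haη
  have hang' : |S * b / x| ≤ D.η := by
    rw [abs_div, abs_of_pos hx, div_le_iff₀ hx, abs_mul, abs_of_nonneg hS₀]
    exact (mul_le_of_le_one_left (abs_nonneg b) hS₁).trans hbη
  have hsin : D.m s * Real.sin (φ - D.α s) = S * b / x := by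
    rw [eq_div_iff hx.ne']; linear_combination -hang
  have hle := le_abs_add_abs_of_mul_cos_of_mul_sin (eq_neg_of_add_eq_zero_left hrad) hsin
  linarith [D.one_le_m s, D.η_mul_lt]

lemma critical_of_eventuallyEq {ϑ : ℝ → ℝ} (hϑ : ContDiff ℝ ∞ ϑ) (hx : 0 < x) (hx' : x ≠ 5 / 2)
    (hform : D.interp =ᶠ[𝓝 (s, x, φ)] fun p => modelFun D.σ (shear ϑ p))
    (hc : fderiv ℝ D.interp (s, x, φ) = 0) :
    NondegAt D.interp (s, x, φ) ∧ deriv D.σ x = 1 ∧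
      ∃ j l : ℤ, s = π + 2 * π * j ∧ φ = ϑ s + π + 2 * π * l := by
  rw [hform.fderiv_eq] at hc
  obtain ⟨hs, hσ, hφ⟩ := D.profile.of_fderiv_modelFun_shear_eq_zero hϑ hx hc
  obtain ⟨j, hj⟩ := exists_eq_of_cos_eq_neg_one hs
  obtain ⟨l, hl⟩ := exists_eq_of_cos_eq_neg_one hφ
  exact ⟨(D.profile.nondegAt_modelFun_shear hϑ hx hx' hc).congr hform, hσ, j, l, hj, by linarith⟩

lemma fderiv_interp_ne_zero_of_cos (hx : 0 < x) (h₄ : x < 4) (hs : 1 / 2 < Real.cos s) :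
    fderiv ℝ D.interp (s, x, φ) ≠ 0 := fun hc => by
  have hform : D.interp =ᶠ[𝓝 (s, x, φ)] fun p => modelFun D.σ (shear (fun _ => D.α 0) p) := by
    filter_upwards [(by fun_prop : ContinuousAt (fun p : P3 => p.2.1) (s, x, φ)).eventually
      (Iio_mem_nhds h₄), (by fun_prop : ContinuousAt (fun p : P3 => Real.cos p.1)
        (s, x, φ)).eventually (Ioi_mem_nhds hs)] with p hp hp' using D.interp_of_lt_four hp hp'
  rw [hform.fderiv_eq] at hc
  linarith [(D.profile.of_fderiv_modelFun_shear_eq_zero contDiff_const hx hc).1]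

lemma critical_of_lt_two (hx : 0 < x) (h₂ : x < 2) (hc : fderiv ℝ D.interp (s, x, φ) = 0) :
    NondegAt D.interp (s, x, φ) ∧ deriv D.σ x = 1 ∧
      ∃ j l : ℤ, s = π + 2 * π * j ∧ φ = D.α 0 + π + 2 * π * l := by
  refine D.critical_of_eventuallyEq (ϑ := fun _ => D.α 0) contDiff_const hx (by linarith) ?_ hc
  filter_upwards [(by fun_prop : ContinuousAt (fun p : P3 => p.2.1) (s, x, φ)).eventually
    (Iio_mem_nhds h₂)] with p hp using D.interp_of_lt_two hp

lemma critical_of_three_lt (h₃ : 3 < x) (h₄ : x < 4) (hc : fderiv ℝ D.interp (s, x, φ) = 0) :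
    NondegAt D.interp (s, x, φ) ∧ deriv D.σ x = 1 ∧
      ∃ j l : ℤ, s = π + 2 * π * j ∧ φ = D.κ π + π + 2 * π * l := by
  have hform : D.interp =ᶠ[𝓝 (s, x, φ)] fun p => modelFun D.σ (shear D.κ p) := by
    filter_upwards [(by fun_prop : ContinuousAt (fun p : P3 => p.2.1) (s, x, φ)).eventually
      (Ioo_mem_nhds h₃ h₄)] with p hp
      using D.interp_of_mem_Icc hp.1.le (hp.2.le.trans D.profile.four_le)
  obtain ⟨hnd, hσ, j, l, hs, hφ⟩ :=
    D.critical_of_eventuallyEq D.contDiff_κ (by linarith) (by linarith) hform hc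
  refine ⟨hnd, hσ, j, j * D.k + l, hs, ?_⟩
  rw [hφ, hs, apply_add_int_mul D.κ_add]
  push_cast
  ring

lemma exists_critical : ∃ p₁ p₂ : P3, ∀ s x φ, 0 < x → x < D.R + 4 →
    fderiv ℝ D.interp (s, x, φ) = 0 →
      NondegAt D.interp (s, x, φ) ∧ (ModEq3 (s, x, φ) p₁ ∨ ModEq3 (s, x, φ) p₂) := by
  obtain ⟨x₁, hx₁⟩ := exists_forall_eq (p := fun x => x < 2 ∧ deriv D.σ x = 1)
    fun x y hx hy => D.profile.eq_of_lt_two x y hx.1 hy.1 hx.2 hy.2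
  obtain ⟨x₂, hx₂⟩ := exists_forall_eq (p := fun x => 3 < x ∧ deriv D.σ x = 1)
    fun x y hx hy => D.profile.eq_of_three_lt x y hx.1 hy.1 hx.2 hy.2
  refine ⟨(π, x₁, D.α 0 + π), (π, x₂, D.κ π + π), fun s x φ hx hxR hc => ?_⟩
  rcases lt_or_ge x 2 with h₂ | h₂
  · obtain ⟨hnd, hσ, j, l, hs, hφ⟩ := D.critical_of_lt_two hx h₂ hc
    exact ⟨hnd, Or.inl ⟨j, l, by rw [hs, hφ, hx₁ x ⟨h₂, hσ⟩]⟩⟩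
  rcases le_or_gt x 3 with h₃ | h₃
  · rcases le_or_gt (Real.cos s) (1 / 2) with hs | hs
    · exact absurd hc (D.fderiv_interp_ne_zero_of_mem_Icc h₂ h₃ hs)
    · exact absurd hc (D.fderiv_interp_ne_zero_of_cos hx (by linarith) hs)
  rcases lt_or_ge x 4 with h₄ | h₄
  · obtain ⟨hnd, hσ, j, l, hs, hφ⟩ := D.critical_of_three_lt h₃ h₄ hc
    exact ⟨hnd, Or.inr ⟨j, l, by rw [hs, hφ, hx₂ x ⟨h₃, hσ⟩]⟩⟩
  rcases lt_or_ge x (D.R + 2) with h₅ | h₅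
  · exact absurd hc (D.fderiv_interp_ne_zero_of_four_le h₄ h₅)
  · exact absurd hc (D.fderiv_interp_ne_zero_of_add_one_lt (by linarith) hxR)

end PageData

/-! ### Smooth logarithms of periodic curves -/

section Logarithm
variable {c A : ℝ → ℂ}

lemma exists_contDiff_eq_exp (hc : ContDiff ℝ ∞ c) (h₀ : ∀ s, c s ≠ 0) :
    ∃ A : ℝ → ℂ, ContDiff ℝ ∞ A ∧ ∀ s, c s = Complex.exp (A s) := by
  obtain ⟨hcd, hc'⟩ := contDiff_infty_iff_deriv.1 hc
  have hd : ContDiff ℝ ∞ fun s => deriv c s / c s := by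
    simp only [div_eq_mul_inv]
    exact hc'.mul (hc.inv h₀)
  set A : ℝ → ℂ := fun s => Complex.log (c 0) + ∫ t in (0 : ℝ)..s, deriv c t / c t with hA
  have hAd : ∀ s, HasDerivAt A (deriv c s / c s) s := fun s =>
    (intervalIntegral.integral_hasDerivAt_right (hd.continuous.intervalIntegrable 0 s)
      hd.continuous.stronglyMeasurable.stronglyMeasurableAtFilter
      hd.continuous.continuousAt).const_add _
  have hquot : ∀ s, HasDerivAt (fun s => c s * Complex.exp (-A s)) 0 s := fun s => by
    refine ((hcd s).hasDerivAt.mul (hAd s).neg.cexp).congr_deriv ?_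
    field_simp [h₀ s]
    ring
  have hone : ∀ s, c s * Complex.exp (-A s) = 1 := fun s => by
    have := is_const_of_deriv_eq_zero (fun x => (hquot x).differentiableAt)
      (fun x => (hquot x).deriv) s 0
    rw [this]
    simp [hA, Complex.exp_neg, Complex.exp_log (h₀ 0), h₀ 0]
  refine ⟨A, ?_, fun s => ?_⟩
  · rw [contDiff_infty_iff_deriv, funext fun s => (hAd s).deriv]
    exact ⟨fun s => (hAd s).differentiableAt, hd⟩
  · rw [eq_comm, ← mul_one (Complex.exp _), ← hone s, mul_left_comm, ← Complex.exp_add,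
      add_neg_cancel, Complex.exp_zero, mul_one]

lemma exists_winding (hA : Differentiable ℝ A)
    (hp : ∀ s, Complex.exp (A (s + 2 * π)) = Complex.exp (A s)) :
    ∃ k : ℤ, ∀ s, A (s + 2 * π) = A s + 2 * π * k * Complex.I := by
  set d : ℝ → ℂ := fun s => A (s + 2 * π) - A s
  have hd : Differentiable ℝ d := (hA.comp (differentiable_id.add_const _)).sub hA
  have hexp : ∀ s, Complex.exp (d s) = 1 := fun s => by
    rw [Complex.exp_sub, hp, div_self (Complex.exp_ne_zero _)]
  have hd' : ∀ s, deriv d s = 0 := fun s => by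
    have h := (hd s).hasDerivAt.cexp
    rw [funext hexp] at h
    exact (mul_eq_zero.1 (h.unique (hasDerivAt_const s 1))).resolve_left (Complex.exp_ne_zero _)
  obtain ⟨k, hk⟩ := Complex.exp_eq_one_iff.1 (hexp 0)
  refine ⟨k, fun s => ?_⟩
  have : d s = k * (2 * π * Complex.I) := (is_const_of_deriv_eq_zero hd hd' s 0).trans hk
  linear_combination this

end Logarithm

/-! ### The modified page function near the unknot -/

lemma forall_of_forall_mem_Icc {P : ℝ → Prop} (hP : ∀ s, P (s + 2 * π) ↔ P s)
    (h : ∀ s ∈ Icc 0 (2 * π), P s) (s : ℝ) : P s := by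
  have hper : Function.Periodic P (2 * π) := fun s => propext (hP s)
  obtain ⟨y, hy, hsy⟩ := hper.exists_mem_Ico₀ Real.two_pi_pos s
  exact hsy ▸ h y (Ico_subset_Icc_self hy)

lemma exists_forall_norm_lt {P : ℝ → ℂ → Prop} (hP : ∀ s w, P (s + 2 * π) w ↔ P s w)
    (h : ∀ s : ℝ, ∀ᶠ p : ℝ × ℂ in 𝓝 (s, 0), P p.1 p.2) :
    ∃ ε > 0, ∀ s w, ‖w‖ < ε → P s w := by
  have hev : ∀ᶠ w in 𝓝 (0 : ℂ), ∀ s ∈ Icc 0 (2 * π), P s w :=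
    isCompact_Icc.eventually_forall_of_forall_eventually fun s _ =>
      (by fun_prop : ContinuousAt (fun z : ℂ × ℝ => (z.2, z.1)) (0, s)).eventually (h s)
  obtain ⟨ε, hε, hball⟩ := Metric.eventually_nhds_iff.1 hev
  exact ⟨ε, hε, fun s w hw => forall_of_forall_mem_Icc (P := fun s => P s w) (fun s => hP s w)
    (fun s hs => hball (by simpa using hw) s hs) s⟩

section Remainder
variable {f : ℝ × ℂ → ℝ} {r : ℝ}

lemma fderiv_add_two_pi (hper : ∀ s w, f (s + 2 * π, w) = f (s, w)) (s : ℝ) (w : ℂ) :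
    fderiv ℝ f (s + 2 * π, w) = fderiv ℝ f (s, w) := by
  have := fderiv_comp_add_right (𝕜 := ℝ) (f := f) (x := (s, w)) (2 * π, 0)
  simp only [Prod.mk_add_mk, add_zero] at this
  rw [← this]
  congr 1
  ext ⟨s, w⟩
  simp [hper]

lemma exists_abs_le_mul_norm (hr : 0 < r)
    (hf : ∀ s w, ‖w‖ < r → ContDiffAt ℝ ∞ f (s, w))
    (hper : ∀ s w, f (s + 2 * π, w) = f (s, w)) (h₀ : ∀ s, f (s, 0) = 0)
    (hd₀ : ∀ s v, fderiv ℝ f (s, 0) (0, v) = 0) {η : ℝ} (hη : 0 < η) :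
    ∃ r' > 0, r' ≤ r ∧ ∀ s w, ‖w‖ < r' →
      |f (s, w)| ≤ η * ‖w‖ ∧ ∀ v, |fderiv ℝ f (s, w) (0, v)| ≤ η * ‖v‖ := by
  set d : ℝ × ℂ → ℂ →L[ℝ] ℝ := fun p => (fderiv ℝ f p).comp (ContinuousLinearMap.inr ℝ ℝ ℂ)
  obtain ⟨r₁, hr₁, hsmall⟩ := exists_forall_norm_lt (P := fun s w => ‖d (s, w)‖ < η)
    (fun s w => by simp only [d, fderiv_add_two_pi hper]) fun s => by
      have hcont : ContinuousAt d (s, 0) :=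
        ((hf s 0 (by simpa using hr)).fderiv_right (m := 0) (by norm_num)).continuousAt.clm_comp
          continuousAt_const
      have hzero : d (s, 0) = 0 := ContinuousLinearMap.ext fun v => by simp [d, hd₀]
      exact hcont.norm.eventually (Iio_mem_nhds (by simpa only [hzero, norm_zero]))
  refine ⟨min r r₁, lt_min hr hr₁, min_le_left _ _, fun s w hw => ⟨?_, fun v => ?_⟩⟩
  · have hderiv : ∀ y ∈ ball (0 : ℂ) (min r r₁),
        HasFDerivWithinAt (fun w => f (s, w)) (d (s, y)) (ball 0 (min r r₁)) y := fun y hy => by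
      have hy' := (mem_ball_zero_iff.1 hy).trans_le (min_le_left _ _)
      exact (HasFDerivAt.comp y ((hf s y hy').differentiableAt (by simp)).hasFDerivAt
        (hasFDerivAt_prodMk_right s y)).hasFDerivWithinAt
    have := (convex_ball (0 : ℂ) (min r r₁)).norm_image_sub_le_of_norm_hasFDerivWithin_le hderiv
      (fun y hy => (hsmall s y ((mem_ball_zero_iff.1 hy).trans_le (min_le_right _ _))).le)
      (mem_ball_self (lt_min hr hr₁)) (mem_ball_zero_iff.2 hw)
    simpa [h₀] using this
  · have := (d (s, w)).le_of_opNorm_le (hsmall s w (hw.trans_le (min_le_right _ _))).le v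
    simpa [d] using this

end Remainder

/-- The angle `h` of a circle-valued map near an unknot in one of its smooth pages, measured from
that page in tube coordinates `(s, w)` of radius `r`. -/
structure IsPageAngle (h : ℝ × ℂ → ℝ) (r : ℝ) : Prop where
  pos : 0 < r
  contDiffAt : ∀ s w, ‖w‖ < r → ContDiffAt ℝ ∞ h (s, w)
  periodic : ∀ s w, h (s + 2 * π, w) = h (s, w)
  apply_zero : ∀ s, h (s, 0) = 0
  exists_fderiv_ne_zero : ∀ s, ∃ w, fderiv ℝ h (s, 0) (0, w) ≠ 0

/-- The gradient of `h (s, ·)` at `0`. -/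
def transverseGrad (h : ℝ × ℂ → ℝ) (s : ℝ) : ℂ :=
  ⟨fderiv ℝ h (s, 0) (0, 1), fderiv ℝ h (s, 0) (0, Complex.I)⟩

/-- The linear part of `h (s, ·)` at `0`. -/
def transverseLin (h : ℝ × ℂ → ℝ) (p : ℝ × ℂ) : ℝ :=
  p.2.re * (transverseGrad h p.1).re + p.2.im * (transverseGrad h p.1).im

lemma fderiv_apply_eq_transverseLin (h : ℝ × ℂ → ℝ) (s : ℝ) (w : ℂ) :
    fderiv ℝ h (s, 0) (0, w) = transverseLin h (s, w) := by
  have : ((0 : ℝ), w) = w.re • ((0 : ℝ), (1 : ℂ)) + w.im • ((0 : ℝ), Complex.I) := by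
    ext <;> simp
  rw [this, map_add, map_smul, map_smul]
  rfl

namespace IsPageAngle
variable {h : ℝ × ℂ → ℝ} {r : ℝ} (hh : IsPageAngle h r)
include hh

lemma contDiff_transverseGrad : ContDiff ℝ ∞ (transverseGrad h) := by
  have hcurve : ∀ u : ℂ, ContDiff ℝ ∞ fun s => fderiv ℝ h (s, 0) (0, u) := fun u =>
    contDiff_iff_contDiffAt.2 fun s => by
      have := (hh.contDiffAt s 0 (by simpa using hh.pos)).fderiv_right (m := ∞) (by norm_num)
      exact (ContDiffAt.comp (g := fderiv ℝ h) s this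
        (contDiff_id.prodMk contDiff_const).contDiffAt).clm_apply contDiffAt_const
  have hcoe : ContDiff ℝ ∞ fun x : ℝ => (x : ℂ) := Complex.ofRealCLM.contDiff
  have heq : transverseGrad h = fun s => (fderiv ℝ h (s, 0) (0, 1) : ℂ)
      + (fderiv ℝ h (s, 0) (0, Complex.I) : ℂ) * Complex.I := by
    ext s
    exact Complex.mk_eq_add_mul_I _ _
  rw [heq]
  exact (hcoe.comp (hcurve 1)).add ((hcoe.comp (hcurve Complex.I)).mul contDiff_const)

lemma transverseGrad_ne_zero (s : ℝ) : transverseGrad h s ≠ 0 := fun h₀ => by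
  obtain ⟨w, hw⟩ := hh.exists_fderiv_ne_zero s
  rw [fderiv_apply_eq_transverseLin, transverseLin, h₀] at hw
  simp at hw

lemma transverseGrad_add_two_pi (s : ℝ) :
    transverseGrad h (s + 2 * π) = transverseGrad h s := by
  simp only [transverseGrad, fderiv_add_two_pi hh.periodic]

lemma exists_le_norm_transverseGrad : ∃ μ > 0, ∀ s, μ ≤ ‖transverseGrad h s‖ := by
  obtain ⟨t, -, ht⟩ := (isCompact_Icc (a := (0 : ℝ)) (b := 2 * π)).exists_isMinOn
    (nonempty_Icc.2 Real.two_pi_pos.le) hh.contDiff_transverseGrad.continuous.norm.continuousOn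
  exact ⟨_, norm_pos_iff.2 (hh.transverseGrad_ne_zero t),
    forall_of_forall_mem_Icc (fun s => by rw [hh.transverseGrad_add_two_pi]) fun s hs => ht hs⟩

lemma contDiff_transverseLin : ContDiff ℝ ∞ (transverseLin h) := by
  have hc := hh.contDiff_transverseGrad.comp (contDiff_fst (E := ℝ) (F := ℂ))
  exact ((Complex.reCLM.contDiff.comp contDiff_snd).mul (Complex.reCLM.contDiff.comp hc)).add
    ((Complex.imCLM.contDiff.comp contDiff_snd).mul (Complex.imCLM.contDiff.comp hc))

lemma fderiv_sub_transverseLin (s : ℝ) (v : ℂ) :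
    fderiv ℝ (fun p => h p - transverseLin h p) (s, 0) (0, v) = 0 := by
  have hlin := hh.contDiff_transverseLin.differentiable (by simp) (s, 0)
  have hpartial : fderiv ℝ (transverseLin h) (s, 0) (0, v) = transverseLin h (s, v) := by
    have h₁ := hlin.hasFDerivAt.comp (0 : ℂ) (hasFDerivAt_prodMk_right s (0 : ℂ))
    have h₂ : HasFDerivAt (fun w : ℂ => transverseLin h (s, w))
        ((transverseGrad h s).re • Complex.reCLM + (transverseGrad h s).im • Complex.imCLM) 0 :=
      (Complex.reCLM.hasFDerivAt (x := 0).mul_const (transverseGrad h s).re).add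
        (Complex.imCLM.hasFDerivAt.mul_const (transverseGrad h s).im)
    have := DFunLike.congr_fun (h₁.unique h₂) v
    simpa [transverseLin, mul_comm] using this
  rw [fderiv_fun_sub ((hh.contDiffAt s 0 (by simpa using hh.pos)).differentiableAt (by simp)) hlin,
    sub_apply, hpartial, fderiv_apply_eq_transverseLin, sub_self]

lemma exists_abs_sub_transverseLin_le {η : ℝ} (hη : 0 < η) :
    ∃ r' > 0, r' ≤ r ∧ ∀ s w, ‖w‖ < r' → |h (s, w) - transverseLin h (s, w)| ≤ η * ‖w‖ ∧
      ∀ v, |fderiv ℝ (fun p => h p - transverseLin h p) (s, w) (0, v)| ≤ η * ‖v‖ :=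
  exists_abs_le_mul_norm (f := fun p => h p - transverseLin h p) hh.pos
    (fun s w hw => (hh.contDiffAt s w hw).sub hh.contDiff_transverseLin.contDiffAt)
    (fun s w => by simp only [hh.periodic, transverseLin, hh.transverseGrad_add_two_pi])
    (fun s => by simp [hh.apply_zero, transverseLin]) hh.fderiv_sub_transverseLin hη

lemma exists_polar_transverseLin : ∃ (μ : ℝ) (m α : ℝ → ℝ) (k : ℤ), 0 < μ ∧
    ContDiff ℝ ∞ m ∧ (∀ s, 1 ≤ m s) ∧ (∀ s, m (s + 2 * π) = m s) ∧
    ContDiff ℝ ∞ α ∧ (∀ s, α (s + 2 * π) = α s + 2 * π * k) ∧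
    ∀ s w, transverseLin h (s, w) =
      μ * (m s * (w.re * Real.cos (α s) + w.im * Real.sin (α s))) := by
  obtain ⟨A, hA, hexp⟩ := exists_contDiff_eq_exp hh.contDiff_transverseGrad
    hh.transverseGrad_ne_zero
  obtain ⟨k, hk⟩ := exists_winding (hA.differentiable (by simp)) fun s => by
    rw [← hexp, ← hexp, hh.transverseGrad_add_two_pi]
  obtain ⟨μ, hμ, hle⟩ := hh.exists_le_norm_transverseGrad
  refine ⟨μ, fun s => Real.exp (A s).re / μ, fun s => (A s).im, k, hμ,
    (Complex.reCLM.contDiff.comp hA).exp.div_const μ, fun s => ?_, fun s => by simp [hk],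
    Complex.imCLM.contDiff.comp hA, fun s => by simp [hk], fun s w => ?_⟩
  · rw [one_le_div hμ, ← Complex.norm_exp, ← hexp]
    exact hle s
  · rw [transverseLin, hexp, Complex.exp_re, Complex.exp_im]
    field_simp

lemma exists_pageData : ∃ (D : PageData) (μ : ℝ), 0 < μ ∧ D.ε * (D.R + 4) ≤ r ∧
    ∀ s w, h (s, w) =
      μ * (D.m s * (w.re * Real.cos (D.α s) + w.im * Real.sin (D.α s)) + D.q (s, w)) := by
  obtain ⟨μ, m, α, k, hμ, hm, hm₁, hmp, hα, hαp, hlin⟩ := hh.exists_polar_transverseLin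
  obtain ⟨K, hK, hKd⟩ := exists_deriv_smoothTransition_le
  obtain ⟨R, σ, hσ⟩ := exists_isProfile (show 0 < 4 * (2 + 6 * K) by positivity)
  have hR : 0 < R + 4 := by linarith [hσ.four_le]
  have hden : 0 < 2 * (2 + K * (R + 4)) := by positivity
  set η := (2 * (2 + K * (R + 4)))⁻¹
  obtain ⟨r', hr', hle, hsmall⟩ := hh.exists_abs_sub_transverseLin_le
    (mul_pos (inv_pos.2 hden) hμ)
  have hε : r' / (R + 4) * (R + 4) = r' := div_mul_cancel₀ _ hR.ne'
  refine ⟨⟨m, α, k, fun p => μ⁻¹ * (h p - transverseLin h p), σ, R, r' / (R + 4), η, K, hm, hm₁,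
    hmp, hα, hαp, hKd, hσ, by positivity, ?_, fun s w => ?_, fun s w hw => ?_, fun s w hw => ?_,
    fun s w v hw => ?_⟩, μ, hμ, hε.trans_le hle, fun s w => ?_⟩
  · rw [inv_mul_lt_iff₀ hden]
    linarith [mul_pos hK hR]
  · simp only [hh.periodic, transverseLin, hh.transverseGrad_add_two_pi]
  · rw [hε] at hw
    exact contDiffAt_const.mul
      ((hh.contDiffAt s w (hw.trans_le hle)).sub hh.contDiff_transverseLin.contDiffAt)
  · rw [hε] at hw
    rw [abs_mul, abs_of_pos (inv_pos.2 hμ), inv_mul_le_iff₀ hμ]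
    linarith [(hsmall s w hw).1]
  · rw [hε] at hw
    have hdiff : fderiv ℝ (fun p => μ⁻¹ * (h p - transverseLin h p)) (s, w) =
        μ⁻¹ • fderiv ℝ (fun p => h p - transverseLin h p) (s, w) :=
      congrFun (fderiv_const_smul_field (f := fun p => h p - transverseLin h p) μ⁻¹) (s, w)
    rw [hdiff, smul_apply, smul_eq_mul, abs_mul, abs_of_pos (inv_pos.2 hμ),
      inv_mul_le_iff₀ hμ]
    linarith [(hsmall s w hw).2 v]
  · rw [mul_add, ← hlin, mul_inv_cancel_left₀ hμ.ne', add_sub_cancel]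

end IsPageAngle

lemma NondegAt.const_mul {V : Type*} [NormedAddCommGroup V] [NormedSpace ℝ V] {g : V → ℝ}
    {v₀ : V} (hg : NondegAt g v₀) {a : ℝ} (ha : a ≠ 0) : NondegAt (fun u => a * g u) v₀ := by
  intro v hv
  obtain ⟨w, hw⟩ := hg v hv
  have hfderiv : ∀ f : V → ℝ, fderiv ℝ (fun u => a * f u) = a • fderiv ℝ f :=
    fun f => fderiv_const_smul_field a
  refine ⟨w, ?_⟩
  rw [show (fun u => fderiv ℝ (fun u => a * g u) u v) = fun u => a * fderiv ℝ g u v by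
    simp only [hfderiv, Pi.smul_apply, smul_apply, smul_eq_mul], hfderiv]
  exact mul_ne_zero ha hw

/-- A modification `G` of the page angle `h`, in the polar coordinates `w = ε x e^{iφ}` of the
discs `‖w‖ < r`: it agrees with `h` for `R ≤ x`, is linear and independent of `s` for `x ≤ 1`, and
has at most two critical points `p₁`, `p₂` up to periods, both nondegenerate. -/
structure LocalModel (h : ℝ × ℂ → ℝ) (r : ℝ) where
  (ε μ e₀ R : ℝ)
  G : P3 → ℝ
  (p₁ p₂ : P3)
  ε_pos : 0 < ε
  μ_pos : 0 < μ
  one_lt_R : 1 < R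
  mul_le : ε * (R + 1) ≤ r
  contDiffAt : ∀ s x φ, |x| < R + 1 → ContDiffAt ℝ ∞ G (s, x, φ)
  periodic_fst : ∀ s x φ, G (s + 2 * π, x, φ) = G (s, x, φ)
  periodic_snd : ∀ s x φ, G (s, x, φ + 2 * π) = G (s, x, φ)
  eq_of_le_one : ∀ s x φ, x ≤ 1 → G (s, x, φ) = μ * (x * Real.cos (φ - e₀))
  eq_of_R_le : ∀ s x φ, R ≤ x → G (s, x, φ) = h (s, scaledPolar ε x φ)
  critical : ∀ s x φ, 0 < x → x < R + 1 → fderiv ℝ G (s, x, φ) = 0 →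
    NondegAt G (s, x, φ) ∧ (ModEq3 (s, x, φ) p₁ ∨ ModEq3 (s, x, φ) p₂)

lemma PageData.mul_interp_of_add_three_le (D : PageData) {s x φ : ℝ} (hx : D.R + 3 ≤ x) :
    D.ε * D.interp (s, x, φ) = D.m s * ((scaledPolar D.ε x φ).re * Real.cos (D.α s) +
      (scaledPolar D.ε x φ).im * Real.sin (D.α s)) + D.q (s, scaledPolar D.ε x φ) := by
  have hre : (scaledPolar D.ε x φ).re = D.ε * x * Real.cos φ := by
    rw [scaledPolar, Complex.re_ofReal_mul, Complex.exp_ofReal_mul_I_re]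
  have him : (scaledPolar D.ε x φ).im = D.ε * x * Real.sin φ := by
    rw [scaledPolar, Complex.im_ofReal_mul, Complex.exp_ofReal_mul_I_im]
  rw [D.interp_of_add_one_le (by linarith), Real.smoothTransition.one_of_one_le (by linarith),
    one_mul, mul_add, mul_div_cancel₀ _ D.ε_pos.ne', hre, him, Real.cos_sub]
  ring

lemma IsPageAngle.nonempty_localModel {h : ℝ × ℂ → ℝ} {r : ℝ} (hh : IsPageAngle h r) :
    Nonempty (LocalModel h r) := by
  obtain ⟨D, μ, hμ, hr, hD⟩ := hh.exists_pageData
  obtain ⟨p₁, p₂, hcrit⟩ := D.exists_critical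
  have hεμ : 0 < D.ε * μ := mul_pos D.ε_pos hμ
  refine ⟨{ ε := D.ε, μ := D.ε * μ, e₀ := D.α 0, R := D.R + 3, p₁ := p₁, p₂ := p₂
            G := fun p => D.ε * μ * D.interp p, ε_pos := D.ε_pos, μ_pos := hεμ
            one_lt_R := by linarith [D.profile.four_le]
            mul_le := by rwa [show D.R + 3 + 1 = D.R + 4 by ring]
            contDiffAt := fun s x φ hx =>
              contDiffAt_const.mul (D.contDiffAt_interp (by linarith))
            periodic_fst := fun s x φ => by simp only [D.interp_periodic_fst]
            periodic_snd := fun s x φ => by simp only [D.interp_periodic_snd]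
            eq_of_le_one := fun s x φ hx => by simp only [D.interp_of_le_one hx]
            eq_of_R_le := fun s x φ hx => ?_
            critical := fun s x φ h₀ h₁ hc => ?_ }⟩
  · rw [hD, ← D.mul_interp_of_add_three_le hx]
    ring
  · have hfderiv : fderiv ℝ (fun p => D.ε * μ * D.interp p) (s, x, φ) =
        (D.ε * μ) • fderiv ℝ D.interp (s, x, φ) :=
      congrFun (fderiv_const_smul_field (f := D.interp) (D.ε * μ)) (s, x, φ)
    rw [hfderiv] at hc
    obtain ⟨hnd, hmod⟩ := hcrit s x φ h₀ (by linarith) ((smul_eq_zero.1 hc).resolve_left hεμ.ne')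
    exact ⟨hnd.const_mul hεμ.ne', hmod⟩

/-! ### Circle-valued functions on the sphere -/

section Sphere
variable {V : Type*} [NormedAddCommGroup V] [NormedSpace ℝ V]
variable {H : Type*} [TopologicalSpace H] {I : ModelWithCorners ℝ V H}
variable {M : Type*} [TopologicalSpace M] [ChartedSpace H M]

lemma contMDiff_coe_sph : ContMDiff (𝓡 3) 𝓘(ℝ, E) ∞ fun p : Sph => (p : E) :=
  contMDiff_coe_sphere (E := E) (n := 3)

lemma contMDiffAt_sph_of_coe {f : M → Sph} {x : M}
    (h : ContMDiffAt I 𝓘(ℝ, E) ∞ (fun y => (f y : E)) x) : ContMDiffAt I (𝓡 3) ∞ f x := by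
  have hcont : ContinuousAt f x :=
    Topology.IsInducing.subtypeVal.continuousAt_iff.2 h.continuousAt
  refine contMDiffAt_iff_target.2 ⟨hcont, ?_⟩
  let U : _ ≃ₗᵢ[ℝ] E3 := (OrthonormalBasis.fromOrthogonalSpanSingleton 3
    (ne_zero_of_mem_unit_sphere (-f x))).repr
  have hopen : IsOpen {y : E | inner ℝ (-f x : E) y ≠ 1} :=
    isOpen_ne_fun (by fun_prop) continuous_const
  have hmem : (f x : E) ∈ {y : E | inner ℝ (-f x : E) y ≠ 1} := by
    simp only [mem_ofPred_eq, inner_neg_left, real_inner_self_eq_norm_sq, norm_eq_of_mem_sphere]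
    norm_num
  have hstereo : ContDiffAt ℝ ∞ (fun y => U (stereoToFun (-f x : E) y)) (f x : E) :=
    U.contDiff.contDiffAt.comp _ (contDiffOn_stereoToFun.contDiffAt (hopen.mem_nhds hmem))
  exact ContMDiffAt.comp (f := fun y => (f y : E)) x hstereo.contMDiffAt h

end Sphere

section Opens
variable {U : TopologicalSpace.Opens Sph} {F : U → Circle} {f : Sph → Circle}

lemma contMDiffAt_opens_iff (hF : ∀ y : U, F y = f y) (x : U) :
    ContMDiffAt (𝓡 3) (𝓡 1) ∞ F x ↔ ContMDiffAt (𝓡 3) (𝓡 1) ∞ f x := by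
  rw [show F = fun y : U => f y from funext hF]
  exact contMDiffAt_subtype_iff

lemma eventually_coe_extChartAt_symm (x : U) : ∀ᶠ u in 𝓝 (extChartAt (𝓡 3) x x),
    (((extChartAt (𝓡 3) x).symm u : U) : Sph) = (extChartAt (𝓡 3) (x : Sph)).symm u :=
  (TopologicalSpace.Opens.chartAt_subtype_val_symm_eventuallyEq (H := E3) U (x := x)).mono
    fun _ hu => hu.symm

lemma isCrit_opens_iff (hF : ∀ y : U, F y = f y) (x : U)
    (hf : ContMDiffAt (𝓡 3) (𝓡 1) ∞ f x) : IsCrit F x ↔ IsCrit f x := by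
  have hf' := (hf.mdifferentiableAt (by simp)).mfderiv
  have hF' := (((contMDiffAt_opens_iff hF x).2 hf).mdifferentiableAt (by simp)).mfderiv
  have hderiv : (mfderiv (𝓡 3) (𝓡 1) F x : E3 →L[ℝ] EuclideanSpace ℝ (Fin 1)) =
      mfderiv (𝓡 3) (𝓡 1) f x := by
    refine hF'.trans (Eq.trans (EventuallyEq.fderivWithin_eq_of_nhds ?_) hf'.symm)
    filter_upwards [eventually_coe_extChartAt_symm x] with u hu
    simp only [writtenInExtChartAt, Function.comp_apply, hF, hu]
  exact not_congr (iff_of_eq (congrArg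
    (fun A : E3 →L[ℝ] EuclideanSpace ℝ (Fin 1) => Function.Surjective A) hderiv))

lemma nondeg_opens_iff (hF : ∀ y : U, F y = f y) (x : U) : Nondeg F x ↔ Nondeg f x := by
  have hlift : liftChart F x =ᶠ[𝓝 (extChartAt (𝓡 3) x x)] liftChart f x := by
    filter_upwards [eventually_coe_extChartAt_symm x] with u hu
    simp only [liftChart, hF, hu]
  exact ⟨fun h => NondegAt.congr h hlift.symm, fun h => NondegAt.congr h hlift⟩

end Opens

namespace BRMap
variable (F : BRMap L)

open Classical in
/-- The map `F.f` extended to the whole sphere by the junk value `1` on the link. -/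
def extend (x : Sph) : Circle := if h : x ∈ L.compl then F.f ⟨x, h⟩ else 1

lemma f_eq_extend (y : L.compl) : F.f y = F.extend y := by
  rw [extend, dif_pos y.2]

variable {F} {x : Sph}

lemma contMDiffAt_extend (h : x ∉ L.carrier) : ContMDiffAt (𝓡 3) (𝓡 1) ∞ F.extend x :=
  (contMDiffAt_opens_iff (U := L.compl) F.f_eq_extend ⟨x, h⟩).1 (F.smooth _)

lemma isCrit_f_iff (h : x ∉ L.carrier) : IsCrit F.f ⟨x, h⟩ ↔ IsCrit F.extend x :=
  isCrit_opens_iff (U := L.compl) F.f_eq_extend ⟨x, h⟩ (contMDiffAt_extend h)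

lemma nondeg_f_iff (h : x ∉ L.carrier) : Nondeg F.f ⟨x, h⟩ ↔ Nondeg F.extend x :=
  nondeg_opens_iff (U := L.compl) F.f_eq_extend ⟨x, h⟩

end BRMap

lemma eq_mul_exp_arg_div (c d : Circle) : c = d * Circle.exp (Complex.arg ((c : ℂ) / d)) := by
  rw [← Circle.coe_div, Circle.exp_arg, mul_div_cancel]

lemma contDiffAt_arg {z : ℂ} (h : z ∈ Complex.slitPlane) : ContDiffAt ℝ ∞ Complex.arg z := by
  have hlog : ContDiffAt ℝ ∞ Complex.log z := (Complex.contDiffAt_log h).restrict_scalars ℝ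
  refine (Complex.imCLM.contDiff.contDiffAt.comp z hlog).congr_of_eventuallyEq
    (Eventually.of_forall fun w => ?_)
  simp [Complex.log_im]

section Lift
variable {V : Type*} [NormedAddCommGroup V] [NormedSpace ℝ V]

lemma contDiffAt_arg_div {f : Sph → Circle} {Y : V → Sph} {v₀ : V} {θ : Circle}
    (hY : ContMDiffAt 𝓘(ℝ, V) (𝓡 3) ∞ Y v₀) (hf : ContMDiffAt (𝓡 3) (𝓡 1) ∞ f (Y v₀))
    (hs : (f (Y v₀) : ℂ) / θ ∈ Complex.slitPlane) :
    ContDiffAt ℝ ∞ (fun v => Complex.arg ((f (Y v) : ℂ) / θ)) v₀ := by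
  have hcoe : ContMDiff (𝓡 1) 𝓘(ℝ, ℂ) ∞ fun z : Circle => (z : ℂ) :=
    contMDiff_coe_sphere (E := ℂ) (n := 1)
  have hfY : ContMDiffAt 𝓘(ℝ, V) 𝓘(ℝ, ℂ) ∞ (fun v => (f (Y v) : ℂ)) v₀ :=
    ContMDiffAt.comp (g := fun z : Circle => (z : ℂ)) v₀ (hcoe _) (ContMDiffAt.comp v₀ hf hY)
  exact (contDiffAt_arg hs).comp v₀ (hfY.contDiffAt.div_const (θ : ℂ))

end Lift

/-! ### Coordinates around the standard unknot -/

lemma Z_mk4 (z w : ℂ) : Z (mk4 z w) = z := by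
  apply Complex.ext <;> simp [Z, mk4]

lemma W_mk4 (z w : ℂ) : W (mk4 z w) = w := by
  apply Complex.ext <;> simp [W, mk4]

lemma mk4_Z_W (p : E) : mk4 (Z p) (W p) = p := by
  ext i
  fin_cases i <;> simp [mk4, Z, W]

lemma ext_Z_W {p q : E} (hZ : Z p = Z q) (hW : W p = W q) : p = q := by
  rw [← mk4_Z_W p, ← mk4_Z_W q, hZ, hW]

lemma norm_sq_eq_Z_W (p : E) : ‖p‖ ^ 2 = ‖Z p‖ ^ 2 + ‖W p‖ ^ 2 := by
  rw [EuclideanSpace.norm_sq_eq, Fin.sum_univ_four, ← Complex.normSq_eq_norm_sq,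
    ← Complex.normSq_eq_norm_sq, Complex.normSq_apply, Complex.normSq_apply]
  simp [Z, W]
  ring

lemma norm_Z_sq_add_norm_W_sq (p : Sph) : ‖Z p‖ ^ 2 + ‖W p‖ ^ 2 = 1 := by
  rw [← norm_sq_eq_Z_W, norm_eq_of_mem_sphere, one_pow]

/-- The complex coordinate `Z` as a continuous real-linear map. -/
def ZL : E →L[ℝ] ℂ := LinearMap.toContinuousLinearMap
  { toFun := Z
    map_add' := fun p q => by simp [Z]; ring
    map_smul' := fun a p => by simp [Z]; ring }

/-- The complex coordinate `W` as a continuous real-linear map. -/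
def WL : E →L[ℝ] ℂ := LinearMap.toContinuousLinearMap
  { toFun := W
    map_add' := fun p q => by simp [W]; ring
    map_smul' := fun a p => by simp [W]; ring }

/-- The identification `ℂ² ≅ ℝ⁴` as a continuous real-linear map. -/
def mkL : (ℂ × ℂ) →L[ℝ] E := LinearMap.toContinuousLinearMap
  { toFun := fun p => mk4 p.1 p.2
    map_add' := fun p q => by ext i; fin_cases i <;> simp [mk4]
    map_smul' := fun a p => by ext i; fin_cases i <;> simp [mk4] }

lemma contDiff_Z : ContDiff ℝ ∞ Z := ZL.contDiff

lemma contDiff_W : ContDiff ℝ ∞ W := WL.contDiff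

lemma contDiff_mk4 : ContDiff ℝ ∞ fun p : ℂ × ℂ => mk4 p.1 p.2 := mkL.contDiff

/-- The factor that scales `(e^{is}, w) ∈ ℂ²` into the unit sphere. -/
def tubeScale (w : ℂ) : ℝ := (√(1 + ‖w‖ ^ 2))⁻¹

lemma tubeScale_pos (w : ℂ) : 0 < tubeScale w := by
  unfold tubeScale
  positivity

lemma tubeScale_sq_mul (w : ℂ) : tubeScale w ^ 2 * (1 + ‖w‖ ^ 2) = 1 := by
  rw [tubeScale, inv_pow, Real.sq_sqrt (by positivity)]
  field_simp

lemma contDiff_tubeScale : ContDiff ℝ ∞ tubeScale :=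
  ((contDiff_const.add (contDiff_norm_sq ℝ)).sqrt fun w => by positivity).inv
    fun w => by positivity

/-- The parametrization `(s, w) ↦ (e^{is}, w) / |(e^{is}, w)|` of the complement of the circle
`Z = 0`, whose core `w = 0` is the standard unknot. -/
def tube (s : ℝ) (w : ℂ) : Sph :=
  ⟨mk4 (tubeScale w * Complex.exp (s * Complex.I)) (tubeScale w * w), by
    rw [mem_sphere_zero_iff_norm, ← sq_eq_sq₀ (norm_nonneg _) zero_le_one, norm_sq_eq_Z_W, Z_mk4,
      W_mk4]
    simp only [norm_mul, Complex.norm_real, Complex.norm_exp_ofReal_mul_I, Real.norm_eq_abs,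
      mul_one, mul_pow, sq_abs]
    linear_combination tubeScale_sq_mul w⟩

lemma Z_tube (s : ℝ) (w : ℂ) :
    Z (tube s w : E) = tubeScale w * Complex.exp (s * Complex.I) := Z_mk4 _ _

lemma W_tube (s : ℝ) (w : ℂ) : W (tube s w : E) = tubeScale w * w := W_mk4 _ _

lemma norm_Z_tube (s : ℝ) (w : ℂ) : ‖Z (tube s w : E)‖ = tubeScale w := by
  rw [Z_tube, norm_mul, Complex.norm_exp_ofReal_mul_I, Complex.norm_real, Real.norm_eq_abs,
    abs_of_pos (tubeScale_pos w), mul_one]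

lemma Z_tube_ne_zero (s : ℝ) (w : ℂ) : Z (tube s w : E) ≠ 0 := by
  rw [← norm_pos_iff, norm_Z_tube]
  exact tubeScale_pos w

lemma tube_add_two_pi (s : ℝ) (w : ℂ) : tube (s + 2 * π) w = tube s w := by
  refine Subtype.ext (ext_Z_W ?_ (by rw [W_tube, W_tube]))
  rw [Z_tube, Z_tube, Complex.ofReal_add, add_mul, Complex.ofReal_mul, Complex.ofReal_ofNat,
    Complex.exp_periodic]

lemma contDiff_cexp_ofReal_mul_I : ContDiff ℝ ∞ fun s : ℝ => Complex.exp (s * Complex.I) :=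
  (Complex.ofRealCLM.contDiff.mul contDiff_const).cexp

lemma contMDiff_tube : ContMDiff 𝓘(ℝ, ℝ × ℂ) (𝓡 3) ∞ fun q : ℝ × ℂ => tube q.1 q.2 := fun q => by
  have hscale : ContDiff ℝ ∞ fun q : ℝ × ℂ => (tubeScale q.2 : ℂ) :=
    Complex.ofRealCLM.contDiff.comp (contDiff_tubeScale.comp contDiff_snd)
  exact contMDiffAt_sph_of_coe (contDiff_mk4.comp ((hscale.mul
    (contDiff_cexp_ofReal_mul_I.comp contDiff_fst)).prodMk
      (hscale.mul contDiff_snd))).contMDiff.contMDiffAt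

/-- The argument of `z` in the branch that is continuous near the angle `s₀`. -/
def branchArg (s₀ : ℝ) (z : ℂ) : ℝ := s₀ + Complex.arg (z * Complex.exp (-s₀ * Complex.I))

lemma real_mul_exp_mul_exp_neg (s₀ r s : ℝ) :
    (r : ℂ) * Complex.exp (s * Complex.I) * Complex.exp (-s₀ * Complex.I) =
      r * Complex.exp ((s - s₀ : ℝ) * Complex.I) := by
  rw [mul_assoc, ← Complex.exp_add]
  push_cast
  ring_nf

lemma contDiffAt_branchArg {s r : ℝ} (hr : 0 < r) :
    ContDiffAt ℝ ∞ (branchArg s) (r * Complex.exp (s * Complex.I)) := by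
  have hmem : (r : ℂ) * Complex.exp (s * Complex.I) * Complex.exp (-s * Complex.I) ∈
      Complex.slitPlane := by
    rw [real_mul_exp_mul_exp_neg]
    simpa using hr
  exact contDiffAt_const.add (ContDiffAt.comp (g := Complex.arg)
    (f := fun z => z * Complex.exp (-s * Complex.I)) _ (contDiffAt_arg hmem)
    (contDiff_id.mul contDiff_const).contDiffAt)

lemma branchArg_real_mul_exp {s₀ r s : ℝ} (hr : 0 < r) (h : |s - s₀| < π) :
    branchArg s₀ (r * Complex.exp (s * Complex.I)) = s := by
  rw [abs_lt] at h
  rw [branchArg, real_mul_exp_mul_exp_neg, Complex.arg_real_mul _ hr, Complex.arg_exp_mul_I,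
    (toIocMod_eq_self _).2 ⟨by linarith, by linarith⟩, add_sub_cancel]

lemma norm_mul_exp_branchArg (s₀ : ℝ) (z : ℂ) :
    ‖z‖ * Complex.exp (branchArg s₀ z * Complex.I) = z := by
  have hrot : ‖Complex.exp (-s₀ * Complex.I)‖ = 1 := by
    exact_mod_cast Complex.norm_exp_ofReal_mul_I (-s₀)
  have hpolar := Complex.norm_mul_exp_arg_mul_I (z * Complex.exp (-s₀ * Complex.I))
  rw [norm_mul, hrot, mul_one] at hpolar
  rw [branchArg, Complex.ofReal_add, add_mul, Complex.exp_add, mul_left_comm, hpolar,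
    mul_left_comm, ← Complex.exp_add, neg_mul, add_neg_cancel, Complex.exp_zero, mul_one]

/-- The coordinates `(s, w)` of a point, with `s` in the branch that is continuous near `s₀`;
a local inverse of `tube`. -/
def tubeInv (s₀ : ℝ) (p : E) : ℝ × ℂ := (branchArg s₀ (Z p), W p / ‖Z p‖)

lemma contDiffAt_tubeInv (s : ℝ) (w : ℂ) : ContDiffAt ℝ ∞ (tubeInv s) (tube s w : E) := by
  have hZ := Z_tube_ne_zero s w
  have harg : ContDiffAt ℝ ∞ (branchArg s) (Z (tube s w : E)) := by
    rw [Z_tube]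
    exact contDiffAt_branchArg (tubeScale_pos w)
  have hnorm : ContDiffAt ℝ ∞ (fun p => (‖Z p‖ : ℂ)) (tube s w : E) :=
    Complex.ofRealCLM.contDiff.contDiffAt.comp _ (contDiff_Z.contDiffAt.norm ℝ hZ)
  refine (harg.comp _ contDiff_Z.contDiffAt).prodMk ?_
  simp only [div_eq_mul_inv]
  exact contDiff_W.contDiffAt.mul (hnorm.inv (by simpa using hZ))

lemma tubeInv_tube {s₀ s : ℝ} (h : |s - s₀| < π) (w : ℂ) : tubeInv s₀ (tube s w) = (s, w) := by
  have hscale : (tubeScale w : ℂ) ≠ 0 := by exact_mod_cast (tubeScale_pos w).ne'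
  rw [tubeInv, norm_Z_tube, W_tube, Z_tube, branchArg_real_mul_exp (tubeScale_pos w) h,
    mul_div_cancel_left₀ _ hscale]

lemma tubeScale_div_norm_Z {p : Sph} (hZ : Z (p : E) ≠ 0) :
    tubeScale (W (p : E) / ‖Z (p : E)‖) = ‖Z (p : E)‖ := by
  have _hpos : 0 < ‖Z (p : E)‖ := norm_pos_iff.2 hZ
  have hsq : 1 + (‖W (p : E)‖ / ‖Z (p : E)‖) ^ 2 = ‖Z (p : E)‖⁻¹ ^ 2 := by
    field_simp
    exact norm_Z_sq_add_norm_W_sq p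
  rw [tubeScale, norm_div, Complex.norm_real, norm_norm, hsq, Real.sqrt_sq (by positivity), inv_inv]

lemma tube_tubeInv (s₀ : ℝ) {p : Sph} (hZ : Z (p : E) ≠ 0) :
    tube (tubeInv s₀ p).1 (tubeInv s₀ p).2 = p := by
  have hnorm : (‖Z (p : E)‖ : ℂ) ≠ 0 := by simpa using hZ
  refine Subtype.ext (ext_Z_W ?_ ?_)
  · rw [Z_tube, tubeInv, tubeScale_div_norm_Z hZ, norm_mul_exp_branchArg]
  · rw [W_tube, tubeInv, tubeScale_div_norm_Z hZ, mul_div_cancel₀ _ hnorm]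

lemma isParamAt_tube (q : ℝ × ℂ) : IsParamAt (fun q : ℝ × ℂ => tube q.1 q.2) q := by
  refine ⟨fun p => tubeInv q.1 p, contMDiff_tube _, ?_, ?_, ?_⟩
  · exact ContMDiffAt.comp (f := fun p : Sph => (p : E)) _
      (contDiffAt_tubeInv q.1 q.2).contMDiffAt contMDiff_coe_sph.contMDiffAt
  · have hcont : ContinuousAt (fun q' : ℝ × ℂ => |q'.1 - q.1|) q := by fun_prop
    filter_upwards [hcont.eventually (Iio_mem_nhds (by simpa using Real.pi_pos))] with q' hq'
    exact tubeInv_tube hq' _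
  · have hcont : Continuous fun p : Sph => Z p := continuous_Z.comp continuous_subtype_val
    filter_upwards [hcont.continuousAt.eventually_ne (Z_tube_ne_zero q.1 q.2)] with p hp
    exact tube_tubeInv q.1 hp

namespace IsParamAt

section Comp
variable {V V' : Type*} [NormedAddCommGroup V] [NormedSpace ℝ V] [NormedAddCommGroup V']
  [NormedSpace ℝ V'] {Y : V → Sph} {v₀ : V}

lemma perm (hY : IsParamAt Y v₀) (Ψ : Equiv.Perm Sph)
    (hΨ : ContMDiffAt (𝓡 3) (𝓡 3) ∞ Ψ (Y v₀))
    (hΨ' : ContMDiffAt (𝓡 3) (𝓡 3) ∞ Ψ.symm (Ψ (Y v₀))) :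
    IsParamAt (fun v => Ψ (Y v)) v₀ := by
  obtain ⟨R, hR⟩ := hY
  have hsymm : Ψ.symm (Ψ (Y v₀)) = Y v₀ := Ψ.symm_apply_apply _
  refine ⟨fun x => R (Ψ.symm x), hΨ.comp v₀ hR.contMDiffAt, ?_, ?_, ?_⟩
  · exact ContMDiffAt.comp (g := R) _ (by rw [hsymm]; exact hR.contMDiffAt_inv) hΨ'
  · filter_upwards [hR.left_inv] with v hv
    rwa [Ψ.symm_apply_apply]
  · have hright : ∀ᶠ x in 𝓝 (Ψ.symm (Ψ (Y v₀))), Y (R x) = x := by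
      rw [hsymm]
      exact hR.right_inv
    filter_upwards [hΨ'.continuousAt.eventually hright] with x hx
    rw [hx, Ψ.apply_symm_apply]

lemma precomp {g : V' → V} {k : V → V'} {u₀ : V'} (hY : IsParamAt Y (g u₀))
    (hg : ContDiffAt ℝ ∞ g u₀) (hk : ContDiffAt ℝ ∞ k (g u₀))
    (hkg : ∀ᶠ u in 𝓝 u₀, k (g u) = u) (hgk : ∀ᶠ v in 𝓝 (g u₀), g (k v) = v) :
    IsParamAt (fun u => Y (g u)) u₀ := by
  obtain ⟨R, hR⟩ := hY
  have hcont : Tendsto R (𝓝 (Y (g u₀))) (𝓝 (g u₀)) := by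
    simpa only [ContinuousAt, hR.self] using hR.contMDiffAt_inv.continuousAt
  refine ⟨fun x => k (R x), hR.contMDiffAt.comp u₀ hg.contMDiffAt, ?_, ?_, ?_⟩
  · exact ContMDiffAt.comp (g := k) _ (by rw [hR.self]; exact hk.contMDiffAt) hR.contMDiffAt_inv
  · filter_upwards [hkg, hg.continuousAt.eventually hR.left_inv] with u h₁ h₂
    rw [h₂, h₁]
  · filter_upwards [hR.right_inv, hcont.eventually hgk] with x h₁ h₂
    rw [h₂, h₁]

end Comp

lemma extChartAt_symm (x : Sph) :
    IsParamAt (fun u : E3 => (extChartAt (𝓡 3) x).symm u) (extChartAt (𝓡 3) x x) := by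
  have hx : (extChartAt (𝓡 3) x).symm (extChartAt (𝓡 3) x x) = x := extChartAt_to_inv x
  refine ⟨extChartAt (𝓡 3) x, (contMDiffOn_extChartAt_symm x).contMDiffAt
    (extChartAt_target_mem_nhds x), ?_, ?_, ?_⟩
  · rw [hx]
    exact contMDiffAt_extChartAt
  · filter_upwards [extChartAt_target_mem_nhds (I := 𝓡 3) x] with u hu
    exact (extChartAt (𝓡 3) x).right_inv hu
  · rw [hx]
    filter_upwards [extChartAt_source_mem_nhds (I := 𝓡 3) x] with y hy
    exact (extChartAt (𝓡 3) x).left_inv hy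

end IsParamAt

lemma branchArg_scaledPolar {ε φ₀ x φ : ℝ} (hε : 0 < ε) (hx : 0 < x) (h : |φ - φ₀| < π) :
    branchArg φ₀ (scaledPolar ε x φ) = φ :=
  branchArg_real_mul_exp (mul_pos hε hx) h

lemma scaledPolar_branchArg {ε : ℝ} (hε : ε ≠ 0) (φ₀ : ℝ) (w : ℂ) :
    scaledPolar ε (‖w‖ / ε) (branchArg φ₀ w) = w := by
  rw [scaledPolar, mul_div_cancel₀ _ hε, norm_mul_exp_branchArg]

lemma scaledPolar_ne_zero {ε x : ℝ} (hε : 0 < ε) (hx : 0 < x) (φ : ℝ) :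
    scaledPolar ε x φ ≠ 0 := by
  rw [← norm_pos_iff, norm_scaledPolar]
  exact abs_pos.2 (mul_pos hε hx).ne'

lemma IsParamAt.comp_twistedPolar {Y : ℝ × ℂ → Sph} {ε : ℝ} (hε : 0 < ε) (n : ℤ) {s₀ x₀ φ₀ : ℝ}
    (hx : 0 < x₀) (hY : IsParamAt Y (s₀ + n * φ₀, scaledPolar ε x₀ φ₀)) :
    IsParamAt (fun p : P3 => Y (p.1 + n * p.2.2, scaledPolar ε p.2.1 p.2.2)) (s₀, x₀, φ₀) := by
  have hw₀ := scaledPolar_ne_zero hε hx φ₀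
  have harg : ContDiffAt ℝ ∞ (fun q : ℝ × ℂ => branchArg φ₀ q.2)
      (s₀ + n * φ₀, scaledPolar ε x₀ φ₀) :=
    ContDiffAt.comp (g := branchArg φ₀) _ (contDiffAt_branchArg (mul_pos hε hx)) contDiffAt_snd
  refine hY.precomp (g := fun p : P3 => (p.1 + n * p.2.2, scaledPolar ε p.2.1 p.2.2))
    (k := fun q : ℝ × ℂ => (q.1 - n * branchArg φ₀ q.2, ‖q.2‖ / ε, branchArg φ₀ q.2)) ?_ ?_ ?_ ?_
  · exact ((by fun_prop : ContDiff ℝ ∞ fun p : P3 => p.1 + n * p.2.2).prodMk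
      ((contDiff_scaledPolar ε).comp contDiff_snd)).contDiffAt
  · exact (contDiffAt_fst.sub (contDiffAt_const.mul harg)).prodMk
      (((contDiffAt_snd.norm ℝ hw₀).div_const ε).prodMk harg)
  · have hφ : ContinuousAt (fun p : P3 => |p.2.2 - φ₀|) (s₀, x₀, φ₀) := by fun_prop
    have hx' : ContinuousAt (fun p : P3 => p.2.1) (s₀, x₀, φ₀) := by fun_prop
    filter_upwards [hφ.eventually (Iio_mem_nhds (by simpa using Real.pi_pos)),
      hx'.eventually (Ioi_mem_nhds hx)] with p hpφ (hpx : 0 < p.2.1)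
    simp only [branchArg_scaledPolar hε hpx hpφ, norm_scaledPolar, abs_of_pos (mul_pos hε hpx),
      mul_div_cancel_left₀ _ hε.ne', add_sub_cancel_right]
  · refine Eventually.of_forall fun q => ?_
    simp only [scaledPolar_branchArg hε.ne', sub_add_cancel]

/-! ### The twist `β` -/

lemma unitC_ne_zero (w : ℂ) : unitC w ≠ 0 := by
  unfold unitC
  split_ifs with h
  · exact one_ne_zero
  · exact div_ne_zero h (by simpa using h)

lemma unitC_real_mul_exp {r : ℝ} (hr : 0 < r) (φ : ℝ) :
    unitC (r * Complex.exp (φ * Complex.I)) = Complex.exp (φ * Complex.I) := by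
  have hr' : (r : ℂ) ≠ 0 := by exact_mod_cast hr.ne'
  rw [unitC, if_neg (mul_ne_zero hr' (Complex.exp_ne_zero _)), norm_mul,
    Complex.norm_exp_ofReal_mul_I, Complex.norm_real, Real.norm_eq_abs, abs_of_pos hr, mul_one,
    mul_div_cancel_left₀ _ hr']

namespace IsBetaMap
variable {β : Equiv.Perm Sph} (hβ : IsBetaMap β)
include hβ

lemma Z_W_symm_apply (p : Sph) :
    Z (β.symm p : E) = Z (p : E) * (unitC (W (p : E)))⁻¹ ∧ W (β.symm p : E) = W (p : E) := by
  obtain ⟨hZ, hW⟩ := hβ (β.symm p)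
  rw [Equiv.apply_symm_apply] at hZ hW
  exact ⟨by rw [hZ, hW, mul_inv_cancel_right₀ (unitC_ne_zero _)], hW.symm⟩

lemma Z_W_zpow_apply (n : ℤ) (p : Sph) :
    Z ((β ^ n) p : E) = Z (p : E) * unitC (W (p : E)) ^ n ∧ W ((β ^ n) p : E) = W (p : E) := by
  induction n with
  | zero => simp
  | succ n ih =>
    obtain ⟨hZ, hW⟩ := hβ ((β ^ (n : ℤ)) p)
    rw [add_comm, zpow_add, Equiv.Perm.mul_apply, zpow_one, hZ, hW, ih.1, ih.2,
      zpow_add₀ (unitC_ne_zero _), zpow_one]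
    exact ⟨by ring, rfl⟩
  | pred n ih =>
    obtain ⟨hZ, hW⟩ := hβ.Z_W_symm_apply ((β ^ (-(n : ℤ))) p)
    rw [sub_eq_neg_add, zpow_add, Equiv.Perm.mul_apply, zpow_neg_one, Equiv.Perm.inv_def, hZ, hW,
      ih.1, ih.2, zpow_add₀ (unitC_ne_zero _), zpow_neg_one]
    exact ⟨by ring, rfl⟩

lemma zpow_tube_scaledPolar (n : ℤ) {s ε x φ : ℝ} (hε : 0 < ε) (hx : 0 < x) :
    (β ^ n) (tube s (scaledPolar ε x φ)) = tube (s + n * φ) (scaledPolar ε x φ) := by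
  obtain ⟨hZ, hW⟩ := hβ.Z_W_zpow_apply n (tube s (scaledPolar ε x φ))
  refine Subtype.ext (ext_Z_W ?_ ?_)
  · have hunit : unitC (W (tube s (scaledPolar ε x φ) : E)) = Complex.exp (φ * Complex.I) := by
      rw [W_tube, scaledPolar, ← mul_assoc, ← Complex.ofReal_mul,
        unitC_real_mul_exp (mul_pos (tubeScale_pos _) (mul_pos hε hx))]
    rw [hZ, hunit, Z_tube, Z_tube, ← Complex.exp_int_mul, mul_assoc, ← Complex.exp_add]
    push_cast
    ring_nf
  · rw [hW, W_tube, W_tube]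

lemma zpow_apply_of_W_eq_zero (n : ℤ) {p : Sph} (h : W (p : E) = 0) : (β ^ n) p = p := by
  obtain ⟨hZ, hW⟩ := hβ.Z_W_zpow_apply n p
  refine Subtype.ext (ext_Z_W ?_ hW)
  rw [hZ, h, unitC, if_pos rfl, one_zpow, mul_one]

end IsBetaMap

/-! ### Orientation -/

lemma det4_eq_basis_det (a b c d : E) :
    det4 a b c d = (EuclideanSpace.basisFun (Fin 4) ℝ).toBasis.det ![a, b, c, d] := by
  rw [det4, Module.Basis.det_apply, ← Matrix.det_transpose]
  congr 1
  ext i j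
  fin_cases j <;> simp [Module.Basis.toMatrix_apply]

lemma det4_map (A : E →L[ℝ] E) (a b c d : E) :
    det4 (A a) (A b) (A c) (A d) = A.det * det4 a b c d := by
  rw [det4_eq_basis_det, det4_eq_basis_det, ContinuousLinearMap.det, ← Module.Basis.det_comp]
  congr 1
  ext i : 1
  fin_cases i <;> rfl

lemma det4_smul_smul (a b c d : E) (η : ℝ) : det4 a b (η • c) (η • d) = η ^ 2 * det4 a b c d := by
  simp only [det4, Matrix.det_succ_row_zero, Fin.sum_univ_succ]
  simp
  ring

lemma exists_eq_add_of_det4_ne_zero {a b c d : E} (h : det4 a b c d ≠ 0) (v : E) :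
    ∃ k₀ k₁ k₂ k₃ : ℝ, k₀ • a + k₁ • b + k₂ • c + k₃ • d = v := by
  rw [det4_eq_basis_det, ← isUnit_iff_ne_zero, ← Module.Basis.is_basis_iff_det] at h
  have hv : v ∈ Submodule.span ℝ (range ![a, b, c, d]) := h.2 ▸ Submodule.mem_top
  obtain ⟨k, hk⟩ := (Submodule.mem_span_range_iff_exists_fun ℝ).1 hv
  refine ⟨k 0, k 1, k 2, k 3, ?_⟩
  simpa [Fin.sum_univ_four] using hk

lemma det_eq_one_of_shear {A : E →L[ℝ] E} {c : ℂ} (T : ℂ →L[ℝ] ℂ) (hc : ‖c‖ = 1)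
    (hA : ∀ v, A v = mk4 (Z v * c + T (W v)) (W v)) : A.det = 1 := by
  have hdet := det4_map A (mk4 1 0) (mk4 Complex.I 0) (mk4 0 1) (mk4 0 Complex.I)
  have hone : det4 (mk4 1 0) (mk4 Complex.I 0) (mk4 0 1) (mk4 0 Complex.I) = 1 := by
    simp [det4, mk4, Matrix.det_succ_row_zero, Fin.sum_univ_succ, Fin.succAbove]
  have hcc : c.re * c.re + c.im * c.im = 1 := by
    rw [← Complex.normSq_apply, Complex.normSq_eq_norm_sq, hc, one_pow]
  rw [hone, mul_one] at hdet
  rw [← hdet]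
  simp only [hA, Z_mk4, W_mk4, map_zero]
  simp [det4, mk4, Matrix.det_succ_row_zero, Fin.sum_univ_succ, Fin.succAbove]
  linarith

lemma norm_unitC (w : ℂ) : ‖unitC w‖ = 1 := by
  unfold unitC
  split_ifs with h
  · exact norm_one
  · rw [norm_div, Complex.norm_real, norm_norm, div_self (norm_ne_zero_iff.2 h)]

lemma unitC_smul {r : ℝ} (hr : 0 < r) (w : ℂ) : unitC (r • w) = unitC w := by
  have hr' : (r : ℂ) ≠ 0 := by exact_mod_cast hr.ne'
  by_cases hw : w = 0
  · rw [hw, smul_zero]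
  · rw [unitC, unitC, if_neg hw, if_neg (smul_ne_zero hr.ne' hw), norm_smul, Real.norm_eq_abs,
      abs_of_pos hr, Complex.real_smul, Complex.ofReal_mul, mul_div_mul_left _ _ hr']

lemma contDiffAt_unitC_zpow (n : ℤ) {w₀ : ℂ} (h : w₀ ≠ 0) :
    ContDiffAt ℝ ∞ (fun w => unitC w ^ n) w₀ := by
  have hnorm : ContDiffAt ℝ ∞ (fun w : ℂ => (‖w‖ : ℂ)) w₀ :=
    Complex.ofRealCLM.contDiff.contDiffAt.comp w₀ (contDiffAt_norm ℝ h)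
  have hunit : ContDiffAt ℝ ∞ unitC w₀ := by
    refine (contDiffAt_id.mul (hnorm.inv (by simpa using h))).congr_of_eventuallyEq ?_
    filter_upwards [isOpen_ne.mem_nhds h] with w (hw : w ≠ 0)
    rw [unitC, if_neg hw, div_eq_mul_inv]
    rfl
  cases n with
  | ofNat k => simpa only [Int.ofNat_eq_natCast, zpow_natCast] using hunit.pow k
  | negSucc k =>
    simp only [zpow_negSucc]
    exact (hunit.pow (k + 1)).inv (pow_ne_zero _ (unitC_ne_zero _))

/-- The extension of `βⁿ` to `ℂ²` by the formula `(z, w) ↦ (z (w/|w|)ⁿ, w)`. -/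
def ambientTwist (n : ℤ) (y : E) : E := mk4 (Z y * unitC (W y) ^ n) (W y)

lemma contDiffAt_ambientTwist (n : ℤ) {y : E} (h : W y ≠ 0) :
    ContDiffAt ℝ ∞ (ambientTwist n) y :=
  contDiff_mk4.contDiffAt.comp (f := fun y => (Z y * unitC (W y) ^ n, W y)) y
    ((contDiff_Z.contDiffAt.mul (ContDiffAt.comp (g := fun w => unitC w ^ n) y
      (contDiffAt_unitC_zpow n h) contDiff_W.contDiffAt)).prodMk contDiff_W.contDiffAt)

lemma ambientTwist_smul (n : ℤ) {r : ℝ} (hr : 0 < r) (y : E) :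
    ambientTwist n (r • y) = r • ambientTwist n y := by
  have hZ : Z (r • y) = r • Z y := ZL.map_smul r y
  have hW : W (r • y) = r • W y := WL.map_smul r y
  rw [ambientTwist, hZ, hW, unitC_smul hr, smul_mul_assoc]
  exact mkL.map_smul r (Z y * unitC (W y) ^ n, W y)

lemma det_fderiv_ambientTwist (n : ℤ) {y : E} (h : W y ≠ 0) :
    (fderiv ℝ (ambientTwist n) y).det = 1 := by
  set u : ℂ → ℂ := fun w => unitC w ^ n
  have hu : HasFDerivAt (fun y => u (W y)) ((fderiv ℝ u (W y)).comp WL) y :=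
    ((contDiffAt_unitC_zpow n h).differentiableAt (by simp)).hasFDerivAt.comp y WL.hasFDerivAt
  have hprod := (ZL.hasFDerivAt (x := y)).mul hu
  have hderiv := (mkL.hasFDerivAt (x := (Z y * u (W y), W y))).comp y
    (hprod.prodMk WL.hasFDerivAt)
  have htwist : fderiv ℝ (ambientTwist n) y = _ := HasFDerivAt.fderiv hderiv
  have hnorm : ‖u (W y)‖ = 1 := by rw [norm_zpow, norm_unitC, one_zpow]
  refine det_eq_one_of_shear (Z y • fderiv ℝ u (W y)) hnorm fun v => ?_
  rw [htwist]
  change mk4 (Z y * fderiv ℝ u (W y) (W v) + u (W y) * Z v) (W v) = _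
  rw [smul_apply, smul_eq_mul, add_comm, mul_comm (Z v)]

namespace IsBetaMap
variable {β : Equiv.Perm Sph} (hβ : IsBetaMap β)
include hβ

lemma coe_zpow_apply (n : ℤ) (p : Sph) : ((β ^ n) p : E) = ambientTwist n p := by
  obtain ⟨hZ, hW⟩ := hβ.Z_W_zpow_apply n p
  exact ext_Z_W (by rw [hZ, ambientTwist, Z_mk4]) (by rw [hW, ambientTwist, W_mk4])

lemma contMDiffAt_zpow (n : ℤ) {p : Sph} (h : W (p : E) ≠ 0) :
    ContMDiffAt (𝓡 3) (𝓡 3) ∞ (β ^ n) p := by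
  refine contMDiffAt_sph_of_coe ?_
  rw [funext (hβ.coe_zpow_apply n)]
  exact (contDiffAt_ambientTwist n h).contMDiffAt.comp p (contMDiff_coe_sph p)

end IsBetaMap

/-- The radial projection of `ℝ⁴ ∖ 0` onto the sphere, with a junk value at the origin. -/
def sphProj (y : E) : Sph :=
  if h : y ≠ 0 then ⟨‖y‖⁻¹ • y, by
    rw [mem_sphere_zero_iff_norm, norm_smul, norm_inv, norm_norm,
      inv_mul_cancel₀ (norm_ne_zero_iff.2 h)]⟩
  else tube 0 0

lemma coe_sphProj {y : E} (h : y ≠ 0) : (sphProj y : E) = ‖y‖⁻¹ • y := by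
  rw [sphProj, dif_pos h]

lemma coe_sph_ne_zero (p : Sph) : (p : E) ≠ 0 := ne_zero_of_mem_unit_sphere p

lemma sphProj_smul {r : ℝ} (hr : 0 < r) (p : Sph) : sphProj (r • (p : E)) = p := by
  refine Subtype.ext ?_
  rw [coe_sphProj (smul_ne_zero hr.ne' (coe_sph_ne_zero p)), norm_smul, norm_eq_of_mem_sphere,
    Real.norm_eq_abs, abs_of_pos hr, smul_smul, mul_one, inv_mul_cancel₀ hr.ne', one_smul]

lemma sphProj_coe (p : Sph) : sphProj (p : E) = p := by
  simpa only [one_smul] using sphProj_smul one_pos p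

lemma contMDiffAt_sphProj {y : E} (h : y ≠ 0) : ContMDiffAt 𝓘(ℝ, E) (𝓡 3) ∞ sphProj y := by
  refine contMDiffAt_sph_of_coe (ContDiffAt.contMDiffAt ?_)
  refine (((contDiffAt_norm ℝ h).inv (norm_ne_zero_iff.2 h)).smul
    contDiffAt_id).congr_of_eventuallyEq ?_
  filter_upwards [isOpen_ne.mem_nhds h] with z hz
  exact coe_sphProj hz

/-- The positively homogeneous extension of degree one of a self-map of the sphere. It turns
orientations of `S³` into determinants in `ℝ⁴`. -/
def homogExt (Ψ : Sph → Sph) (y : E) : E := ‖y‖ • (Ψ (sphProj y) : E)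

variable {Ψ Ψ' : Sph → Sph} {p : Sph}

lemma homogExt_smul (Ψ : Sph → Sph) {r : ℝ} (hr : 0 < r) (p : Sph) :
    homogExt Ψ (r • (p : E)) = r • (Ψ p : E) := by
  rw [homogExt, sphProj_smul hr, norm_smul, norm_eq_of_mem_sphere, Real.norm_eq_abs,
    abs_of_pos hr, mul_one]

lemma homogExt_coe (Ψ : Sph → Sph) (p : Sph) : homogExt Ψ p = Ψ p := by
  simpa only [one_smul] using homogExt_smul Ψ one_pos p

lemma contDiffAt_homogExt (h : ContMDiffAt (𝓡 3) (𝓡 3) ∞ Ψ p) :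
    ContDiffAt ℝ ∞ (homogExt Ψ) (p : E) := by
  have hcomp : ContMDiffAt 𝓘(ℝ, E) 𝓘(ℝ, E) ∞ (fun y => (Ψ (sphProj y) : E)) (p : E) := by
    refine ContMDiffAt.comp _ (contMDiff_coe_sph _) (ContMDiffAt.comp (g := Ψ) _ ?_
      (contMDiffAt_sphProj (coe_sph_ne_zero p)))
    rwa [sphProj_coe]
  exact (contDiffAt_norm ℝ (coe_sph_ne_zero p)).smul hcomp.contDiffAt

lemma homogExt_comp (Ψ Ψ' : Sph → Sph) {y : E} (h : y ≠ 0) :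
    homogExt (Ψ ∘ Ψ') y = homogExt Ψ (homogExt Ψ' y) :=
  (homogExt_smul Ψ (norm_pos_iff.2 h) (Ψ' (sphProj y))).symm

lemma fderiv_homogExt_apply_self (h : ContMDiffAt (𝓡 3) (𝓡 3) ∞ Ψ p) :
    fderiv ℝ (homogExt Ψ) (p : E) (p : E) = Ψ p := by
  have hderiv : HasFDerivAt (homogExt Ψ) (fderiv ℝ (homogExt Ψ) (p : E)) ((1 : ℝ) • (p : E)) := by
    rw [one_smul]
    exact ((contDiffAt_homogExt h).differentiableAt (by simp)).hasFDerivAt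
  have hray := hderiv.comp_hasDerivAt (1 : ℝ) ((hasDerivAt_id (1 : ℝ)).smul_const (p : E))
  have hline := (hasDerivAt_id (1 : ℝ)).smul_const (Ψ p : E)
  have heq : (homogExt Ψ ∘ fun t : ℝ => t • (p : E)) =ᶠ[𝓝 1] fun t : ℝ => t • (Ψ p : E) := by
    filter_upwards [Ioi_mem_nhds (zero_lt_one' ℝ)] with t ht
    exact homogExt_smul Ψ ht p
  simpa only [one_smul] using hray.unique (hline.congr_of_eventuallyEq heq)

/-- The Jacobian determinant of a self-map of the sphere. -/
def sphJac (Ψ : Sph → Sph) (p : Sph) : ℝ := (fderiv ℝ (homogExt Ψ) (p : E)).det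

lemma sphJac_comp (hΨ : ContMDiffAt (𝓡 3) (𝓡 3) ∞ Ψ (Ψ' p))
    (hΨ' : ContMDiffAt (𝓡 3) (𝓡 3) ∞ Ψ' p) :
    sphJac (Ψ ∘ Ψ') p = sphJac Ψ (Ψ' p) * sphJac Ψ' p := by
  have heq : homogExt (Ψ ∘ Ψ') =ᶠ[𝓝 (p : E)] homogExt Ψ ∘ homogExt Ψ' := by
    filter_upwards [isOpen_ne.mem_nhds (coe_sph_ne_zero p)] with y hy
    exact homogExt_comp Ψ Ψ' hy
  have hdiff : DifferentiableAt ℝ (homogExt Ψ) (homogExt Ψ' p) := by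
    rw [homogExt_coe]
    exact (contDiffAt_homogExt hΨ).differentiableAt (by simp)
  rw [sphJac, heq.fderiv_eq,
    fderiv_comp _ hdiff ((contDiffAt_homogExt hΨ').differentiableAt (by simp)), homogExt_coe]
  exact LinearMap.det_comp _ _

lemma sphJac_id (p : Sph) : sphJac id p = 1 := by
  have heq : homogExt id =ᶠ[𝓝 (p : E)] id := by
    filter_upwards [isOpen_ne.mem_nhds (coe_sph_ne_zero p)] with y hy
    rw [homogExt, id, coe_sphProj hy, smul_smul, mul_inv_cancel₀ (norm_ne_zero_iff.2 hy),
      one_smul, id]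
  rw [sphJac, heq.fderiv_eq, fderiv_id]
  exact LinearMap.det_id

lemma continuous_sphJac (h : ContMDiff (𝓡 3) (𝓡 3) ∞ Ψ) : Continuous (sphJac Ψ) := by
  refine ContinuousLinearMap.continuous_det.comp (continuous_iff_continuousAt.2 fun x => ?_)
  exact ((contDiffAt_homogExt (h x)).fderiv_right (m := 0) (by simp)).continuousAt.comp
    continuous_subtype_val.continuousAt

lemma sphJac_mul_pos (h : ContMDiff (𝓡 3) (𝓡 3) ∞ Ψ) (h₀ : ∀ p, sphJac Ψ p ≠ 0) (p q : Sph) :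
    0 < sphJac Ψ p * sphJac Ψ q := by
  have hrank : 1 < Module.rank ℝ E := by
    rw [← Module.finrank_eq_rank]
    simp
  have : PreconnectedSpace Sph := Subtype.preconnectedSpace (isPreconnected_sphere hrank 0 1)
  have hcont := continuous_sphJac h
  by_contra hneg
  rcases mul_neg_iff.1 (lt_of_le_of_ne (not_lt.1 hneg) (mul_ne_zero (h₀ p) (h₀ q))) with
    ⟨hp, hq⟩ | ⟨hp, hq⟩
  · obtain ⟨x, hx⟩ := mem_range_of_exists_le_of_exists_ge hcont ⟨q, hq.le⟩ ⟨p, hp.le⟩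
    exact h₀ x hx
  · obtain ⟨x, hx⟩ := mem_range_of_exists_le_of_exists_ge hcont ⟨p, hp.le⟩ ⟨q, hq.le⟩
    exact h₀ x hx

lemma IsBetaMap.sphJac_zpow {β : Equiv.Perm Sph} (hβ : IsBetaMap β) (n : ℤ)
    (h : W (p : E) ≠ 0) : sphJac (β ^ n : Equiv.Perm Sph) p = 1 := by
  have heq : homogExt (β ^ n : Equiv.Perm Sph) =ᶠ[𝓝 (p : E)] ambientTwist n := by
    filter_upwards [isOpen_ne.mem_nhds (coe_sph_ne_zero p)] with y (hy : y ≠ 0)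
    have hy' : 0 < ‖y‖ := norm_pos_iff.2 hy
    rw [homogExt, hβ.coe_zpow_apply, coe_sphProj hy, ambientTwist_smul n (inv_pos.2 hy'),
      smul_smul, mul_inv_cancel₀ hy'.ne', one_smul]
  rw [sphJac, heq.fderiv_eq, det_fderiv_ambientTwist n h]

lemma sphJac_symm_mul (δ : Sph ≃ₘ⟮𝓡 3, 𝓡 3⟯ Sph) (x : Sph) :
    sphJac δ.symm (δ x) * sphJac δ x = 1 := by
  rw [← sphJac_comp (δ.symm.contMDiff _) (δ.contMDiff x),
    funext (f := δ.symm ∘ δ) (g := id) fun y => δ.symm_apply_apply y, sphJac_id]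

lemma sphJac_symm_mul_sphJac_pos (δ : Sph ≃ₘ⟮𝓡 3, 𝓡 3⟯ Sph) (p q : Sph) :
    0 < sphJac δ.symm q * sphJac δ p := by
  have hinv := sphJac_symm_mul δ (δ.symm q)
  rw [δ.apply_symm_apply] at hinv
  have hpos := sphJac_mul_pos δ.contMDiff
    (fun x => right_ne_zero_of_mul_eq_one (sphJac_symm_mul δ x)) (δ.symm q) p
  rw [eq_inv_of_mul_eq_one_left hinv]
  rcases pos_and_pos_or_neg_and_neg_of_mul_pos hpos with ⟨ha, hb⟩ | ⟨ha, hb⟩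
  · exact mul_pos (inv_pos.2 ha) hb
  · exact mul_pos_of_neg_of_neg (inv_lt_zero.2 ha) hb

section Tangent
variable {g : ℝ × ℂ → Sph} {q : ℝ × ℂ}

lemma contDiffAt_coe_of_contMDiffAt (h : ContMDiffAt 𝓘(ℝ, ℝ × ℂ) (𝓡 3) ∞ g q) :
    ContDiffAt ℝ ∞ (fun u => (g u : E)) q :=
  (ContMDiffAt.comp (g := fun p : Sph => (p : E)) q (contMDiff_coe_sph _) h).contDiffAt

lemma tangAmb_eq_fderiv (h : ContMDiffAt 𝓘(ℝ, ℝ × ℂ) (𝓡 3) ∞ g q) :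
    tangAmb g q = fderiv ℝ (fun u => (g u : E)) q := by
  have hcomp := mfderiv_comp q ((contMDiff_coe_sph (g q)).mdifferentiableAt (by simp))
    (h.mdifferentiableAt (by simp))
  rw [mfderiv_eq_fderiv] at hcomp
  exact congrArg DFunLike.coe hcomp.symm

lemma det4_tangAmb_comp (hg : ContMDiffAt 𝓘(ℝ, ℝ × ℂ) (𝓡 3) ∞ g q)
    (hΨ : ContMDiffAt (𝓡 3) (𝓡 3) ∞ Ψ (g q)) (a b c : ℝ × ℂ) :
    det4 (Ψ (g q) : E) (tangAmb (Ψ ∘ g) q a) (tangAmb (Ψ ∘ g) q b) (tangAmb (Ψ ∘ g) q c) =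
      sphJac Ψ (g q) * det4 (g q : E) (tangAmb g q a) (tangAmb g q b) (tangAmb g q c) := by
  have hcoe : (fun u => ((Ψ ∘ g) u : E)) = homogExt Ψ ∘ fun u => (g u : E) :=
    funext fun u => (homogExt_coe Ψ (g u)).symm
  have hchain (v : ℝ × ℂ) :
      tangAmb (Ψ ∘ g) q v = fderiv ℝ (homogExt Ψ) (g q : E) (tangAmb g q v) := by
    rw [tangAmb_eq_fderiv (hΨ.comp q hg), tangAmb_eq_fderiv hg, hcoe,
      fderiv_comp q ((contDiffAt_homogExt hΨ).differentiableAt (by simp))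
        ((contDiffAt_coe_of_contMDiffAt hg).differentiableAt (by simp))]
    rfl
  rw [hchain, hchain, hchain, ← fderiv_homogExt_apply_self hΨ, det4_map, sphJac]

end Tangent

/-! ### The twist along an unknot -/

/-- Coordinates of the complement of `δ⁻¹ {z = 0}`, in which the unknot `δ⁻¹(O)` is `w = 0`. -/
def unknotTube (δ : Sph ≃ₘ⟮𝓡 3, 𝓡 3⟯ Sph) (q : ℝ × ℂ) : Sph := δ.symm (tube q.1 q.2)

section UnknotTube
variable (δ : Sph ≃ₘ⟮𝓡 3, 𝓡 3⟯ Sph)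

lemma unknotTube_add_two_pi (s : ℝ) (w : ℂ) :
    unknotTube δ (s + 2 * π, w) = unknotTube δ (s, w) := by
  rw [unknotTube, unknotTube, tube_add_two_pi]

lemma contMDiff_unknotTube : ContMDiff 𝓘(ℝ, ℝ × ℂ) (𝓡 3) ∞ (unknotTube δ) :=
  δ.symm.contMDiff.comp contMDiff_tube

lemma isParamAt_unknotTube (q : ℝ × ℂ) : IsParamAt (unknotTube δ) q :=
  (isParamAt_tube q).perm δ.symm.toEquiv (δ.symm.contMDiff _) (δ.contMDiff _)

end UnknotTube

/-- The `n`-fold twist `δ⁻¹ ∘ βⁿ ∘ δ` along the unknot `δ⁻¹(O)`. -/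
def twist (β : Equiv.Perm Sph) (δ : Sph ≃ₘ⟮𝓡 3, 𝓡 3⟯ Sph) (n : ℤ) : Equiv.Perm Sph :=
  (δ.toEquiv.trans (β ^ n)).trans δ.symm.toEquiv

section Twist
variable {β : Equiv.Perm Sph} {δ : Sph ≃ₘ⟮𝓡 3, 𝓡 3⟯ Sph} {n : ℤ} {x : Sph}

lemma twist_apply (β : Equiv.Perm Sph) (δ : Sph ≃ₘ⟮𝓡 3, 𝓡 3⟯ Sph) (n : ℤ) (x : Sph) :
    twist β δ n x = δ.symm ((β ^ n) (δ x)) := rfl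

lemma twist_symm_apply (β : Equiv.Perm Sph) (δ : Sph ≃ₘ⟮𝓡 3, 𝓡 3⟯ Sph) (n : ℤ) (y : Sph) :
    twist β δ n (δ.symm y) = δ.symm ((β ^ n) y) := by
  rw [twist_apply, δ.apply_symm_apply]

lemma twist_symm (β : Equiv.Perm Sph) (δ : Sph ≃ₘ⟮𝓡 3, 𝓡 3⟯ Sph) (n : ℤ) :
    (twist β δ n).symm = twist β δ (-n) := by
  ext1 x
  rw [twist_apply, zpow_neg]
  rfl

variable (hβ : IsBetaMap β)
include hβ

lemma W_apply_twist (x : Sph) : W (δ (twist β δ n x) : E) = W (δ x : E) := by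
  rw [twist_apply, δ.apply_symm_apply, (hβ.Z_W_zpow_apply n _).2]

lemma contMDiffAt_twist (h : W (δ x : E) ≠ 0) : ContMDiffAt (𝓡 3) (𝓡 3) ∞ (twist β δ n) x :=
  (δ.symm.contMDiff _).comp x ((hβ.contMDiffAt_zpow n h).comp x (δ.contMDiff x))

lemma contMDiffAt_twist_symm (h : W (δ x : E) ≠ 0) :
    ContMDiffAt (𝓡 3) (𝓡 3) ∞ (twist β δ n).symm (twist β δ n x) := by
  rw [twist_symm]
  exact contMDiffAt_twist hβ (by rwa [W_apply_twist hβ])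

lemma sphJac_twist_pos (h : W (δ x : E) ≠ 0) : 0 < sphJac (twist β δ n) x := by
  have hβn := hβ.contMDiffAt_zpow n h
  change 0 < sphJac (δ.symm ∘ ((β ^ n : Equiv.Perm Sph) ∘ δ)) x
  rw [sphJac_comp (δ.symm.contMDiff _) (hβn.comp x (δ.contMDiff x)),
    sphJac_comp hβn (δ.contMDiff x), hβ.sphJac_zpow n h, one_mul]
  exact sphJac_symm_mul_sphJac_pos δ _ _

lemma twist_unknotTube_scaledPolar (n : ℤ) {s ε y φ : ℝ} (hε : 0 < ε) (hy : 0 < y) :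
    twist β δ n (unknotTube δ (s, scaledPolar ε y φ)) =
      unknotTube δ (s + n * φ, scaledPolar ε y φ) := by
  rw [unknotTube, twist_symm_apply, hβ.zpow_tube_scaledPolar n hε hy, unknotTube]

lemma twist_unknotTube_zero (n : ℤ) (s : ℝ) :
    twist β δ n (unknotTube δ (s, 0)) = unknotTube δ (s, 0) := by
  rw [unknotTube, twist_symm_apply, hβ.zpow_apply_of_W_eq_zero n (by rw [W_tube, mul_zero])]

end Twist

section LocalDiffeo
variable {f f' : Sph → Circle} {x : Sph}

lemma eq_mul_exp_liftChart (f : Sph → Circle) (x : Sph) (u : E3) :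
    f ((extChartAt (𝓡 3) x).symm u) = f x * Circle.exp (liftChart f x u) :=
  eq_mul_exp_arg_div _ _

lemma contDiffAt_liftChart (hf : ContMDiffAt (𝓡 3) (𝓡 1) ∞ f x) :
    ContDiffAt ℝ ∞ (liftChart f x) (extChartAt (𝓡 3) x x) := by
  have hx : (extChartAt (𝓡 3) x).symm (extChartAt (𝓡 3) x x) = x := extChartAt_to_inv x
  refine contDiffAt_arg_div ((contMDiffOn_extChartAt_symm x).contMDiffAt
    (extChartAt_target_mem_nhds x)) (by rwa [hx]) ?_
  rw [hx, div_self (Circle.coe_ne_zero _)]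
  exact Complex.one_mem_slitPlane

lemma isCrit_iff_fderiv_liftChart (hf : ContMDiffAt (𝓡 3) (𝓡 1) ∞ f x) :
    IsCrit f x ↔ fderiv ℝ (liftChart f x) (extChartAt (𝓡 3) x x) = 0 := by
  have h := (IsParamAt.extChartAt_symm x).isCrit_iff
    (Eventually.of_forall (eq_mul_exp_liftChart f x)) (contDiffAt_liftChart hf)
  rwa [extChartAt_to_inv] at h

variable {Ψ : Equiv.Perm Sph} (hΨ : ContMDiffAt (𝓡 3) (𝓡 3) ∞ Ψ x)
  (hΨ' : ContMDiffAt (𝓡 3) (𝓡 3) ∞ Ψ.symm (Ψ x)) (hf : ContMDiffAt (𝓡 3) (𝓡 1) ∞ f x)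
  (h : ∀ᶠ y in 𝓝 x, f' (Ψ y) = f y)

include hΨ hΨ' in
lemma isParamAt_perm_extChartAt_symm :
    IsParamAt (fun u => Ψ ((extChartAt (𝓡 3) x).symm u)) (extChartAt (𝓡 3) x x) :=
  (IsParamAt.extChartAt_symm x).perm Ψ (by rwa [extChartAt_to_inv]) (by rwa [extChartAt_to_inv])

include h in
lemma eventually_eq_mul_exp_liftChart :
    ∀ᶠ u in 𝓝 (extChartAt (𝓡 3) x x),
      f' (Ψ ((extChartAt (𝓡 3) x).symm u)) = f x * Circle.exp (liftChart f x u) := by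
  have hcont := continuousAt_extChartAt_symm (I := 𝓡 3) x
  rw [ContinuousAt, extChartAt_to_inv] at hcont
  filter_upwards [hcont.eventually h] with u hu
  exact hu.trans (eq_mul_exp_liftChart f x u)

include hΨ hΨ' hf h

lemma contMDiffAt_apply_of_eventuallyEq : ContMDiffAt (𝓡 3) (𝓡 1) ∞ f' (Ψ x) := by
  have := (isParamAt_perm_extChartAt_symm hΨ hΨ').contMDiffAt_of_lift
    (eventually_eq_mul_exp_liftChart h) (contDiffAt_liftChart hf)
  rwa [extChartAt_to_inv] at this

lemma isCrit_apply_iff_of_eventuallyEq : IsCrit f' (Ψ x) ↔ IsCrit f x := by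
  have := (isParamAt_perm_extChartAt_symm hΨ hΨ').isCrit_iff
    (eventually_eq_mul_exp_liftChart h) (contDiffAt_liftChart hf)
  rwa [extChartAt_to_inv, ← isCrit_iff_fderiv_liftChart hf] at this

lemma nondeg_apply_iff_of_eventuallyEq (hx : IsCrit f x) : Nondeg f' (Ψ x) ↔ Nondeg f x := by
  have := (isParamAt_perm_extChartAt_symm hΨ hΨ').nondeg_iff
    (eventually_eq_mul_exp_liftChart h) (contDiffAt_liftChart hf)
    ((isCrit_iff_fderiv_liftChart hf).1 hx)
  rwa [extChartAt_to_inv, ← nondeg_iff_nondegAt_liftChart] at this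

end LocalDiffeo

/-! ### The page angle near an unknot in a page -/

/-- The angle of `F` relative to the page at `θ`, in the coordinates around the unknot. -/
def pageAngle (F : BRMap L) (θ : Circle) (δ : Sph ≃ₘ⟮𝓡 3, 𝓡 3⟯ Sph) (q : ℝ × ℂ) : ℝ :=
  Complex.arg ((F.extend (unknotTube δ q) : ℂ) / θ)

section PageAngle
variable {F : BRMap L} {θ : Circle} {δ : Sph ≃ₘ⟮𝓡 3, 𝓡 3⟯ Sph}

lemma extend_unknotTube (q : ℝ × ℂ) :
    F.extend (unknotTube δ q) = θ * Circle.exp (pageAngle F θ δ q) :=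
  eq_mul_exp_arg_div _ _

variable (hO : ∀ s, ∃ hx : unknotTube δ (s, 0) ∉ L.carrier, F.f ⟨unknotTube δ (s, 0), hx⟩ = θ)
include hO

lemma extend_unknotTube_zero (s : ℝ) : F.extend (unknotTube δ (s, 0)) = θ := by
  obtain ⟨hx, hθ⟩ := hO s
  exact (F.f_eq_extend ⟨_, hx⟩).symm.trans hθ

lemma pageAngle_zero (s : ℝ) : pageAngle F θ δ (s, 0) = 0 := by
  rw [pageAngle, extend_unknotTube_zero hO, div_self (Circle.coe_ne_zero θ), Complex.arg_one]

lemma exists_forall_notMem_carrier_and_mem_slitPlane :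
    ∃ r > 0, ∀ s w, ‖w‖ < r → unknotTube δ (s, w) ∉ L.carrier ∧
      (F.extend (unknotTube δ (s, w)) : ℂ) / θ ∈ Complex.slitPlane := by
  refine exists_forall_norm_lt (fun s w => by rw [unknotTube_add_two_pi]) fun s => ?_
  have hcont : ContinuousAt (unknotTube δ) (s, 0) :=
    (contMDiff_unknotTube δ).continuous.continuousAt
  have hx : unknotTube δ (s, 0) ∉ L.carrier := (hO s).1
  have hquot : ContinuousAt (fun q => (F.extend (unknotTube δ q) : ℂ) / θ) (s, 0) :=
    (continuous_subtype_val.continuousAt.comp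
      ((BRMap.contMDiffAt_extend hx).continuousAt.comp hcont)).div_const _
  refine (hcont.eventually (L.isClosed_carrier.isOpen_compl.mem_nhds hx)).and
    (hquot.eventually (Complex.isOpen_slitPlane.mem_nhds ?_))
  dsimp only
  rw [extend_unknotTube_zero hO, div_self (Circle.coe_ne_zero θ)]
  exact Complex.one_mem_slitPlane

lemma fderiv_pageAngle_ne_zero (hreg : IsRegularValue F θ) {s : ℝ}
    (hsmooth : ContDiffAt ℝ ∞ (pageAngle F θ δ) (s, 0)) :
    fderiv ℝ (pageAngle F θ δ) (s, 0) ≠ 0 := by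
  obtain ⟨hx, hθ⟩ := hO s
  rw [Ne, ← (isParamAt_unknotTube δ (s, 0)).isCrit_iff
    (Eventually.of_forall extend_unknotTube) hsmooth, ← BRMap.isCrit_f_iff hx]
  exact hreg _ hθ

lemma exists_isPageAngle (hreg : IsRegularValue F θ) :
    ∃ r, IsPageAngle (pageAngle F θ δ) r ∧ ∀ s w, ‖w‖ < r → unknotTube δ (s, w) ∉ L.carrier := by
  obtain ⟨r, hr, hgood⟩ := exists_forall_notMem_carrier_and_mem_slitPlane hO
  have hsmooth (s : ℝ) (w : ℂ) (hw : ‖w‖ < r) : ContDiffAt ℝ ∞ (pageAngle F θ δ) (s, w) :=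
    contDiffAt_arg_div (contMDiff_unknotTube δ _)
      (BRMap.contMDiffAt_extend (hgood s w hw).1) (hgood s w hw).2
  refine ⟨r, ⟨hr, hsmooth, fun s w => by rw [pageAngle, unknotTube_add_two_pi, pageAngle],
    pageAngle_zero hO, fun s => ?_⟩, fun s w hw => (hgood s w hw).1⟩
  by_contra! htransverse
  have hs := hsmooth s 0 (by rwa [norm_zero])
  refine fderiv_pageAngle_ne_zero hO hreg hs ?_
  have hcore : fderiv ℝ (pageAngle F θ δ) (s, 0) (1, 0) = 0 := by
    have hcomp := (hs.differentiableAt (by simp)).hasFDerivAt.comp_hasDerivAt s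
      ((hasDerivAt_id s).prodMk (hasDerivAt_const s (0 : ℂ)))
    rw [show pageAngle F θ δ ∘ (fun t => (id t, 0)) = fun _ => 0 from
      funext (pageAngle_zero hO)] at hcomp
    exact hcomp.unique (hasDerivAt_const s 0)
  ext v
  · simpa using hcore
  · exact htransverse v

end PageAngle

lemma tubeInv_zero_tube (s : ℝ) (w : ℂ) :
    tubeInv 0 (tube s w) = (toIocMod Real.two_pi_pos (-π) s, w) := by
  have hscale : (tubeScale w : ℂ) ≠ 0 := by exact_mod_cast (tubeScale_pos w).ne'
  rw [tubeInv, norm_Z_tube, W_tube, Z_tube, mul_div_cancel_left₀ _ hscale, branchArg,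
    real_mul_exp_mul_exp_neg, Complex.arg_real_mul _ (tubeScale_pos w), Complex.arg_exp_mul_I,
    sub_zero, zero_add]

lemma arg_scaledPolar {ε x φ : ℝ} (h : 0 < ε * x) :
    Complex.arg (scaledPolar ε x φ) = toIocMod Real.two_pi_pos (-π) φ := by
  rw [scaledPolar, Complex.arg_real_mul _ h, Complex.arg_exp_mul_I]

lemma scaledPolar_arg {ε : ℝ} (hε : ε ≠ 0) (w : ℂ) :
    scaledPolar ε (‖w‖ / ε) (Complex.arg w) = w := by
  rw [scaledPolar, mul_div_cancel₀ _ hε, Complex.norm_mul_exp_arg_mul_I]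

lemma map_toIocMod_of_periodic {α : Type*} {f : ℝ → α} {c : ℝ} (hf : Function.Periodic f c)
    (hc : 0 < c) (a s : ℝ) : f (toIocMod hc a s) = f s :=
  hf.sub_zsmul_eq _

/-! ### The modified map -/

section SolidTorus
variable (δ : Sph ≃ₘ⟮𝓡 3, 𝓡 3⟯ Sph)

/-- The closed solid torus around the unknot `δ⁻¹(O)` that is `‖w‖ ≤ c` in the coordinates
`unknotTube`. -/
def solidTorus (c : ℝ) : Set Sph := {x | ‖W (δ x : E)‖ ≤ c * ‖Z (δ x : E)‖}

lemma isClosed_solidTorus (c : ℝ) : IsClosed (solidTorus δ c) := by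
  have hδ : Continuous fun x => (δ x : E) := continuous_subtype_val.comp δ.continuous
  exact isClosed_le (continuous_W.comp hδ).norm
    (continuous_const.mul (continuous_Z.comp hδ).norm)

variable {δ} {c s : ℝ} {w : ℂ} {x : Sph}

lemma unknotTube_mem_solidTorus_iff : unknotTube δ (s, w) ∈ solidTorus δ c ↔ ‖w‖ ≤ c := by
  rw [solidTorus, mem_ofPred_eq, unknotTube, δ.apply_symm_apply, norm_Z_tube, W_tube, norm_mul,
    Complex.norm_real, Real.norm_of_nonneg (tubeScale_pos w).le, mul_comm]
  exact mul_le_mul_iff_left₀ (tubeScale_pos w)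

lemma Z_ne_zero_of_mem_solidTorus (hx : x ∈ solidTorus δ c) : Z (δ x : E) ≠ 0 := by
  intro hZ
  have hW : ‖W (δ x : E)‖ ≤ 0 := by simpa [solidTorus, hZ] using hx
  have hsphere := norm_Z_sq_add_norm_W_sq (δ x)
  rw [hZ, norm_le_zero_iff.1 hW] at hsphere
  norm_num at hsphere

lemma exists_unknotTube_eq (hx : x ∈ solidTorus δ c) :
    ∃ s w, unknotTube δ (s, w) = x ∧ ‖w‖ ≤ c := by
  have heq : unknotTube δ (tubeInv 0 (δ x)) = x := by
    rw [unknotTube, tube_tubeInv 0 (Z_ne_zero_of_mem_solidTorus hx), δ.symm_apply_apply]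
  exact ⟨_, _, heq, unknotTube_mem_solidTorus_iff.1 (heq.symm ▸ hx)⟩

lemma W_ne_zero_of_notMem_solidTorus (hc : 0 ≤ c) (hx : x ∉ solidTorus δ c) :
    W (δ x : E) ≠ 0 := by
  intro hW
  refine hx ?_
  rw [solidTorus, mem_ofPred_eq, hW, norm_zero]
  positivity

end SolidTorus

/-- A modification of the page angle of `F` on a solid torus of radius `r` disjoint from `L`. -/
structure TubeModel (F : BRMap L) (θ : Circle) (δ : Sph ≃ₘ⟮𝓡 3, 𝓡 3⟯ Sph) (r : ℝ) extends
    LocalModel (pageAngle F θ δ) r where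
  notMem_carrier : ∀ s w, ‖w‖ < r → unknotTube δ (s, w) ∉ L.carrier

lemma exists_tubeModel {F : BRMap L} {θ : Circle} {δ : Sph ≃ₘ⟮𝓡 3, 𝓡 3⟯ Sph}
    (hO : ∀ s, ∃ hx : unknotTube δ (s, 0) ∉ L.carrier, F.f ⟨unknotTube δ (s, 0), hx⟩ = θ)
    (hreg : IsRegularValue F θ) : ∃ r, Nonempty (TubeModel F θ δ r) := by
  obtain ⟨r, hangle, hr⟩ := exists_isPageAngle hO hreg
  obtain ⟨D⟩ := hangle.nonempty_localModel
  exact ⟨r, ⟨⟨D, hr⟩⟩⟩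

namespace TubeModel
variable {F : BRMap L} {θ : Circle} {δ : Sph ≃ₘ⟮𝓡 3, 𝓡 3⟯ Sph} {r : ℝ} (D : TubeModel F θ δ r)

/-- The modified angle as a function of the coordinates `(s, w)`. -/
def angle (q : ℝ × ℂ) : ℝ := D.G (q.1, ‖q.2‖ / D.ε, Complex.arg q.2)

open Classical in
/-- The map obtained from `F` by replacing the page angle with the modified one near the unknot. -/
def modified (x : Sph) : Circle :=
  if x ∈ solidTorus δ (D.ε * (D.R + 1 / 2)) then θ * Circle.exp (D.angle (tubeInv 0 (δ x)))
  else F.extend x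

lemma modified_unknotTube {s : ℝ} {w : ℂ} (hw : ‖w‖ ≤ D.ε * (D.R + 1 / 2)) :
    D.modified (unknotTube δ (s, w)) = θ * Circle.exp (D.angle (s, w)) := by
  rw [modified, if_pos (unknotTube_mem_solidTorus_iff.2 hw), unknotTube, δ.apply_symm_apply,
    tubeInv_zero_tube, angle, angle]
  exact congrArg (θ * Circle.exp ·) (map_toIocMod_of_periodic
    (f := fun t => D.G (t, ‖w‖ / D.ε, Complex.arg w)) (fun t => D.periodic_fst t _ _) _ _ s)

lemma modified_unknotTube_of_le {s : ℝ} {w : ℂ} (hw : D.ε * D.R ≤ ‖w‖) :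
    D.modified (unknotTube δ (s, w)) = F.extend (unknotTube δ (s, w)) := by
  by_cases hmem : ‖w‖ ≤ D.ε * (D.R + 1 / 2)
  · rw [D.modified_unknotTube hmem, angle,
      D.eq_of_R_le _ _ _ ((le_div_iff₀' D.ε_pos).2 hw), scaledPolar_arg D.ε_pos.ne',
      extend_unknotTube]
  · rw [modified, if_neg (mt unknotTube_mem_solidTorus_iff.1 hmem)]

lemma modified_unknotTube_scaledPolar (s φ : ℝ) {x : ℝ} (hx : 0 < x) :
    D.modified (unknotTube δ (s, scaledPolar D.ε x φ)) = θ * Circle.exp (D.G (s, x, φ)) := by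
  have hpos : 0 < D.ε * x := mul_pos D.ε_pos hx
  have hnorm : ‖scaledPolar D.ε x φ‖ = D.ε * x := by rw [norm_scaledPolar, abs_of_pos hpos]
  rcases le_total x (D.R + 1 / 2) with hxR | hxR
  · rw [D.modified_unknotTube (hnorm.le.trans (mul_le_mul_of_nonneg_left hxR D.ε_pos.le)), angle,
      hnorm, mul_div_cancel_left₀ _ D.ε_pos.ne', arg_scaledPolar hpos]
    exact congrArg (θ * Circle.exp ·) (map_toIocMod_of_periodic
      (f := fun t => D.G (s, x, t)) (fun t => D.periodic_snd _ _ t) _ _ φ)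
  · have hR : D.R ≤ x := by linarith
    rw [D.modified_unknotTube_of_le (hnorm ▸ mul_le_mul_of_nonneg_left hR D.ε_pos.le),
      extend_unknotTube, D.eq_of_R_le _ _ _ hR]

lemma modified_unknotTube_of_norm_le {s : ℝ} {w : ℂ} (hw : ‖w‖ ≤ D.ε) :
    D.modified (unknotTube δ (s, w)) =
      θ * Circle.exp (D.μ / D.ε * (w.re * Real.cos D.e₀ + w.im * Real.sin D.e₀)) := by
  have hε := D.ε_pos
  have hle : D.ε ≤ D.ε * (D.R + 1 / 2) := le_mul_of_one_le_right hε.le (by linarith [D.one_lt_R])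
  rw [D.modified_unknotTube (hw.trans hle), angle,
    D.eq_of_le_one _ _ _ ((div_le_one hε).2 hw), Real.cos_sub,
    ← Complex.norm_mul_cos_arg w, ← Complex.norm_mul_sin_arg w]
  congr 2
  field_simp

lemma modified_eq_extend {x : Sph} (hx : x ∉ solidTorus δ (D.ε * D.R)) :
    D.modified x = F.extend x := by
  by_cases hmem : x ∈ solidTorus δ (D.ε * (D.R + 1 / 2))
  · obtain ⟨s, w, rfl, -⟩ := exists_unknotTube_eq hmem
    rw [unknotTube_mem_solidTorus_iff, not_le] at hx
    exact D.modified_unknotTube_of_le hx.le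
  · rw [modified, if_neg hmem]

end TubeModel

/-! ### Critical points of the twisted map -/

namespace TubeModel
variable {F : BRMap L} {θ : Circle} {δ : Sph ≃ₘ⟮𝓡 3, 𝓡 3⟯ Sph} {r : ℝ} (D : TubeModel F θ δ r)
  {β : Equiv.Perm Sph} {n : ℤ}

/-- The modified map transported by the `n`-fold twist along the unknot. -/
def twisted (β : Equiv.Perm Sph) (n : ℤ) (p : Sph) : Circle := D.modified ((twist β δ n).symm p)

/-- The image of the polar coordinates `(s, x, φ)` around the unknot under the `n`-fold twist. -/
def twistedPolar (n : ℤ) (p : P3) : Sph :=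
  unknotTube δ (p.1 + n * p.2.2, scaledPolar D.ε p.2.1 p.2.2)

lemma twisted_twist (x : Sph) : D.twisted β n (twist β δ n x) = D.modified x := by
  rw [twisted, Equiv.symm_apply_apply]

lemma twistedPolar_eq_of_modEq3 {p p' : P3} (h : ModEq3 p p') :
    D.twistedPolar n p = D.twistedPolar n p' := by
  obtain ⟨j, l, rfl⟩ := h
  have hpolar : Function.Periodic (scaledPolar D.ε p'.2.1) (2 * π) := scaledPolar_add_two_pi _ _
  have htube : Function.Periodic
      (fun s => unknotTube δ (s, scaledPolar D.ε p'.2.1 p'.2.2)) (2 * π) :=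
    fun s => unknotTube_add_two_pi δ s _
  have hmul : 2 * π * l = l * (2 * π) := mul_comm _ _
  have hs : p'.1 + 2 * π * j + n * (p'.2.2 + 2 * π * l) =
      p'.1 + n * p'.2.2 + (j + n * l : ℤ) * (2 * π) := by
    push_cast
    ring
  simp only [twistedPolar]
  rw [hs, hmul, hpolar.int_mul l]
  exact htube.int_mul (j + n * l) _

lemma isParamAt_twistedPolar {s x φ : ℝ} (hx : 0 < x) : IsParamAt (D.twistedPolar n) (s, x, φ) :=
  IsParamAt.comp_twistedPolar D.ε_pos n hx (isParamAt_unknotTube δ _)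

/-- The angle of `D.twisted` on the core, as a linear map. -/
def coreAngle : ℝ × ℂ →L[ℝ] ℝ :=
  ((D.μ / D.ε) • (Real.cos D.e₀ • Complex.reCLM + Real.sin D.e₀ • Complex.imCLM)).comp
    (ContinuousLinearMap.snd ℝ ℝ ℂ)

lemma coreAngle_ne_zero : D.coreAngle ≠ 0 := by
  intro h
  have hpos : 0 < D.μ / D.ε := div_pos D.μ_pos D.ε_pos
  have hval : D.coreAngle (0, Complex.exp (D.e₀ * Complex.I)) = D.μ / D.ε := by
    simp [coreAngle, Complex.exp_ofReal_mul_I_re, Complex.exp_ofReal_mul_I_im, ← sq, ← mul_add]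
  exact hpos.ne' (hval.symm.trans (DFunLike.congr_fun h _))

section Core
variable (hβ : IsBetaMap β) {s : ℝ} {w : ℂ}
include hβ

lemma twist_unknotTube_polar {x : ℝ} (hx : 0 < x) (s φ : ℝ) :
    twist β δ n (unknotTube δ (s, scaledPolar D.ε x φ)) = D.twistedPolar n (s, x, φ) :=
  twist_unknotTube_scaledPolar hβ n D.ε_pos hx

/-- On the core the modified angle does not depend on `s`, so that the twist preserves it. -/
lemma twisted_unknotTube (hw : ‖w‖ ≤ D.ε) :
    D.twisted β n (unknotTube δ (s, w)) =
      θ * Circle.exp (D.μ / D.ε * (w.re * Real.cos D.e₀ + w.im * Real.sin D.e₀)) := by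
  rcases eq_or_ne w 0 with rfl | hw₀
  · rw [← twist_unknotTube_zero hβ n, D.twisted_twist, D.modified_unknotTube_of_norm_le hw]
  · have hx : 0 < ‖w‖ / D.ε := div_pos (norm_pos_iff.2 hw₀) D.ε_pos
    have htwist := twist_unknotTube_scaledPolar (δ := δ) (s := s - n * Complex.arg w)
      (φ := Complex.arg w) hβ n D.ε_pos hx
    rw [sub_add_cancel, scaledPolar_arg D.ε_pos.ne'] at htwist
    rw [← htwist, D.twisted_twist, D.modified_unknotTube_of_norm_le hw]

lemma eventually_twisted_unknotTube (hw : ‖w‖ < D.ε) :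
    ∀ᶠ q in 𝓝 (s, w), D.twisted β n (unknotTube δ q) = θ * Circle.exp (D.coreAngle q) := by
  have hcont : ContinuousAt (fun q : ℝ × ℂ => ‖q.2‖) (s, w) := by fun_prop
  filter_upwards [hcont.eventually (Iio_mem_nhds hw)] with q hq
  rw [D.twisted_unknotTube hβ (le_of_lt hq), mul_comm q.2.re, mul_comm q.2.im]
  rfl

lemma contMDiffAt_twisted_unknotTube (hw : ‖w‖ < D.ε) :
    ContMDiffAt (𝓡 3) (𝓡 1) ∞ (D.twisted β n) (unknotTube δ (s, w)) :=
  (isParamAt_unknotTube δ (s, w)).contMDiffAt_of_lift (D.eventually_twisted_unknotTube hβ hw)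
    D.coreAngle.contDiff.contDiffAt

lemma not_isCrit_twisted_unknotTube (hw : ‖w‖ < D.ε) :
    ¬ IsCrit (D.twisted β n) (unknotTube δ (s, w)) := by
  rw [(isParamAt_unknotTube δ (s, w)).isCrit_iff (D.eventually_twisted_unknotTube hβ hw)
    D.coreAngle.contDiff.contDiffAt, ContinuousLinearMap.fderiv]
  exact D.coreAngle_ne_zero

end Core

lemma contDiffAt_G {s x φ : ℝ} (hx : 0 < x) (hxR : x < D.R + 1) : ContDiffAt ℝ ∞ D.G (s, x, φ) :=
  D.contDiffAt s x φ (by rwa [abs_of_pos hx])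

section Shell
variable (hβ : IsBetaMap β) {s x φ : ℝ} (hx : 0 < x)
include hβ hx

lemma eventually_twisted_twistedPolar :
    ∀ᶠ p in 𝓝 (s, x, φ), D.twisted β n (D.twistedPolar n p) = θ * Circle.exp (D.G p) := by
  have hcont : ContinuousAt (fun p : P3 => p.2.1) (s, x, φ) := by fun_prop
  filter_upwards [hcont.eventually (Ioi_mem_nhds hx)] with p hp
  rw [← D.twist_unknotTube_polar hβ hp, D.twisted_twist, D.modified_unknotTube_scaledPolar _ _ hp]

variable (hxR : x < D.R + 1)
include hxR

lemma contMDiffAt_twisted_twistedPolar :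
    ContMDiffAt (𝓡 3) (𝓡 1) ∞ (D.twisted β n) (D.twistedPolar n (s, x, φ)) :=
  (D.isParamAt_twistedPolar hx).contMDiffAt_of_lift (D.eventually_twisted_twistedPolar hβ hx)
    (D.contDiffAt_G hx hxR)

lemma nondeg_and_eq_of_isCrit_twisted
    (hcrit : IsCrit (D.twisted β n) (D.twistedPolar n (s, x, φ))) :
    Nondeg (D.twisted β n) (D.twistedPolar n (s, x, φ)) ∧
      (D.twistedPolar n (s, x, φ) = D.twistedPolar n D.p₁ ∨
        D.twistedPolar n (s, x, φ) = D.twistedPolar n D.p₂) := by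
  have hparam := D.isParamAt_twistedPolar (n := n) (s := s) (φ := φ) hx
  have hlift := D.eventually_twisted_twistedPolar (n := n) (s := s) (φ := φ) hβ hx
  have hG := D.contDiffAt_G (s := s) (φ := φ) hx hxR
  have hfderiv := (hparam.isCrit_iff hlift hG).1 hcrit
  obtain ⟨hnondeg, hmod⟩ := D.critical s x φ hx hxR hfderiv
  exact ⟨(hparam.nondeg_iff hlift hG hfderiv).2 hnondeg,
    hmod.imp D.twistedPolar_eq_of_modEq3 D.twistedPolar_eq_of_modEq3⟩

end Shell

section Global
variable (hβ : IsBetaMap β) {x : Sph}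

lemma W_ne_zero_of_notMem (hx : x ∉ solidTorus δ (D.ε * D.R)) : W (δ x : E) ≠ 0 :=
  W_ne_zero_of_notMem_solidTorus
    (mul_nonneg D.ε_pos.le (zero_le_one.trans D.one_lt_R.le)) hx

lemma eventually_twisted_twist (hx : x ∉ solidTorus δ (D.ε * D.R)) :
    ∀ᶠ y in 𝓝 x, D.twisted β n (twist β δ n y) = F.extend y := by
  filter_upwards [(isClosed_solidTorus δ _).isOpen_compl.mem_nhds hx] with y hy
  rw [D.twisted_twist, D.modified_eq_extend hy]

include hβ

lemma twist_mem_core_or_shell (hx : x ∈ solidTorus δ (D.ε * D.R)) :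
    (∃ s w, ‖w‖ < D.ε ∧ twist β δ n x = unknotTube δ (s, w)) ∨
      ∃ s t φ, 0 < t ∧ t < D.R + 1 ∧ twist β δ n x = D.twistedPolar n (s, t, φ) := by
  have hε := D.ε_pos
  obtain ⟨s, w, rfl, hw⟩ := exists_unknotTube_eq hx
  rcases eq_or_ne w 0 with rfl | hw₀
  · exact Or.inl ⟨s, 0, by rwa [norm_zero], twist_unknotTube_zero hβ n s⟩
  · have ht : 0 < ‖w‖ / D.ε := div_pos (norm_pos_iff.2 hw₀) hε
    refine Or.inr ⟨s, ‖w‖ / D.ε, Complex.arg w, ht,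
      ((div_le_iff₀' hε).2 hw).trans_lt (lt_add_one _), ?_⟩
    rw [← D.twist_unknotTube_polar hβ ht, scaledPolar_arg hε.ne']

variable (hxL : x ∉ L.carrier)
include hxL

lemma contMDiffAt_twisted :
    ContMDiffAt (𝓡 3) (𝓡 1) ∞ (D.twisted β n) (twist β δ n x) := by
  by_cases hx : x ∈ solidTorus δ (D.ε * D.R)
  · rcases D.twist_mem_core_or_shell hβ hx with ⟨s, w, hw, heq⟩ | ⟨s, t, φ, ht, htR, heq⟩
    · exact heq ▸ D.contMDiffAt_twisted_unknotTube hβ hw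
    · exact heq ▸ D.contMDiffAt_twisted_twistedPolar hβ ht htR
  · have hW := D.W_ne_zero_of_notMem hx
    exact contMDiffAt_apply_of_eventuallyEq (contMDiffAt_twist hβ hW)
      (contMDiffAt_twist_symm hβ hW) (BRMap.contMDiffAt_extend hxL) (D.eventually_twisted_twist hx)

lemma nondeg_and_mem_of_isCrit_twisted (hM : MorseFun F.f)
    (hcrit : IsCrit (D.twisted β n) (twist β δ n x)) :
    Nondeg (D.twisted β n) (twist β δ n x) ∧
      (IsCrit F.f ⟨x, hxL⟩ ∨ twist β δ n x = D.twistedPolar n D.p₁ ∨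
        twist β δ n x = D.twistedPolar n D.p₂) := by
  by_cases hx : x ∈ solidTorus δ (D.ε * D.R)
  · rcases D.twist_mem_core_or_shell (n := n) hβ hx with
      ⟨s, w, hw, heq⟩ | ⟨s, t, φ, ht, htR, heq⟩
    · exact absurd (heq ▸ hcrit) (D.not_isCrit_twisted_unknotTube hβ hw)
    · rw [heq] at hcrit ⊢
      exact (D.nondeg_and_eq_of_isCrit_twisted hβ ht htR hcrit).imp_right Or.inr
  · have hW := D.W_ne_zero_of_notMem hx
    have hΨ := contMDiffAt_twist (n := n) hβ hW
    have hΨ' := contMDiffAt_twist_symm (n := n) hβ hW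
    have hF := BRMap.contMDiffAt_extend (F := F) hxL
    have heq := D.eventually_twisted_twist (β := β) (n := n) hx
    have hcritF := (isCrit_apply_iff_of_eventuallyEq hΨ hΨ' hF heq).1 hcrit
    have hcritf := (BRMap.isCrit_f_iff hxL).2 hcritF
    exact ⟨(nondeg_apply_iff_of_eventuallyEq hΨ hΨ' hF heq hcritF).2
      ((BRMap.nondeg_f_iff hxL).1 (hM _ hcritf)), Or.inl hcritf⟩

end Global

end TubeModel

/-! ### Tubes around a link -/

namespace Link

lemma emb_mem_carrier (i : Fin L.n) (t : ℝ) : L.emb i t ∈ L.carrier := by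
  have hper : Function.Periodic (L.emb i) (2 * π) := L.periodic i
  obtain ⟨s, hs, heq⟩ := hper.exists_mem_Ico₀ Real.two_pi_pos t
  exact mem_iUnion.2 ⟨i, s, ⟨hs.1, hs.2.le⟩, heq.symm⟩

lemma carrier_eq_image {L' : Link} {Ψ : Sph → Sph} (hn : L'.n = L.n)
    (hemb : ∀ i t, L'.emb i t = Ψ (L.emb (Fin.cast hn i) t)) : L'.carrier = Ψ '' L.carrier := by
  have himage (i : Fin L'.n) :
      L'.emb i '' Icc 0 (2 * π) = Ψ '' (L.emb (Fin.cast hn i) '' Icc 0 (2 * π)) := by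
    rw [← image_comp]
    exact image_congr fun t _ => hemb i t
  simp only [carrier, himage, image_iUnion]
  exact (finCongr hn).surjective.iUnion_comp fun i => Ψ '' (L.emb i '' Icc 0 (2 * π))

end Link

section TubeDet
variable {g : ℝ × ℂ → Sph} {q : ℝ × ℂ}

/-- The determinant of the position vector and the three partial derivatives of `g`; it is positive
when the tube `g` is positively oriented. -/
def tubeDet (g : ℝ × ℂ → Sph) (q : ℝ × ℂ) : ℝ :=
  det4 (g q) (tangAmb g q (1, 0)) (tangAmb g q (0, 1)) (tangAmb g q (0, Complex.I))

lemma exists_fderiv_add_smul_eq_of_tubeDet_ne_zero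
    (hg : ContMDiffAt 𝓘(ℝ, ℝ × ℂ) (𝓡 3) ∞ g q) (hdet : tubeDet g q ≠ 0) (v : E) :
    ∃ (k : ℝ) (u : ℝ × ℂ), fderiv ℝ (fun u => (g u : E)) q u + k • (g q : E) = v := by
  obtain ⟨k₀, k₁, k₂, k₃, hv⟩ := exists_eq_add_of_det4_ne_zero hdet v
  refine ⟨k₀, (k₁, k₂ + k₃ * Complex.I), ?_⟩
  have hu : ((k₁, k₂ + k₃ * Complex.I) : ℝ × ℂ) =
      k₁ • (1, 0) + k₂ • (0, 1) + k₃ • (0, Complex.I) := by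
    ext <;> simp
  rw [hu, map_add, map_add, map_smul, map_smul, map_smul, ← hv, tangAmb_eq_fderiv hg]
  abel

lemma map_nhds_smul_of_tubeDet_ne_zero
    (hg : ContMDiffAt 𝓘(ℝ, ℝ × ℂ) (𝓡 3) ∞ g q) (hdet : tubeDet g q ≠ 0) :
    map (fun p : ℝ × ℝ × ℂ => p.1 • (g p.2 : E)) (𝓝 (1, q)) = 𝓝 (g q : E) := by
  have hcoe : HasStrictFDerivAt (fun u => (g u : E)) (fderiv ℝ (fun u => (g u : E)) q) q :=
    (contDiffAt_coe_of_contMDiffAt hg).hasStrictFDerivAt (by simp)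
  have hcone := (hasStrictFDerivAt_fst (𝕜 := ℝ) (p := ((1 : ℝ), q))).smul
    (hcoe.comp ((1 : ℝ), q) hasStrictFDerivAt_snd)
  have hmap : map (fun p : ℝ × ℝ × ℂ => p.1 • (g p.2 : E)) (𝓝 (1, q)) = 𝓝 ((1 : ℝ) • (g q : E)) :=
    hcone.map_nhds_eq_of_surj (LinearMap.range_eq_top.2 fun v => by
      obtain ⟨k, u, hv⟩ := exists_fderiv_add_smul_eq_of_tubeDet_ne_zero hg hdet v
      exact ⟨(k, u), by simpa using hv⟩)
  rwa [one_smul] at hmap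

lemma image_mem_nhds_of_tubeDet_ne_zero (hg : ContMDiffAt 𝓘(ℝ, ℝ × ℂ) (𝓡 3) ∞ g q)
    (hdet : tubeDet g q ≠ 0) {S : Set (ℝ × ℂ)} (hS : S ∈ 𝓝 q) : g '' S ∈ 𝓝 (g q) := by
  have hcone : (fun p : ℝ × ℝ × ℂ => p.1 • (g p.2 : E)) '' (Ioi 0 ×ˢ S) ∈ 𝓝 (g q : E) := by
    rw [← map_nhds_smul_of_tubeDet_ne_zero hg hdet]
    exact image_mem_map (prod_mem_nhds (Ioi_mem_nhds one_pos) hS)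
  filter_upwards [continuous_subtype_val.continuousAt.preimage_mem_nhds hcone] with y hy
  obtain ⟨⟨r, u⟩, ⟨hr, hu⟩, heq⟩ := hy
  refine ⟨u, hu, ?_⟩
  rw [← sphProj_smul hr (g u), show r • (g u : E) = y from heq, sphProj_coe]

/-- The shrinking of the fibers of a tube by the factor `η`. -/
def shrinkFiber (η : ℝ) : ℝ × ℂ →L[ℝ] ℝ × ℂ :=
  (ContinuousLinearMap.fst ℝ ℝ ℂ).prod (η • ContinuousLinearMap.snd ℝ ℝ ℂ)

variable {η : ℝ}

lemma shrinkFiber_apply (t : ℝ) (z : ℂ) : shrinkFiber η (t, z) = (t, η * z) := by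
  simp [shrinkFiber]

lemma contMDiffAt_comp_shrinkFiber
    (hg : ContMDiffAt 𝓘(ℝ, ℝ × ℂ) (𝓡 3) ∞ g (shrinkFiber η q)) :
    ContMDiffAt 𝓘(ℝ, ℝ × ℂ) (𝓡 3) ∞ (g ∘ shrinkFiber η) q :=
  hg.comp q (shrinkFiber η).contDiff.contMDiff.contMDiffAt

lemma tangAmb_comp_shrinkFiber (hg : ContMDiffAt 𝓘(ℝ, ℝ × ℂ) (𝓡 3) ∞ g (shrinkFiber η q))
    (v : ℝ × ℂ) :
    tangAmb (g ∘ shrinkFiber η) q v = tangAmb g (shrinkFiber η q) (shrinkFiber η v) := by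
  have hchain := fderiv_comp (g := fun u => (g u : E)) (f := shrinkFiber η) q
    ((contDiffAt_coe_of_contMDiffAt hg).differentiableAt (by simp))
    (shrinkFiber η).differentiableAt
  rw [(shrinkFiber η).fderiv] at hchain
  rw [tangAmb_eq_fderiv hg, tangAmb_eq_fderiv (contMDiffAt_comp_shrinkFiber hg)]
  exact DFunLike.congr_fun hchain v

lemma tubeDet_comp_shrinkFiber (hg : ContMDiffAt 𝓘(ℝ, ℝ × ℂ) (𝓡 3) ∞ g (shrinkFiber η q)) :
    tubeDet (g ∘ shrinkFiber η) q = η ^ 2 * tubeDet g (shrinkFiber η q) := by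
  have hbase : shrinkFiber η (1, 0) = (1, 0) := by simp [shrinkFiber]
  have hfiber (z : ℂ) : shrinkFiber η (0, z) = η • (0, z) := by simp [shrinkFiber]
  simp only [tubeDet, tangAmb_comp_shrinkFiber hg, hbase, hfiber, tangAmb_eq_fderiv hg, map_smul]
  exact det4_smul_smul ..

end TubeDet

section Shrink
variable {η : ℝ} (hη₀ : 0 < η)
include hη₀

lemma norm_mul_lt_of_mem_ball {z : ℂ} (hz : z ∈ ball (0 : ℂ) 1) : ‖η * z‖ < η := by
  rw [norm_mul, Complex.norm_real, Real.norm_eq_abs, abs_of_pos hη₀]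
  exact mul_lt_of_lt_one_right hη₀ (mem_ball_zero_iff.1 hz)

lemma mul_mem_ball (hη₁ : η ≤ 1) {z : ℂ} (hz : z ∈ ball (0 : ℂ) 1) : η * z ∈ ball (0 : ℂ) 1 :=
  mem_ball_zero_iff.2 ((norm_mul_lt_of_mem_ball hη₀ hz).trans_le hη₁)

lemma ball_subset_image_shrinkFiber :
    univ ×ˢ ball (0 : ℂ) η ⊆ shrinkFiber η '' (univ ×ˢ ball 0 1) := by
  rintro ⟨t, z⟩ ⟨-, hz⟩
  refine ⟨(t, z / η), ⟨mem_univ _, ?_⟩, ?_⟩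
  · rw [mem_ball_zero_iff, norm_div, Complex.norm_real, Real.norm_eq_abs, abs_of_pos hη₀,
      div_lt_one hη₀]
    exact mem_ball_zero_iff.1 hz
  · rw [shrinkFiber_apply, mul_div_cancel₀ _ (Complex.ofReal_ne_zero.2 hη₀.ne')]

end Shrink

namespace BRMap
variable (F : BRMap L)

lemma contMDiffAt_tub (i : Fin L.n) (t : ℝ) {z : ℂ} (hz : z ∈ ball (0 : ℂ) 1) :
    ContMDiffAt 𝓘(ℝ, ℝ × ℂ) (𝓡 3) ∞ (F.tub i) (t, z) :=
  (F.tub_smooth i).contMDiffAt (prod_mem_nhds univ_mem (isOpen_ball.mem_nhds hz))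

lemma tub_image_mem_nhds (i : Fin L.n) (t : ℝ) {η : ℝ} (hη : 0 < η) :
    F.tub i '' (univ ×ˢ ball 0 η) ∈ 𝓝 (L.emb i t) := by
  have hz := mem_ball_self (x := (0 : ℂ)) one_pos
  rw [← F.tub_core]
  exact image_mem_nhds_of_tubeDet_ne_zero (F.contMDiffAt_tub i t hz) (F.positive i t 0 hz).ne'
    (prod_mem_nhds univ_mem (ball_mem_nhds _ hη))

lemma exists_forall_tub_mem {U : Set Sph} (hU : IsOpen U) (hLU : L.carrier ⊆ U) :
    ∃ η : ℝ, 0 < η ∧ η ≤ 1 ∧ ∀ i t z, ‖z‖ < η → F.tub i (t, z) ∈ U := by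
  obtain ⟨η, hη, hmem⟩ := exists_forall_norm_lt (P := fun t z => ∀ i, F.tub i (t, z) ∈ U)
    (fun s w => by simp only [F.tub_per]) fun s => by
      refine eventually_all.2 fun i => (F.contMDiffAt_tub i s
        (mem_ball_self one_pos)).continuousAt.eventually (hU.mem_nhds ?_)
      rw [F.tub_core]
      exact hLU (L.emb_mem_carrier i s)
  exact ⟨min η 1, lt_min hη one_pos, min_le_right _ _,
    fun i t z hz => hmem t z (hz.trans_le (min_le_left _ _)) i⟩

/-- The same map, with the tubes around the link shrunk by the factor `η`. -/
def shrink {η : ℝ} (hη₀ : 0 < η) (hη₁ : η ≤ 1) : BRMap L where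
  f := F.f
  smooth := F.smooth
  tub i := F.tub i ∘ shrinkFiber η
  tub_smooth i := by
    rintro ⟨t, z⟩ ⟨-, hz⟩
    refine (contMDiffAt_comp_shrinkFiber ?_).contMDiffWithinAt
    rw [shrinkFiber_apply]
    exact F.contMDiffAt_tub i t (mul_mem_ball hη₀ hη₁ hz)
  tub_per i t z := by simp only [Function.comp_apply, shrinkFiber_apply, F.tub_per]
  tub_core i t := by
    rw [Function.comp_apply, shrinkFiber_apply, mul_zero, F.tub_core]
  tub_inj i j t s z w ht hs hz hw heq := by
    simp only [Function.comp_apply, shrinkFiber_apply] at heq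
    exact (F.tub_inj i j t s _ _ ht hs (mul_mem_ball hη₀ hη₁ hz) (mul_mem_ball hη₀ hη₁ hw)
      heq).imp_right (And.imp_right (mul_left_cancel₀ (Complex.ofReal_ne_zero.2 hη₀.ne')))
  tub_nbhd x hx := by
    obtain ⟨i, t, -, rfl⟩ := mem_iUnion.1 hx
    refine mem_of_superset (F.tub_image_mem_nhds i t hη₀) ?_
    refine (image_mono (ball_subset_image_shrinkFiber hη₀)).trans ?_
    rw [← image_comp]
    exact subset_iUnion (fun i => F.tub i ∘ shrinkFiber η '' (univ ×ˢ ball 0 1)) i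
  tub_off i t z hz hz₀ := by
    rw [Function.comp_apply, shrinkFiber_apply]
    exact F.tub_off i t _ (mul_mem_ball hη₀ hη₁ hz)
      (mul_ne_zero (Complex.ofReal_ne_zero.2 hη₀.ne') hz₀)
  adapted i t z hz hz₀ x hx := by
    rw [Function.comp_apply, shrinkFiber_apply] at hx
    rw [F.adapted i t _ (mul_mem_ball hη₀ hη₁ hz)
      (mul_ne_zero (Complex.ofReal_ne_zero.2 hη₀.ne') hz₀) x hx, toCircle, toCircle,
      Complex.arg_real_mul _ hη₀]
  positive i t z hz := by
    have hz' := mul_mem_ball hη₀ hη₁ hz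
    change 0 < tubeDet (F.tub i ∘ shrinkFiber η) (t, z)
    rw [tubeDet_comp_shrinkFiber] <;> rw [shrinkFiber_apply]
    · exact mul_pos (pow_pos hη₀ 2) (F.positive i t _ hz')
    · exact F.contMDiffAt_tub i t hz'

end BRMap

/-! ### Transport of a boundary-regular map -/

/-- `Ψ` restricts to an orientation-preserving diffeomorphism of the open set `U` onto its image. -/
structure IsOrientedDiffeoOn (Ψ : Equiv.Perm Sph) (U : Set Sph) : Prop where
  isOpen : IsOpen U
  contMDiffAt : ∀ x ∈ U, ContMDiffAt (𝓡 3) (𝓡 3) ∞ Ψ x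
  contMDiffAt_symm : ∀ x ∈ U, ContMDiffAt (𝓡 3) (𝓡 3) ∞ Ψ.symm (Ψ x)
  sphJac_pos : ∀ x ∈ U, 0 < sphJac Ψ x

namespace BRMap
variable {L' : Link} {Ψ : Equiv.Perm Sph} {U : Set Sph} {f : Sph → Circle} (F : BRMap L)

/-- The map `f` on the complement of `L' = Ψ(L)`, which on `Ψ(U)` is the transport of `F` and is
therefore adapted to the images of the tubes of `F` when these lie in `U`. -/
def transport (hΨ : IsOrientedDiffeoOn Ψ U)
    (hF : ∀ i t, ∀ z ∈ ball (0 : ℂ) 1, F.tub i (t, z) ∈ U) (hn : L'.n = L.n)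
    (hemb : ∀ i t, L'.emb i t = Ψ (L.emb (Fin.cast hn i) t))
    (hfU : ∀ x ∈ U, f (Ψ x) = F.extend x)
    (hf : ∀ x ∉ L.carrier, ContMDiffAt (𝓡 3) (𝓡 1) ∞ f (Ψ x)) : BRMap L' where
  f y := f y
  smooth y := by
    rw [contMDiffAt_opens_iff (U := L'.compl) (f := f) (fun _ => rfl) y,
      ← Ψ.apply_symm_apply y]
    refine hf _ fun hy => y.2 ?_
    rw [Link.carrier_eq_image hn hemb]
    exact ⟨_, hy, Ψ.apply_symm_apply y⟩
  tub i := Ψ ∘ F.tub (Fin.cast hn i)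
  tub_smooth i := by
    rintro ⟨t, z⟩ ⟨-, hz⟩
    exact ((hΨ.contMDiffAt _ (hF _ t z hz)).comp (t, z)
      (F.contMDiffAt_tub _ t hz)).contMDiffWithinAt
  tub_per i t z := by rw [Function.comp_apply, F.tub_per, Function.comp_apply]
  tub_core i t := by rw [Function.comp_apply, F.tub_core, hemb]
  tub_inj i j t s z w ht hs hz hw heq :=
    (F.tub_inj _ _ t s z w ht hs hz hw (Ψ.injective heq)).imp_left fun h => Fin.cast_injective hn h
  tub_nbhd x hx := by
    obtain ⟨i, t, -, rfl⟩ := mem_iUnion.1 hx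
    have hmem := hF (Fin.cast hn i) t 0 (mem_ball_self one_pos)
    rw [F.tub_core] at hmem
    have htube := F.tub_image_mem_nhds (Fin.cast hn i) t one_pos
    have hcont := (hΨ.contMDiffAt_symm _ hmem).continuousAt
    rw [← Ψ.symm_apply_apply (L.emb _ t)] at htube
    rw [hemb]
    refine mem_of_superset (hcont.preimage_mem_nhds htube) ?_
    rw [← Ψ.image_eq_preimage_symm, ← image_comp]
    exact subset_iUnion (fun i => Ψ ∘ F.tub (Fin.cast hn i) '' (univ ×ˢ ball 0 1)) i
  tub_off i t z hz hz₀ := by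
    rw [Link.carrier_eq_image hn hemb, Function.comp_apply, Ψ.injective.mem_set_image]
    exact F.tub_off _ t z hz hz₀
  adapted i t z hz hz₀ x hx := by
    rw [hx, Function.comp_apply, hfU _ (hF _ t z hz),
      ← F.f_eq_extend ⟨_, F.tub_off _ t z hz hz₀⟩]
    exact F.adapted _ t z hz hz₀ _ rfl
  positive i t z hz := by
    have hmem := hF (Fin.cast hn i) t z hz
    rw [Function.comp_apply,
      det4_tangAmb_comp (F.contMDiffAt_tub _ t hz) (hΨ.contMDiffAt _ hmem)]
    exact mul_pos (hΨ.sphJac_pos _ hmem) (F.positive _ t z hz)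

lemma exists_f_eq (hΨ : IsOrientedDiffeoOn Ψ U) (hLU : L.carrier ⊆ U) (hn : L'.n = L.n)
    (hemb : ∀ i t, L'.emb i t = Ψ (L.emb (Fin.cast hn i) t))
    (hfU : ∀ x ∈ U, f (Ψ x) = F.extend x)
    (hf : ∀ x ∉ L.carrier, ContMDiffAt (𝓡 3) (𝓡 1) ∞ f (Ψ x)) :
    ∃ F' : BRMap L', ∀ y, F'.f y = f y := by
  obtain ⟨η, hη₀, hη₁, hmem⟩ := F.exists_forall_tub_mem hΨ.isOpen hLU
  refine ⟨(F.shrink hη₀ hη₁).transport hΨ (fun i t z hz => ?_) hn hemb hfU hf, fun _ => rfl⟩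
  change F.tub i (shrinkFiber η (t, z)) ∈ U
  rw [shrinkFiber_apply]
  exact hmem i t _ (norm_mul_lt_of_mem_ball hη₀ hz)

end BRMap

/-! ### The Morse–Novikov number of the twisted link -/

lemma MN_le_encard_critSet {F : BRMap L} (hF : MorseFun F.f) : MN L ≤ (critSet F.f).encard :=
  sInf_le ⟨F, hF, rfl⟩

lemma Minimal.encard_critSet_le {F : BRMap L} (hF : Minimal F) : (critSet F.f).encard ≤ MN L := by
  refine le_sInf ?_
  rintro _ ⟨G, hG, rfl⟩
  exact hF.2 G hG

namespace TubeModel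
variable {F : BRMap L} {θ : Circle} {δ : Sph ≃ₘ⟮𝓡 3, 𝓡 3⟯ Sph} {r : ℝ} (D : TubeModel F θ δ r)
  {β : Equiv.Perm Sph} (hβ : IsBetaMap β) {n : ℤ}

lemma carrier_subset : L.carrier ⊆ (solidTorus δ (D.ε * D.R))ᶜ := by
  intro x hxL hx
  obtain ⟨s, w, rfl, hw⟩ := exists_unknotTube_eq hx
  have hlt : D.ε * D.R < D.ε * (D.R + 1) := mul_lt_mul_of_pos_left (lt_add_one _) D.ε_pos
  exact D.notMem_carrier s w (hw.trans_lt (hlt.trans_le D.mul_le)) hxL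

include hβ

lemma isOrientedDiffeoOn_twist :
    IsOrientedDiffeoOn (twist β δ n) (solidTorus δ (D.ε * D.R))ᶜ where
  isOpen := (isClosed_solidTorus δ _).isOpen_compl
  contMDiffAt _ hx := contMDiffAt_twist hβ (D.W_ne_zero_of_notMem hx)
  contMDiffAt_symm _ hx := contMDiffAt_twist_symm hβ (D.W_ne_zero_of_notMem hx)
  sphJac_pos _ hx := sphJac_twist_pos hβ (D.W_ne_zero_of_notMem hx)

variable {L' : Link} {hn : L'.n = L.n}
  (hemb : ∀ i t, L'.emb i t = twist β δ n (L.emb (Fin.cast hn i) t))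
include hemb

lemma exists_f_eq_twisted : ∃ F' : BRMap L', ∀ y, F'.f y = D.twisted β n y :=
  F.exists_f_eq (D.isOrientedDiffeoOn_twist hβ) D.carrier_subset hn hemb
    (fun x hx => by rw [D.twisted_twist, D.modified_eq_extend hx])
    fun _ hx => D.contMDiffAt_twisted hβ hx

variable (hM : MorseFun F.f)
include hM

lemma nondeg_and_mem_of_isCrit {F' : BRMap L'} (hF' : ∀ y, F'.f y = D.twisted β n y)
    {y : L'.compl} (hcrit : IsCrit F'.f y) :
    Nondeg F'.f y ∧ (y : Sph) ∈ twist β δ n '' (Subtype.val '' critSet F.f) ∪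
      {D.twistedPolar n D.p₁, D.twistedPolar n D.p₂} := by
  obtain ⟨y, hy⟩ := y
  obtain ⟨x, rfl⟩ := (twist β δ n).surjective y
  have hx : x ∉ L.carrier := fun hx => hy (Link.carrier_eq_image hn hemb ▸ ⟨x, hx, rfl⟩)
  have hsmooth := D.contMDiffAt_twisted (n := n) hβ hx
  obtain ⟨hnondeg, hmem⟩ := D.nondeg_and_mem_of_isCrit_twisted hβ hx hM
    ((isCrit_opens_iff (U := L'.compl) hF' ⟨_, hy⟩ hsmooth).1 hcrit)
  exact ⟨(nondeg_opens_iff (U := L'.compl) hF' ⟨_, hy⟩).2 hnondeg,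
    hmem.imp_left fun h => ⟨x, ⟨⟨x, hx⟩, h, rfl⟩, rfl⟩⟩

include D in
theorem MN_le_encard_critSet_add_two : MN L' ≤ (critSet F.f).encard + 2 := by
  obtain ⟨F', hF'⟩ := D.exists_f_eq_twisted hβ hemb
  have hcrit {y} := D.nondeg_and_mem_of_isCrit (y := y) hβ hemb hM hF'
  have hsub : Subtype.val '' critSet F'.f ⊆ twist β δ n '' (Subtype.val '' critSet F.f) ∪
      {D.twistedPolar n D.p₁, D.twistedPolar n D.p₂} := by
    rintro _ ⟨y, hy, rfl⟩
    exact (hcrit hy).2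
  calc MN L' ≤ (critSet F'.f).encard := MN_le_encard_critSet fun y hy => (hcrit hy).1
    _ = (Subtype.val '' critSet F'.f).encard := (Subtype.val_injective.encard_image _).symm
    _ ≤ (twist β δ n '' (Subtype.val '' critSet F.f)).encard +
        ({D.twistedPolar n D.p₁, D.twistedPolar n D.p₂} : Set Sph).encard :=
      (encard_le_encard hsub).trans (encard_union_le _ _)
    _ ≤ (critSet F.f).encard + 2 := by
      rw [(twist β δ n).injective.encard_image, Subtype.val_injective.encard_image]
      refine add_le_add_right ((encard_insert_le _ _).trans ?_) _
      rw [encard_singleton, one_add_one_eq_two]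

end TubeModel

lemma exists_f_unknotTube_eq {F : BRMap L} {θ : Circle} {δ : Sph ≃ₘ⟮𝓡 3, 𝓡 3⟯ Sph} {γ : Set Sph}
    (hγ : γ ⊆ pageSet F θ \ L.carrier) (hδγ : δ '' γ = Ocar) (s : ℝ) :
    ∃ hx : unknotTube δ (s, 0) ∉ L.carrier, F.f ⟨unknotTube δ (s, 0), hx⟩ = θ := by
  have hO : tube s 0 ∈ Ocar := by
    change W (tube s 0 : E) = 0
    rw [W_tube, mul_zero]
  obtain ⟨x, hx, heq⟩ := hδγ.symm ▸ hO
  have hx' : unknotTube δ (s, 0) = x := by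
    rw [unknotTube, ← heq, Diffeomorph.symm_apply_apply]
  obtain ⟨hL | hpage, hxL⟩ := hγ hx
  · exact absurd hL hxL
  · exact hx' ▸ hpage

theorem statement_7_general (β : Equiv.Perm Sph) (hβ : IsBetaMap β)
    (L : Link) (F : BRMap L) (hM : MorseFun F.f)
    (γ : Set Sph) (θ : Circle) (hreg : IsRegularValue F θ)
    (hsub : γ ⊆ pageSet F θ \ L.carrier)
    (δ : Equiv.Perm Sph) (hδ : ContMDiff (𝓡 3) (𝓡 3) (⊤ : ℕ∞) δ)
    (hδ' : ContMDiff (𝓡 3) (𝓡 3) (⊤ : ℕ∞) δ.symm)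
    (hδγ : ⇑δ '' γ = Ocar)
    (n : ℤ) (L' : Link) (hn : L'.n = L.n)
    (hemb : ∀ i t, L'.emb i t = δ.symm ((β ^ n) (δ (L.emb (Fin.cast hn i) t)))) :
    MN L' ≤ (critSet F.f).encard + 2 := by
  let Δ : Sph ≃ₘ⟮𝓡 3, 𝓡 3⟯ Sph := ⟨δ, hδ, hδ'⟩
  obtain ⟨r, ⟨D⟩⟩ := exists_tubeModel (δ := Δ) (exists_f_unknotTube_eq hsub hδγ) hreg
  exact D.MN_le_encard_critSet_add_two hβ hemb hM

end

/-- For any link `L ⊂ S³`, any unknot `γ` contained in the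
interior of a smooth page of a minimal simple boundary-regular Morse map
`S³∖L → S¹`, and every `n ∈ ℤ`, the `n`-fold twisted link
`L[γ,n] = β_γⁿ(L)` (where `β_γ = δ⁻¹ ∘ β ∘ δ` for a diffeomorphism `δ` of
`S³` carrying `γ` to the standard unknot `O`) satisfies
`MN (L[γ,n]) ≤ MN L + 2`. -/
theorem statement_7 (β : Equiv.Perm Sph) (hβ : IsBetaMap β)
    (L : Link) (F : BRMap L) (hmin : Minimal F)
    (γ : Link) (hknot : γ.IsKnot) (hunknot : AmbientIsotopic γ.carrier Ocar)
    (θ : Circle) (hreg : IsRegularValue F θ)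
    (hsub : γ.carrier ⊆ pageSet F θ \ L.carrier)
    (δ : Equiv.Perm Sph) (hδ : ContMDiff (𝓡 3) (𝓡 3) (⊤ : ℕ∞) δ)
    (hδ' : ContMDiff (𝓡 3) (𝓡 3) (⊤ : ℕ∞) δ.symm)
    (hδγ : ⇑δ '' γ.carrier = Ocar)
    (n : ℤ) (L' : Link) (hn : L'.n = L.n)
    (hemb : ∀ i t, L'.emb i t = δ.symm ((β ^ n) (δ (L.emb (Fin.cast hn i) t)))) :
    MN L' ≤ MN L + 2 :=
  (statement_7_general β hβ L F hmin.1 _ θ hreg hsub δ hδ hδ' hδγ n L' hn hemb).trans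
    (add_le_add_left hmin.encard_critSet_le 2)

end MorseNovikov
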